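/- arXiv:1702.04969 — 2 statements merged into one kernel-verified Lean document; each statement's English description precedes it below -/
import Mathlib

section
/- Let n ≥ 2, let p, q, r > 1, let α > 0, β, γ be real and 0 < a ≤ 1 satisfy γ < n/r, β < n/q, 1 - n/p < α < n/p' (where p' = p/(p-1)), and γ - n/r = a(1 - α - n/p) + (1-a)(β - n/q). Let 1 ≤ q₂ ≤ q₃ ≤ ∞ and 1 ≤ q₁ ≤ ∞ satisfy 1/q₁ = a/q₂ + (1-a)/q₃. Set Δ = γ + aα - (1-a)β and assume 0 ≤ Δ ≤ a. Then there exists a constant C > 0 such that for every smooth compactly supported f : ℝⁿ → ℝ, ‖ |x|^{-γ} f ‖_{r,q₁} ≤ C ‖ |x|^{α} |∇f| ‖_{p,q₂}^{a} · ‖ |x|^{-β} f ‖_{q,q₃}^{1-a}. -/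
open MeasureTheory Set ENNReal

/-- The distribution function `μ_f(λ) = μ{x : |f x| > λ}` of a function. -/
noncomputable def distribFn {α : Type*} [MeasurableSpace α] (μ : Measure α)
    (f : α → ℝ) (l : ℝ≥0∞) : ℝ≥0∞ :=
  μ {x | l < ENNReal.ofReal |f x|}

/-- The decreasing rearrangement `f*(t) = inf {λ > 0 : μ_f(λ) ≤ t}`. -/
noncomputable def rearr {α : Type*} [MeasurableSpace α] (μ : Measure α)
    (f : α → ℝ) (t : ℝ) : ℝ≥0∞ :=
  sInf {l : ℝ≥0∞ | 0 < l ∧ distribFn μ f l ≤ ENNReal.ofReal t}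

/-- The Lorentz `L^{p,q}` (quasi)norm
`‖f‖_{p,q} = (∫₀^∞ (t^{1/p} f*(t))^q dt/t)^{1/q}` for `q < ∞`, and
`‖f‖_{p,∞} = sup_{t>0} t^{1/p} f*(t)`. -/
noncomputable def lorentz {α : Type*} [MeasurableSpace α] (μ : Measure α)
    (p q : ℝ≥0∞) (f : α → ℝ) : ℝ≥0∞ :=
  if q = ∞ then ⨆ t ∈ Ioi (0 : ℝ), ENNReal.ofReal t ^ p.toReal⁻¹ * rearr μ f t
  else (∫⁻ t in Ioi (0 : ℝ),
      (ENNReal.ofReal t ^ p.toReal⁻¹ * rearr μ f t) ^ q.toReal / ENNReal.ofReal t) ^ q.toReal⁻¹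

/-!
Up to constants, the Lorentz norm of `f` is the `ℓ^q` norm of `2^{j/p} f*(2^j)` over `j : ℤ`, which
makes Hölder's inequality and the comparison of second indices elementary. Two instances of the
theorem are then proved directly. Hardy's inequality (`a = 1`, `Δ = 0`) comes from
`f(x) = -∫₁^∞ ∇f(tx)·x dt`, since dilating a function by `t` only rescales its dyadic sequence.
Sobolev's inequality in Lorentz norms comes from the Gagliardo–Nirenberg inequality in `L¹`, applied
to the truncations of `f` between the levels `f*(2^{j+1})` and `f*(2^j)`.

For the general case put `Φ = |x|^e |f|^{1+b}`. Sobolev's inequality for `Φ`, combined with Hölder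
and Hardy's inequality for the two terms of `∇Φ`, bounds a Lorentz norm of `Φ` by the right-hand
side, and `|x|^{-γ} |f|` is a product of powers of `Φ`, `|x|^{α-1} |f|` and `|x|^{-β} |f|`. The free
parameters are chosen so that every exponent stays admissible.
-/

open Filter Module

section TwoPowers

theorem two_rpow_add (x y : ℝ) : (2 : ℝ≥0∞) ^ (x + y) = 2 ^ x * 2 ^ y :=
  ENNReal.rpow_add _ _ (by norm_num) (by norm_num)

theorem two_rpow_ne_zero (x : ℝ) : (2 : ℝ≥0∞) ^ x ≠ 0 :=
  (ENNReal.rpow_pos (by norm_num) (by norm_num)).ne'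

theorem two_rpow_ne_top (x : ℝ) : (2 : ℝ≥0∞) ^ x ≠ ∞ :=
  ENNReal.rpow_ne_top_of_ne_zero (by norm_num) (by norm_num)

theorem two_rpow_le_two_rpow {x y : ℝ} (h : x ≤ y) : (2 : ℝ≥0∞) ^ x ≤ 2 ^ y :=
  ENNReal.rpow_le_rpow_of_exponent_le (by norm_num) h

theorem two_rpow_mul_neg (x : ℝ) : (2 : ℝ≥0∞) ^ x * 2 ^ (-x) = 1 := by
  rw [← two_rpow_add, add_neg_cancel, ENNReal.rpow_zero]

theorem le_mul_two_rpow_neg {a b : ℝ≥0∞} {x : ℝ} (h : a * 2 ^ x ≤ b) : a ≤ b * 2 ^ (-x) := by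
  calc a = a * 2 ^ x * 2 ^ (-x) := by rw [mul_assoc, two_rpow_mul_neg, mul_one]
    _ ≤ b * 2 ^ (-x) := by gcongr

theorem ofReal_two_rpow (x : ℝ) : ENNReal.ofReal ((2 : ℝ) ^ x) = 2 ^ x := by
  rw [← ENNReal.ofReal_rpow_of_pos (by norm_num), ENNReal.ofReal_ofNat]

theorem tendsto_two_rpow_atBot : Tendsto (fun x : ℝ => (2 : ℝ≥0∞) ^ x) atBot (nhds 0) := by
  simp_rw [← ofReal_two_rpow]
  simpa using ENNReal.tendsto_ofReal (tendsto_rpow_atBot_of_base_gt_one 2 (by norm_num))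

theorem tsum_two_rpow_neg_mul_ne_top {δ : ℝ} (hδ : 0 < δ) :
    ∑' j : ℕ, (2 : ℝ≥0∞) ^ (-(δ * j)) ≠ ∞ := by
  have hpow (j : ℕ) : (2 : ℝ≥0∞) ^ (-(δ * j)) = (2 ^ (-δ)) ^ j := by
    rw [← ENNReal.rpow_natCast, ← ENNReal.rpow_mul, neg_mul]
  have hlt : (2 : ℝ≥0∞) ^ (-δ) < 1 :=
    ENNReal.rpow_lt_one_of_one_lt_of_neg (by norm_num) (by linarith)
  simp_rw [hpow, ENNReal.tsum_geometric, ne_eq, ENNReal.inv_eq_top]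
  exact (tsub_pos_of_lt hlt).ne'

end TwoPowers

/-- The decreasing rearrangement of a `[0, ∞]`-valued function at an argument in `[0, ∞]`;
`rearr μ f t` is its value at `ENNReal.ofReal t` for the function `ENNReal.ofReal |f ·|`. -/
noncomputable def rearrangement {X : Type*} [MeasurableSpace X] (μ : Measure X)
    (u : X → ℝ≥0∞) (t : ℝ≥0∞) : ℝ≥0∞ :=
  sInf {l : ℝ≥0∞ | 0 < l ∧ μ {x | l < u x} ≤ t}

section Rearrangement

variable {X : Type*} [MeasurableSpace X] {μ : Measure X} {u v : X → ℝ≥0∞}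

theorem rearrangement_le_of_measure_le {t l : ℝ≥0∞} (h : μ {x | l < u x} ≤ t) :
    rearrangement μ u t ≤ l := by
  refine le_of_forall_gt_imp_ge_of_dense fun l' hl' => ?_
  exact sInf_le ⟨zero_le.trans_lt hl', (measure_mono fun x hx => hl'.trans hx).trans h⟩

variable (μ u) in
theorem measure_rearrangement_lt_le (t : ℝ≥0∞) : μ {x | rearrangement μ u t < u x} ≤ t := by
  by_cases hfin : rearrangement μ u t = ∞
  · simp [hfin]
  obtain ⟨φ, hφ, hφl, hφt⟩ := exists_seq_strictAnti_tendsto' (lt_top_iff_ne_top.2 hfin)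
  have hset : {x | rearrangement μ u t < u x} = ⋃ n, {x | φ n < u x} := by
    ext x
    simp only [mem_ofPred_eq, mem_iUnion]
    exact ⟨fun hx => (hφt.eventually (gt_mem_nhds hx)).exists, fun ⟨n, hn⟩ => (hφl n).1.trans hn⟩
  have hmono : Monotone fun n => {x | φ n < u x} :=
    fun m n hmn x hx => (hφ.antitone hmn).trans_lt hx
  rw [hset, hmono.measure_iUnion]
  refine iSup_le fun n => ?_
  obtain ⟨l, hl, hlt⟩ := sInf_lt_iff.1 (hφl n).1
  exact (measure_mono fun x hx => hlt.trans hx).trans hl.2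

theorem rearrangement_le_iff {t l : ℝ≥0∞} :
    rearrangement μ u t ≤ l ↔ μ {x | l < u x} ≤ t :=
  ⟨fun h => (measure_mono fun _ hx => h.trans_lt hx).trans (measure_rearrangement_lt_le μ u t),
    rearrangement_le_of_measure_le⟩

theorem exists_rearrangement_two_rpow_eq_zero (hu : μ {x | 0 < u x} ≠ ∞) (k : ℤ) :
    ∃ N : ℕ, rearrangement μ u (2 ^ ((k + N : ℤ) : ℝ)) = 0 := by
  obtain ⟨N, hN⟩ := ENNReal.exists_nat_gt (r := μ {x | 0 < u x} * 2 ^ (-(k : ℝ)))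
    (ENNReal.mul_ne_top hu (two_rpow_ne_top _))
  refine ⟨N, nonpos_iff_eq_zero.1 (rearrangement_le_iff.2 ?_)⟩
  calc μ {x | 0 < u x} ≤ μ {x | 0 < u x} * 2 ^ (-(k : ℝ)) * 2 ^ (-(-(k : ℝ))) :=
        le_mul_two_rpow_neg le_rfl
    _ ≤ 2 ^ (N : ℝ) * 2 ^ (k : ℝ) := by
        rw [neg_neg, ENNReal.rpow_natCast]
        gcongr
        exact hN.le.trans (by exact_mod_cast Nat.lt_two_pow_self.le)
    _ = 2 ^ ((k + N : ℤ) : ℝ) := by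
        rw [← two_rpow_add]
        push_cast
        rw [add_comm]

variable (μ u) in
theorem rearrangement_antitone : Antitone (rearrangement μ u) := fun s _ hst =>
  rearrangement_le_of_measure_le ((measure_rearrangement_lt_le μ u s).trans hst)

theorem rearrangement_mono_ae (h : u ≤ᵐ[μ] v) (t : ℝ≥0∞) :
    rearrangement μ u t ≤ rearrangement μ v t := by
  refine rearrangement_le_of_measure_le (le_trans (measure_mono_ae ?_)
    (measure_rearrangement_lt_le μ v t))
  filter_upwards [h] with x hx hlt
  exact hlt.trans_le hx

/-- The common principle behind the pointwise operations: if `w ≤ m` off the two exceptional sets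
where `u` or `v` exceeds its rearrangement, then `w* (2t) ≤ m`. -/
theorem rearrangement_two_mul_le {w : X → ℝ≥0∞} {t m : ℝ≥0∞}
    (h : ∀ x, u x ≤ rearrangement μ u t → v x ≤ rearrangement μ v t → w x ≤ m) :
    rearrangement μ w (2 * t) ≤ m := by
  rw [rearrangement_le_iff, two_mul]
  refine le_trans (le_trans (measure_mono fun x hx => ?_) (measure_union_le _ _))
    (add_le_add (measure_rearrangement_lt_le μ u t) (measure_rearrangement_lt_le μ v t))
  by_contra hcon
  simp only [mem_union, mem_ofPred_eq, not_or, not_lt] at hcon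
  exact (h x hcon.1 hcon.2).not_gt hx

variable (μ u v) in
theorem rearrangement_mul_le (t : ℝ≥0∞) :
    rearrangement μ (u * v) (2 * t) ≤ rearrangement μ u t * rearrangement μ v t :=
  rearrangement_two_mul_le fun _ hu hv => mul_le_mul' hu hv

variable (μ u v) in
theorem rearrangement_add_le (t : ℝ≥0∞) :
    rearrangement μ (u + v) (2 * t) ≤ rearrangement μ u t + rearrangement μ v t :=
  rearrangement_two_mul_le fun _ hu hv => add_le_add hu hv

variable (μ u) in
theorem rearrangement_comp_le {g : ℝ≥0∞ → ℝ≥0∞} (hg : Monotone g) (t : ℝ≥0∞) :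
    rearrangement μ (g ∘ u) t ≤ g (rearrangement μ u t) :=
  rearrangement_le_of_measure_le <| (measure_mono fun _ hx =>
    lt_of_not_ge fun hle => (hg hle).not_gt hx).trans (measure_rearrangement_lt_le μ u t)

theorem ae_le_rearrangement_add_tsum_indicator (u : X → ℝ≥0∞) (m : ℝ) :
    ∀ᵐ x ∂μ, u x ≤ rearrangement μ u (2 ^ m) +
      ∑' j : ℕ, indicator {x | rearrangement μ u (2 ^ (m - j)) < u x}
        (fun _ => rearrangement μ u (2 ^ (m - j - 1))) x := by
  have hnull : μ (⋂ j : ℕ, {x | rearrangement μ u (2 ^ (m - j)) < u x}) = 0 := by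
    have hle (j : ℕ) : μ (⋂ j : ℕ, {x | rearrangement μ u (2 ^ (m - j)) < u x}) ≤ 2 ^ (m - j) :=
      (measure_mono (iInter_subset _ j)).trans (measure_rearrangement_lt_le μ u _)
    have hlim : Tendsto (fun j : ℕ => (2 : ℝ≥0∞) ^ (m - j)) atTop (nhds 0) :=
      tendsto_two_rpow_atBot.comp
        (tendsto_const_nhds.add_atBot (tendsto_neg_atTop_atBot.comp tendsto_natCast_atTop_atTop))
    exact le_antisymm (ge_of_tendsto' hlim hle) zero_le
  filter_upwards [measure_eq_zero_iff_ae_notMem.1 hnull] with x hx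
  by_cases h0 : u x ≤ rearrangement μ u (2 ^ m)
  · exact h0.trans le_self_add
  obtain ⟨j, hj1, hj2⟩ : ∃ j : ℕ, rearrangement μ u (2 ^ (m - j)) < u x ∧
      u x ≤ rearrangement μ u (2 ^ (m - j - 1)) := by
    by_contra! hcon
    refine hx (mem_iInter.2 fun j => ?_)
    induction j with
    | zero => simpa using h0
    | succ j ih => simpa [sub_sub] using hcon j ih
  refine le_add_left (le_trans ?_ (ENNReal.le_tsum j))
  simpa [hj1] using hj2

variable (μ u) in
/-- The dyadic counterpart at `t = 2 ^ m` of the maximal average `t⁻¹ ∫₀ᵗ u*`, which controls the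
averages of `u` over all sets of measure `t`. -/
noncomputable def dyadicAverage (m : ℝ) : ℝ≥0∞ :=
  2 * ∑' j : ℕ, 2 ^ (-(j : ℝ)) * rearrangement μ u (2 ^ (m - j - 1))

/-- Submeasures `ν ≤ μ` of prescribed mass replace subsets of prescribed measure, which need not
exist if `μ` has atoms. -/
theorem lintegral_le_two_rpow_mul_dyadicAverage (hu : AEMeasurable u μ) {ν : Measure X}
    (hν : ν ≤ μ) {m : ℝ} (hνm : ν univ ≤ 2 ^ m) :
    ∫⁻ x, u x ∂ν ≤ 2 ^ m * dyadicAverage μ u m := by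
  have hmeas (j : ℕ) : NullMeasurableSet {x | rearrangement μ u (2 ^ (m - j)) < u x} ν :=
    (nullMeasurableSet_lt aemeasurable_const hu).mono_ac (Measure.absolutelyContinuous_of_le hν)
  have hlevel (j : ℕ) : ν {x | rearrangement μ u (2 ^ (m - j)) < u x} ≤ 2 ^ (m - j) :=
    (hν _).trans (measure_rearrangement_lt_le μ u _)
  calc ∫⁻ x, u x ∂ν
      ≤ ∫⁻ x, (rearrangement μ u (2 ^ m) +
          ∑' j : ℕ, indicator {x | rearrangement μ u (2 ^ (m - j)) < u x}
            (fun _ => rearrangement μ u (2 ^ (m - j - 1))) x) ∂ν :=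
        lintegral_mono_ae ((Measure.absolutelyContinuous_of_le hν).ae_le
          (ae_le_rearrangement_add_tsum_indicator u m))
    _ = ν univ * rearrangement μ u (2 ^ m) +
          ∑' j : ℕ, ν {x | rearrangement μ u (2 ^ (m - j)) < u x} *
            rearrangement μ u (2 ^ (m - j - 1)) := by
        rw [lintegral_add_left measurable_const, lintegral_const,
          lintegral_tsum fun j => aemeasurable_const.indicator₀ (hmeas j)]
        simp_rw [lintegral_indicator_const₀ (hmeas _), mul_comm]
    _ ≤ 2 ^ (m - (0 : ℕ)) * rearrangement μ u (2 ^ (m - (0 : ℕ) - 1)) +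
          ∑' j : ℕ, 2 ^ (m - j) * rearrangement μ u (2 ^ (m - j - 1)) := by
        gcongr with j
        · simpa using hνm
        · exact rearrangement_antitone μ u (two_rpow_le_two_rpow (by simp))
        · exact hlevel j
    _ ≤ 2 * ∑' j : ℕ, 2 ^ (m - j) * rearrangement μ u (2 ^ (m - j - 1)) := by
        rw [two_mul]
        gcongr
        exact ENNReal.le_tsum
          (f := fun j : ℕ => (2 : ℝ≥0∞) ^ (m - j) * rearrangement μ u (2 ^ (m - j - 1))) 0
    _ = 2 ^ m * dyadicAverage μ u m := by
        simp_rw [dyadicAverage, sub_eq_add_neg m, two_rpow_add m, mul_assoc, ENNReal.tsum_mul_left]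
        rw [mul_left_comm]

/-- A converse of the bound of integrals by rearrangements: on a submeasure of mass `t`
concentrated on `{l < u}` with `l < u* t`, the integral of `u` is at least `t * l`. -/
theorem mul_rearrangement_le_of_forall_lintegral_le [SigmaFinite μ] (hu : Measurable u)
    {t c : ℝ≥0∞} (h : ∀ ν ≤ μ, ν univ = t → ∫⁻ x, u x ∂ν ≤ c) :
    t * rearrangement μ u t ≤ c := by
  refine ENNReal.mul_le_of_forall_lt fun t' ht' l hl => (mul_le_mul_left ht'.le l).trans ?_
  have hlt : t < μ {x | l < u x} := lt_of_not_ge fun hle =>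
    (rearrangement_le_of_measure_le hle).not_gt hl
  obtain ⟨s, hs, hsl, hts, hs_top⟩ :=
    Measure.exists_subset_measure_lt_top (measurableSet_lt measurable_const hu) hlt
  have hs0 : μ s ≠ 0 := (zero_le.trans_lt hts).ne'
  set ν : Measure X := (t / μ s) • μ.restrict s with hν
  have hνμ : ν ≤ μ := by
    refine Measure.le_iff.2 fun a _ => ?_
    rw [hν, Measure.smul_apply, smul_eq_mul]
    exact (mul_le_mul' (ENNReal.div_le_of_le_mul (by simpa using hts.le)) le_rfl).trans
      ((one_mul _).trans_le (Measure.restrict_le_self a))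
  have hνt : ν univ = t := by
    rw [hν, Measure.smul_apply, Measure.restrict_apply_univ, smul_eq_mul,
      ENNReal.div_mul_cancel hs0 hs_top.ne]
  calc t * l = ∫⁻ _, l ∂ν := by rw [lintegral_const, hνt, mul_comm]
    _ ≤ ∫⁻ x, u x ∂ν := by
        rw [hν, lintegral_smul_measure, lintegral_smul_measure]
        gcongr ?_ • ?_
        exact setLIntegral_mono' hs fun x hx => (hsl hx).le
    _ ≤ c := h ν hνμ hνt

end Rearrangement

/-- The norm of `ℓ^{1/s}(ℤ)`, with `ℓ^∞` at `s = 0`. Parametrizing by the reciprocal exponent makes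
Hölder's inequality additive in `s`. -/
noncomputable def ellNorm (s : ℝ) (x : ℤ → ℝ≥0∞) : ℝ≥0∞ :=
  eLpNorm x (ENNReal.ofReal s)⁻¹ Measure.count

section EllNorm

theorem ellNorm_zero (x : ℤ → ℝ≥0∞) : ellNorm 0 x = ⨆ k, x k := by
  simp [ellNorm, eLpNormEssSup]

theorem ellNorm_of_pos {s : ℝ} (hs : 0 < s) (x : ℤ → ℝ≥0∞) :
    ellNorm s x = (∑' k, x k ^ s⁻¹) ^ s := by
  rw [ellNorm, eLpNorm_eq_lintegral_rpow_enorm_toReal (by simp) (by simp [hs])]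
  simp [lintegral_count, ENNReal.toReal_inv, ENNReal.toReal_ofReal hs.le]

theorem ellNorm_mono (s : ℝ) {x y : ℤ → ℝ≥0∞} (h : x ≤ y) : ellNorm s x ≤ ellNorm s y :=
  eLpNorm_mono_enorm h

theorem ellNorm_const_mul {s : ℝ} (hs : 0 ≤ s) (c : ℝ≥0∞) (x : ℤ → ℝ≥0∞) :
    ellNorm s (fun k => c * x k) = c * ellNorm s x := by
  rcases hs.eq_or_lt with rfl | hs
  · simp_rw [ellNorm_zero, ENNReal.mul_iSup]
  · simp_rw [ellNorm_of_pos hs, ENNReal.mul_rpow_of_nonneg _ _ (inv_nonneg.2 hs.le)]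
    rw [ENNReal.tsum_mul_left, ENNReal.mul_rpow_of_nonneg _ _ hs.le,
      ENNReal.rpow_inv_rpow hs.ne']

theorem ellNorm_comp_add_right (s : ℝ) (x : ℤ → ℝ≥0∞) (m : ℤ) :
    ellNorm s (fun k => x (k + m)) = ellNorm s x := by
  have hcount : MeasurePreserving (· + m) (Measure.count : Measure ℤ) Measure.count := by
    refine ⟨measurable_of_countable _, Measure.ext fun t ht => ?_⟩
    rw [Measure.map_apply (measurable_of_countable _) ht, Measure.count_apply .of_discrete,
      Measure.count_apply ht, encard_preimage_of_bijective (AddGroup.addRight_bijective m)]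
  exact eLpNorm_comp_measurePreserving (measurable_of_countable x).aestronglyMeasurable hcount

theorem ellNorm_rpow_le (s : ℝ) {θ : ℝ} (hθ : 0 ≤ θ) (x : ℤ → ℝ≥0∞) :
    ellNorm (θ * s) (fun k => x k ^ θ) ≤ ellNorm s x ^ θ := by
  rcases hθ.eq_or_lt with rfl | hθ
  · simp [ellNorm_zero]
  have hexp : (ENNReal.ofReal s)⁻¹ = (ENNReal.ofReal (θ * s))⁻¹ * ENNReal.ofReal θ := by
    have hθ' : ENNReal.ofReal θ ≠ 0 := by simpa using hθ
    rw [ENNReal.ofReal_mul hθ.le, ENNReal.mul_inv (.inl hθ') (.inl ofReal_ne_top), mul_right_comm,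
      ENNReal.inv_mul_cancel hθ' ofReal_ne_top, one_mul]
  simpa [ellNorm, hexp] using (eLpNorm_enorm_rpow (p := (ENNReal.ofReal (θ * s))⁻¹)
    (μ := Measure.count) x hθ).le

theorem ellNorm_mul_le_iSup_mul {t : ℝ} (ht : 0 ≤ t) (x y : ℤ → ℝ≥0∞) :
    ellNorm t (x * y) ≤ (⨆ k, x k) * ellNorm t y := by
  rw [← ellNorm_const_mul ht]
  exact ellNorm_mono t fun k => mul_le_mul_left (le_iSup x k) _

theorem ellNorm_mul_le {s t : ℝ} (hs : 0 ≤ s) (ht : 0 ≤ t) (x y : ℤ → ℝ≥0∞) :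
    ellNorm (s + t) (x * y) ≤ ellNorm s x * ellNorm t y := by
  rcases hs.eq_or_lt with rfl | hs
  · simpa only [zero_add, ellNorm_zero] using ellNorm_mul_le_iSup_mul ht x y
  rcases ht.eq_or_lt with rfl | ht
  · simpa only [add_zero, ellNorm_zero, mul_comm] using ellNorm_mul_le_iSup_mul hs.le y x
  have hst : 0 < s + t := add_pos hs ht
  have holder := ENNReal.lintegral_mul_norm_pow_le (μ := Measure.count)
    (f := fun k : ℤ => x k ^ s⁻¹) (g := fun k : ℤ => y k ^ t⁻¹)
    (measurable_of_countable _).aemeasurable (measurable_of_countable _).aemeasurable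
    (p := s / (s + t)) (q := t / (s + t)) (by positivity) (by positivity) (by field_simp)
  simp only [lintegral_count, ← ENNReal.rpow_mul] at holder
  have hxs : s⁻¹ * (s / (s + t)) = (s + t)⁻¹ := by field_simp
  have hyt : t⁻¹ * (t / (s + t)) = (s + t)⁻¹ := by field_simp
  rw [ellNorm_of_pos hs, ellNorm_of_pos ht, ellNorm_of_pos hst]
  simp only [Pi.mul_apply, ENNReal.mul_rpow_of_nonneg _ _ (inv_nonneg.2 hst.le)]
  rw [hxs, hyt] at holder
  refine (ENNReal.rpow_le_rpow holder hst.le).trans_eq ?_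
  rw [ENNReal.mul_rpow_of_nonneg _ _ hst.le, ← ENNReal.rpow_mul, ← ENNReal.rpow_mul,
    div_mul_cancel₀ _ hst.ne', div_mul_cancel₀ _ hst.ne']

theorem ellNorm_add_le (s : ℝ) (x y : ℤ → ℝ≥0∞) :
    ellNorm s (x + y) ≤ LpAddConst (ENNReal.ofReal s)⁻¹ * (ellNorm s x + ellNorm s y) :=
  eLpNorm_add_le' (measurable_of_countable x).aestronglyMeasurable
    (measurable_of_countable y).aestronglyMeasurable _

/-- For `s > 0` the sum is dominated by a supremum at the cost of half of the decay, and the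
`ℓ^{1/s}` norm of a supremum is at most the `ℓ^{1/s}` sum. This covers `s > 1`, where the triangle
inequality fails. -/
theorem ellNorm_tsum_geometric_le {s δ : ℝ} (hs : 0 < s) (x : ℤ → ℝ≥0∞) (m : ℕ → ℤ) :
    ellNorm s (fun k => ∑' j : ℕ, 2 ^ (-(δ * j)) * x (k + m j)) ≤
      (∑' j : ℕ, 2 ^ (-(δ / 2 * j))) * (∑' j : ℕ, 2 ^ (-(δ / 2 * s⁻¹ * j))) ^ s *
        ellNorm s x := by
  have hsum_le (k : ℤ) : ∑' j : ℕ, (2 : ℝ≥0∞) ^ (-(δ * j)) * x (k + m j) ≤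
      (∑' j : ℕ, 2 ^ (-(δ / 2 * j))) * ⨆ j : ℕ, 2 ^ (-(δ / 2 * j)) * x (k + m j) := by
    rw [← ENNReal.tsum_mul_right]
    refine ENNReal.tsum_le_tsum fun j => ?_
    rw [show -(δ * j) = -(δ / 2 * j) + -(δ / 2 * j) by ring, two_rpow_add, mul_assoc]
    gcongr
    exact le_iSup (fun j : ℕ => (2 : ℝ≥0∞) ^ (-(δ / 2 * j)) * x (k + m j)) j
  have hiSup_le (k : ℤ) : (⨆ j : ℕ, (2 : ℝ≥0∞) ^ (-(δ / 2 * j)) * x (k + m j)) ^ s⁻¹ ≤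
      ∑' j : ℕ, 2 ^ (-(δ / 2 * s⁻¹ * j)) * x (k + m j) ^ s⁻¹ := by
    rw [ENNReal.rpow_inv_le_iff hs]
    refine iSup_le fun j => ?_
    rw [← ENNReal.rpow_inv_le_iff hs, ENNReal.mul_rpow_of_nonneg _ _ (inv_nonneg.2 hs.le),
      ← ENNReal.rpow_mul, neg_mul, mul_right_comm]
    exact ENNReal.le_tsum (f := fun j : ℕ => 2 ^ (-(δ / 2 * s⁻¹ * j)) * x (k + m j) ^ s⁻¹) j
  refine (ellNorm_mono s hsum_le).trans ?_
  rw [ellNorm_const_mul hs.le, mul_assoc]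
  gcongr
  rw [ellNorm_of_pos hs, ellNorm_of_pos hs, ← ENNReal.mul_rpow_of_nonneg _ _ hs.le]
  gcongr
  calc ∑' k, (⨆ j : ℕ, (2 : ℝ≥0∞) ^ (-(δ / 2 * j)) * x (k + m j)) ^ s⁻¹
      ≤ ∑' k, ∑' j : ℕ, 2 ^ (-(δ / 2 * s⁻¹ * j)) * x (k + m j) ^ s⁻¹ :=
        ENNReal.tsum_le_tsum hiSup_le
    _ = ∑' j : ℕ, 2 ^ (-(δ / 2 * s⁻¹ * j)) * ∑' k, x k ^ s⁻¹ := by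
        rw [ENNReal.tsum_comm]
        simp_rw [ENNReal.tsum_mul_left]
        congr! 3 with j
        exact (Equiv.addRight (m j)).tsum_eq fun k => x k ^ s⁻¹
    _ = _ := ENNReal.tsum_mul_right

theorem exists_ellNorm_tsum_geometric_le {s δ : ℝ} (hs : 0 ≤ s) (hδ : 0 < δ) :
    ∃ C : ℝ≥0∞, C ≠ ∞ ∧ ∀ (x : ℤ → ℝ≥0∞) (m : ℕ → ℤ),
      ellNorm s (fun k => ∑' j : ℕ, 2 ^ (-(δ * j)) * x (k + m j)) ≤ C * ellNorm s x := by
  rcases hs.eq_or_lt with rfl | hs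
  · refine ⟨∑' j : ℕ, 2 ^ (-(δ * j)), tsum_two_rpow_neg_mul_ne_top hδ, fun x m => ?_⟩
    simp_rw [ellNorm_zero, ← ENNReal.tsum_mul_right]
    exact iSup_le fun k => ENNReal.tsum_le_tsum fun j => mul_le_mul_right (le_iSup x _) _
  · exact ⟨_, ENNReal.mul_ne_top (tsum_two_rpow_neg_mul_ne_top (half_pos hδ))
      (ENNReal.rpow_ne_top_of_nonneg hs.le (tsum_two_rpow_neg_mul_ne_top (by positivity))),
      ellNorm_tsum_geometric_le hs⟩

end EllNorm

/-- The rearrangement sampled at powers of two, `k ↦ 2^{ks} u*(2^k)`, the discrete counterpart of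
`t ↦ t^s u*(t)`. -/
noncomputable def dyadicSeq {X : Type*} [MeasurableSpace X] (μ : Measure X) (s : ℝ)
    (u : X → ℝ≥0∞) (k : ℤ) : ℝ≥0∞ :=
  2 ^ (k * s) * rearrangement μ u (2 ^ (k : ℝ))

/-- The discrete Lorentz norm: `dyadicLorentz μ (1 / p) (1 / q)` is comparable to the norm of
`L^{p,q}`. Both exponents enter through their reciprocals. -/
noncomputable def dyadicLorentz {X : Type*} [MeasurableSpace X] (μ : Measure X) (s σ : ℝ)
    (u : X → ℝ≥0∞) : ℝ≥0∞ :=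
  ellNorm σ (dyadicSeq μ s u)

section DyadicLorentz

variable {X : Type*} [MeasurableSpace X] {μ : Measure X}

theorem dyadicLorentz_mono_ae (s σ : ℝ) {u v : X → ℝ≥0∞} (h : u ≤ᵐ[μ] v) :
    dyadicLorentz μ s σ u ≤ dyadicLorentz μ s σ v :=
  ellNorm_mono σ fun _ => mul_le_mul_right (rearrangement_mono_ae h _) _

theorem dyadicLorentz_const_mul_le (s : ℝ) {σ : ℝ} (hσ : 0 ≤ σ) (c : ℝ≥0∞) (u : X → ℝ≥0∞) :
    dyadicLorentz μ s σ (fun x => c * u x) ≤ c * dyadicLorentz μ s σ u := by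
  rw [dyadicLorentz, dyadicLorentz, ← ellNorm_const_mul hσ]
  refine ellNorm_mono σ fun k => ?_
  rw [dyadicSeq, dyadicSeq, mul_left_comm]
  gcongr
  exact rearrangement_comp_le μ u (fun _ _ h => mul_le_mul_right h c) _

theorem dyadicLorentz_rpow_le (s σ : ℝ) {b : ℝ} (hb : 0 ≤ b) (u : X → ℝ≥0∞) :
    dyadicLorentz μ (b * s) (b * σ) (fun x => u x ^ b) ≤ dyadicLorentz μ s σ u ^ b := by
  refine (ellNorm_mono _ fun k => ?_).trans (ellNorm_rpow_le σ hb (dyadicSeq μ s u))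
  rw [dyadicSeq, dyadicSeq, ENNReal.mul_rpow_of_nonneg _ _ hb, ← ENNReal.rpow_mul, mul_left_comm,
    mul_comm b]
  gcongr
  exact rearrangement_comp_le μ u (ENNReal.monotone_rpow_of_nonneg hb) _

theorem dyadicSeq_add_one (s : ℝ) (u : X → ℝ≥0∞) (k : ℤ) :
    dyadicSeq μ s u (k + 1) = 2 ^ s * (2 ^ (k * s) * rearrangement μ u (2 * 2 ^ (k : ℝ))) := by
  rw [dyadicSeq, ← mul_assoc, ← two_rpow_add]
  push_cast
  rw [add_comm (k : ℝ) 1, two_rpow_add 1 k, ENNReal.rpow_one, add_mul, one_mul]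

theorem dyadicLorentz_mul_le (s t : ℝ) {σ τ : ℝ} (hσ : 0 ≤ σ) (hτ : 0 ≤ τ)
    (u v : X → ℝ≥0∞) :
    dyadicLorentz μ (s + t) (σ + τ) (u * v) ≤
      2 ^ (s + t) * (dyadicLorentz μ s σ u * dyadicLorentz μ t τ v) := by
  have hle (k : ℤ) : dyadicSeq μ (s + t) (u * v) (k + 1) ≤
      2 ^ (s + t) * (dyadicSeq μ s u k * dyadicSeq μ t v k) := by
    rw [dyadicSeq_add_one, dyadicSeq, dyadicSeq, mul_mul_mul_comm, ← two_rpow_add, ← mul_add]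
    gcongr
    exact rearrangement_mul_le μ u v _
  rw [dyadicLorentz, ← ellNorm_comp_add_right _ _ 1]
  refine (ellNorm_mono _ hle).trans ?_
  rw [ellNorm_const_mul (add_nonneg hσ hτ)]
  gcongr
  exact ellNorm_mul_le hσ hτ _ _

theorem dyadicLorentz_rpow_mul_rpow_le (s t : ℝ) {σ τ a b : ℝ} (hσ : 0 ≤ σ) (hτ : 0 ≤ τ)
    (ha : 0 ≤ a) (hb : 0 ≤ b) (u v : X → ℝ≥0∞) :
    dyadicLorentz μ (a * s + b * t) (a * σ + b * τ) (fun x => u x ^ a * v x ^ b) ≤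
      2 ^ (a * s + b * t) * (dyadicLorentz μ s σ u ^ a * dyadicLorentz μ t τ v ^ b) := by
  refine (dyadicLorentz_mul_le (a * s) (b * t) (mul_nonneg ha hσ) (mul_nonneg hb hτ)
    (fun x => u x ^ a) fun x => v x ^ b).trans ?_
  gcongr
  · exact dyadicLorentz_rpow_le s σ ha u
  · exact dyadicLorentz_rpow_le t τ hb v

theorem dyadicLorentz_rpow_mul_rpow_mul_rpow_le (s t r : ℝ) {σ τ ρ a b c : ℝ} (hσ : 0 ≤ σ)
    (hτ : 0 ≤ τ) (hρ : 0 ≤ ρ) (ha : 0 ≤ a) (hb : 0 ≤ b) (hc : 0 ≤ c) (u v w : X → ℝ≥0∞) :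
    dyadicLorentz μ (a * s + (b * t + c * r)) (a * σ + (b * τ + c * ρ))
        (fun x => u x ^ a * (v x ^ b * w x ^ c)) ≤
      2 ^ (a * s + (b * t + c * r)) * 2 ^ (b * t + c * r) *
        (dyadicLorentz μ s σ u ^ a * (dyadicLorentz μ t τ v ^ b * dyadicLorentz μ r ρ w ^ c)) := by
  refine (dyadicLorentz_mul_le (a * s) (b * t + c * r) (mul_nonneg ha hσ) (by positivity)
    (fun x => u x ^ a) fun x => v x ^ b * w x ^ c).trans ?_
  rw [mul_assoc, mul_left_comm (2 ^ (b * t + c * r))]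
  gcongr
  · exact dyadicLorentz_rpow_le s σ ha u
  · exact dyadicLorentz_rpow_mul_rpow_le t r hτ hρ hb hc v w

theorem dyadicLorentz_add_le (s : ℝ) {σ : ℝ} (hσ : 0 ≤ σ) (u v : X → ℝ≥0∞) :
    dyadicLorentz μ s σ (u + v) ≤ 2 ^ s * LpAddConst (ENNReal.ofReal σ)⁻¹ *
      (dyadicLorentz μ s σ u + dyadicLorentz μ s σ v) := by
  have hle (k : ℤ) : dyadicSeq μ s (u + v) (k + 1) ≤
      2 ^ s * (dyadicSeq μ s u k + dyadicSeq μ s v k) := by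
    rw [dyadicSeq_add_one, dyadicSeq, dyadicSeq, ← mul_add]
    gcongr
    exact rearrangement_add_le μ u v _
  rw [dyadicLorentz, ← ellNorm_comp_add_right _ _ 1]
  refine (ellNorm_mono _ hle).trans ?_
  rw [ellNorm_const_mul hσ, mul_assoc]
  gcongr
  exact ellNorm_add_le σ _ _

variable (μ) in
theorem exists_ellNorm_dyadicAverage_le {s σ : ℝ} (hs : s < 1) (hσ : 0 ≤ σ) :
    ∃ C : ℝ≥0∞, C ≠ ∞ ∧ ∀ u : X → ℝ≥0∞,
      ellNorm σ (fun k => 2 ^ (k * s) * dyadicAverage μ u k) ≤ C * dyadicLorentz μ s σ u := by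
  obtain ⟨C, hC, hgeom⟩ := exists_ellNorm_tsum_geometric_le hσ (sub_pos.2 hs)
  refine ⟨2 * 2 ^ s * C, by finiteness [two_rpow_ne_top s], fun u => ?_⟩
  have heq (k : ℤ) : 2 ^ (k * s) * dyadicAverage μ u k =
      2 * 2 ^ s * ∑' j : ℕ, 2 ^ (-((1 - s) * j)) * dyadicSeq μ s u (k + (-j - 1)) := by
    rw [dyadicAverage, mul_left_comm, mul_assoc]
    congr 1
    rw [← ENNReal.tsum_mul_left, ← ENNReal.tsum_mul_left]
    refine tsum_congr fun j => ?_
    rw [dyadicSeq, ← mul_assoc, ← mul_assoc, ← mul_assoc, ← two_rpow_add, ← two_rpow_add,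
      ← two_rpow_add]
    push_cast
    ring_nf
  simp_rw [heq]
  rw [ellNorm_const_mul hσ, mul_assoc _ C]
  gcongr
  exact hgeom _ _

end DyadicLorentz

section Discretization

theorem two_rpow_intCast (k : ℤ) : (2 : ℝ≥0∞) ^ (k : ℝ) = ENNReal.ofReal (2 ^ k) := by
  rw [← ofReal_two_rpow, Real.rpow_intCast]

theorem two_rpow_le_ofReal_of_mem_Ico {k : ℤ} {t : ℝ} (ht : t ∈ Ico ((2 : ℝ) ^ k) (2 ^ (k + 1))) :
    (2 : ℝ≥0∞) ^ (k : ℝ) ≤ ENNReal.ofReal t :=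
  (two_rpow_intCast k).trans_le (ENNReal.ofReal_le_ofReal ht.1)

theorem ofReal_le_two_rpow_of_mem_Ico {k : ℤ} {t : ℝ} (ht : t ∈ Ico ((2 : ℝ) ^ k) (2 ^ (k + 1))) :
    ENNReal.ofReal t ≤ 2 ^ ((k : ℝ) + 1) := by
  have hexp : (k : ℝ) + 1 = (k + 1 : ℤ) := by push_cast; ring
  rw [hexp, two_rpow_intCast]
  exact ENNReal.ofReal_le_ofReal ht.2.le

theorem volume_Ico_two_zpow (k : ℤ) :
    volume (Ico ((2 : ℝ) ^ k) (2 ^ (k + 1))) = 2 ^ (k : ℝ) := by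
  rw [Real.volume_Ico, two_rpow_intCast, zpow_add_one₀ two_ne_zero, mul_two, add_sub_cancel_right]

theorem iUnion_Ico_two_zpow : ⋃ k : ℤ, Ico ((2 : ℝ) ^ k) (2 ^ (k + 1)) = Ioi 0 := by
  ext t
  simp only [mem_iUnion, mem_Ioi]
  exact ⟨fun ⟨k, hk⟩ => (zpow_pos two_pos k).trans_le hk.1,
    fun ht => exists_mem_Ico_zpow ht one_lt_two⟩

theorem lintegral_Ioi_eq_tsum_Ico_two_zpow (g : ℝ → ℝ≥0∞) :
    ∫⁻ t in Ioi 0, g t = ∑' k : ℤ, ∫⁻ t in Ico ((2 : ℝ) ^ k) (2 ^ (k + 1)), g t := by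
  have hmono : Monotone fun k : ℤ => (2 : ℝ) ^ k := zpow_right_mono₀ one_le_two
  rw [← iUnion_Ico_two_zpow, lintegral_iUnion (fun _ => measurableSet_Ico)]
  simpa only [Int.succ_eq_succ, Order.succ_eq_add_one] using hmono.pairwise_disjoint_on_Ico_succ

theorem setLIntegral_Ico_two_zpow_div_le {g : ℝ → ℝ≥0∞} {c : ℝ≥0∞} {k : ℤ}
    (h : ∀ t ∈ Ico ((2 : ℝ) ^ k) (2 ^ (k + 1)), g t ≤ c) :
    ∫⁻ t in Ico ((2 : ℝ) ^ k) (2 ^ (k + 1)), g t / ENNReal.ofReal t ≤ c := by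
  calc ∫⁻ t in Ico ((2 : ℝ) ^ k) (2 ^ (k + 1)), g t / ENNReal.ofReal t
      ≤ ∫⁻ _ in Ico ((2 : ℝ) ^ k) (2 ^ (k + 1)), c / 2 ^ (k : ℝ) :=
        setLIntegral_mono' measurableSet_Ico fun t ht =>
          ENNReal.div_le_div (h t ht) (two_rpow_le_ofReal_of_mem_Ico ht)
    _ = c := by
        rw [setLIntegral_const, volume_Ico_two_zpow,
          ENNReal.div_mul_cancel (two_rpow_ne_zero _) (two_rpow_ne_top _)]

theorem le_two_mul_setLIntegral_Ico_two_zpow_div {g : ℝ → ℝ≥0∞} {c : ℝ≥0∞} {k : ℤ}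
    (h : ∀ t ∈ Ico ((2 : ℝ) ^ k) (2 ^ (k + 1)), c ≤ g t) :
    c ≤ 2 * ∫⁻ t in Ico ((2 : ℝ) ^ k) (2 ^ (k + 1)), g t / ENNReal.ofReal t := by
  calc c = 2 * (c / 2 ^ ((k : ℝ) + 1) * 2 ^ (k : ℝ)) := by
        have htwo : (2 : ℝ≥0∞) ^ ((k : ℝ) + 1) = 2 ^ (k : ℝ) * 2 := by
          rw [two_rpow_add, ENNReal.rpow_one]
        rw [mul_comm, mul_assoc, ← htwo,
          ENNReal.div_mul_cancel (two_rpow_ne_zero _) (two_rpow_ne_top _)]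
    _ = 2 * ∫⁻ _ in Ico ((2 : ℝ) ^ k) (2 ^ (k + 1)), c / 2 ^ ((k : ℝ) + 1) := by
        rw [setLIntegral_const, volume_Ico_two_zpow]
    _ ≤ _ := by
        gcongr 2 * ?_
        exact setLIntegral_mono' measurableSet_Ico fun t ht =>
          ENNReal.div_le_div (h t ht) (ofReal_le_two_rpow_of_mem_Ico ht)

variable {X : Type*} [MeasurableSpace X] (μ : Measure X)

theorem rpow_mul_rearr_le_dyadicSeq {s : ℝ} (hs : 0 ≤ s) (f : X → ℝ) {k : ℤ} {t : ℝ}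
    (ht : t ∈ Ico ((2 : ℝ) ^ k) (2 ^ (k + 1))) :
    ENNReal.ofReal t ^ s * rearr μ f t ≤
      2 ^ s * dyadicSeq μ s (fun x => ENNReal.ofReal |f x|) k := by
  calc ENNReal.ofReal t ^ s * rearr μ f t
      ≤ (2 ^ ((k : ℝ) + 1)) ^ s *
          rearrangement μ (fun x => ENNReal.ofReal |f x|) (2 ^ (k : ℝ)) := by
        gcongr
        · exact ofReal_le_two_rpow_of_mem_Ico ht
        · exact rearrangement_antitone μ _ (two_rpow_le_ofReal_of_mem_Ico ht)
    _ = _ := by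
        rw [dyadicSeq, ← mul_assoc, ← two_rpow_add, ← ENNReal.rpow_mul, add_mul, one_mul, add_comm]

theorem dyadicSeq_add_one_le_rpow_mul_rearr {s : ℝ} (hs : 0 ≤ s) (f : X → ℝ) {k : ℤ} {t : ℝ}
    (ht : t ∈ Ico ((2 : ℝ) ^ k) (2 ^ (k + 1))) :
    dyadicSeq μ s (fun x => ENNReal.ofReal |f x|) (k + 1) ≤
      2 ^ s * (ENNReal.ofReal t ^ s * rearr μ f t) := by
  rw [dyadicSeq, Int.cast_add, Int.cast_one, add_mul, one_mul, add_comm (k * s), two_rpow_add,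
    mul_assoc, ENNReal.rpow_mul]
  gcongr
  · exact two_rpow_le_ofReal_of_mem_Ico ht
  · exact rearrangement_antitone μ _ (ofReal_le_two_rpow_of_mem_Ico ht)

theorem lorentz_le_dyadicLorentz {p : ℝ} (hp : 0 ≤ p) {q : ℝ≥0∞} (hq : q ≠ 0) (f : X → ℝ) :
    lorentz μ (ENNReal.ofReal p) q f ≤
      2 ^ p⁻¹ * dyadicLorentz μ p⁻¹ q.toReal⁻¹ fun x => ENNReal.ofReal |f x| := by
  have hle {k : ℤ} {t : ℝ} (ht : t ∈ Ico ((2 : ℝ) ^ k) (2 ^ (k + 1))) :=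
    rpow_mul_rearr_le_dyadicSeq μ (inv_nonneg.2 hp) f ht
  rw [lorentz, ENNReal.toReal_ofReal hp, dyadicLorentz,
    ← ellNorm_const_mul (inv_nonneg.2 toReal_nonneg)]
  split_ifs with hq_top
  · rw [hq_top, toReal_top, _root_.inv_zero, ellNorm_zero, ← iUnion_Ico_two_zpow]
    refine iSup₂_le fun t ht => ?_
    obtain ⟨k, hk⟩ := mem_iUnion.1 ht
    exact le_iSup_of_le k (hle hk)
  · have hq_pos : 0 < q.toReal := ENNReal.toReal_pos hq hq_top
    rw [ellNorm_of_pos (inv_pos.2 hq_pos), inv_inv, lintegral_Ioi_eq_tsum_Ico_two_zpow]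
    gcongr with k
    exact setLIntegral_Ico_two_zpow_div_le fun t ht => ENNReal.rpow_le_rpow (hle ht) hq_pos.le

theorem dyadicLorentz_le_lorentz {p : ℝ} (hp : 0 ≤ p) {q : ℝ≥0∞} (hq : q ≠ 0) (f : X → ℝ) :
    dyadicLorentz μ p⁻¹ q.toReal⁻¹ (fun x => ENNReal.ofReal |f x|) ≤
      2 ^ q.toReal⁻¹ * 2 ^ p⁻¹ * lorentz μ (ENNReal.ofReal p) q f := by
  have hle {k : ℤ} {t : ℝ} (ht : t ∈ Ico ((2 : ℝ) ^ k) (2 ^ (k + 1))) :=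
    dyadicSeq_add_one_le_rpow_mul_rearr μ (inv_nonneg.2 hp) f ht
  rw [lorentz, ENNReal.toReal_ofReal hp, dyadicLorentz, ← ellNorm_comp_add_right _ _ 1]
  split_ifs with hq_top
  · rw [hq_top, toReal_top, _root_.inv_zero, ellNorm_zero, ENNReal.rpow_zero, one_mul]
    refine iSup_le fun k => (hle ⟨le_rfl, zpow_lt_zpow_right₀ one_lt_two (lt_add_one k)⟩).trans ?_
    gcongr
    exact le_iSup₂_of_le (2 ^ k) (mem_Ioi.2 (zpow_pos two_pos k)) le_rfl
  · have hq_pos : 0 < q.toReal := ENNReal.toReal_pos hq hq_top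
    rw [ellNorm_of_pos (inv_pos.2 hq_pos), inv_inv, lintegral_Ioi_eq_tsum_Ico_two_zpow]
    rw [ENNReal.rpow_inv_le_iff hq_pos, ENNReal.mul_rpow_of_nonneg _ _ hq_pos.le,
      ENNReal.rpow_inv_rpow hq_pos.ne', ENNReal.mul_rpow_of_nonneg _ _ hq_pos.le,
      ENNReal.rpow_inv_rpow hq_pos.ne', mul_assoc, ← ENNReal.tsum_mul_left, ← ENNReal.tsum_mul_left]
    refine ENNReal.tsum_le_tsum fun k => ?_
    refine (le_two_mul_setLIntegral_Ico_two_zpow_div fun t ht =>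
      ENNReal.rpow_le_rpow (hle ht) hq_pos.le).trans_eq ?_
    simp_rw [ENNReal.mul_rpow_of_nonneg _ _ hq_pos.le, mul_div_assoc]
    rw [lintegral_const_mul' _ _ (ENNReal.rpow_ne_top_of_nonneg hq_pos.le (two_rpow_ne_top _))]

end Discretization

section Weighted

variable {E F : Type*} [NormedAddCommGroup E] [NormedAddCommGroup F]

/-- The function `|x|^α |g x|`, as an extended nonnegative real. -/
noncomputable def weighted (α : ℝ) (g : E → F) (x : E) : ℝ≥0∞ :=
  ENNReal.ofReal (‖x‖ ^ α * ‖g x‖)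

theorem weighted_eq_mul_enorm (α : ℝ) (g : E → F) (x : E) :
    weighted α g x = ENNReal.ofReal (‖x‖ ^ α) * ‖g x‖ₑ := by
  rw [weighted, ENNReal.ofReal_mul (by positivity), ofReal_norm]

theorem measurable_weighted [MeasurableSpace E] [OpensMeasurableSpace E] (α : ℝ) {g : E → F}
    (hg : Continuous g) : Measurable (weighted α g) :=
  ((measurable_norm.pow_const α).mul hg.norm.measurable).ennreal_ofReal

end Weighted

section Hardy

variable {E F : Type*} [NormedAddCommGroup E] [NormedSpace ℝ E] [NormedAddCommGroup F]
  [NormedSpace ℝ F]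

theorem enorm_le_lintegral_Ici_enorm_deriv {φ : ℝ → F} (hφ : ContDiff ℝ 1 φ)
    (hcs : HasCompactSupport φ) (a : ℝ) : ‖φ a‖ₑ ≤ ∫⁻ t in Ici a, ‖deriv φ t‖ₑ := by
  have h := (hcs.comp_homeomorph (Homeomorph.neg ℝ)).enorm_le_lintegral_Ici_deriv
    (hφ.comp contDiff_neg) (-a)
  have hderiv (t : ℝ) : ‖deriv (φ ∘ Neg.neg) t‖ₑ = ‖deriv φ (-t)‖ₑ := by
    rw [Function.comp_def, deriv_comp_neg, enorm_neg]
  have hpre : Iic (-a) = Neg.neg ⁻¹' Ici a := by simp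
  simp only [hderiv, Function.comp_apply, neg_neg, hpre] at h
  rwa [(Measure.measurePreserving_neg volume).setLIntegral_comp_preimage_emb
    (Homeomorph.neg ℝ).measurableEmbedding (fun t => ‖deriv φ t‖ₑ)] at h

theorem weighted_sub_one_le_lintegral_Ici {α : ℝ} {f : E → F} (hf : ContDiff ℝ 1 f)
    (hcs : HasCompactSupport f) {x : E} (hx : x ≠ 0) :
    weighted (α - 1) f x ≤
      ∫⁻ t in Ici (1 : ℝ), ENNReal.ofReal (t ^ (-α)) * weighted α (fderiv ℝ f) (t • x) := by
  have hxn : 0 < ‖x‖ := norm_pos_iff.2 hx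
  have hderiv (t : ℝ) : HasDerivAt (fun t : ℝ => f (t • x)) (fderiv ℝ f (t • x) x) t := by
    have hline := (hasDerivAt_id t).smul_const x
    rw [one_smul] at hline
    exact ((hf.differentiable one_ne_zero) (t • x)).hasFDerivAt.comp_hasDerivAt t hline
  have hbound := enorm_le_lintegral_Ici_enorm_deriv
    (hf.comp (contDiff_id.smul contDiff_const))
    (hcs.comp_isClosedEmbedding (isClosedEmbedding_smul_left hx)) 1
  calc weighted (α - 1) f x
      ≤ ENNReal.ofReal (‖x‖ ^ (α - 1)) * ∫⁻ t in Ici (1 : ℝ), ‖fderiv ℝ f (t • x) x‖ₑ := by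
        rw [weighted_eq_mul_enorm]
        gcongr
        simpa [Function.comp_def, (hderiv _).deriv] using hbound
    _ = ∫⁻ t in Ici (1 : ℝ), ENNReal.ofReal (‖x‖ ^ (α - 1)) * ‖fderiv ℝ f (t • x) x‖ₑ := by
        rw [lintegral_const_mul' _ _ ENNReal.ofReal_ne_top]
    _ ≤ ∫⁻ t in Ici (1 : ℝ), ENNReal.ofReal (t ^ (-α)) * weighted α (fderiv ℝ f) (t • x) := by
        refine setLIntegral_mono' measurableSet_Ici fun t ht => ?_
        have ht0 : 0 < t := one_pos.trans_le ht
        have hpow : ‖x‖ ^ (α - 1) * ‖x‖ = t ^ (-α) * ‖t • x‖ ^ α := by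
          rw [norm_smul, Real.norm_of_nonneg ht0.le, Real.mul_rpow ht0.le hxn.le, ← mul_assoc,
            ← Real.rpow_add ht0, neg_add_cancel, Real.rpow_zero, one_mul,
            ← Real.rpow_add_one hxn.ne', sub_add_cancel]
        rw [weighted_eq_mul_enorm, ← mul_assoc, ← ENNReal.ofReal_mul (by positivity), ← hpow,
          ENNReal.ofReal_mul (by positivity), ofReal_norm, mul_assoc, mul_comm ‖x‖ₑ]
        gcongr
        exact ContinuousLinearMap.le_opENorm _ _

variable [MeasurableSpace E] [BorelSpace E] [FiniteDimensional ℝ E] (μ : Measure E)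
  [μ.IsAddHaarMeasure]

theorem rearrangement_comp_smul_le (g : E → ℝ≥0∞) {c m : ℝ} (hc : 2 ^ m ≤ c) (t : ℝ≥0∞) :
    rearrangement μ (fun x => g (c • x)) t ≤ rearrangement μ g (2 ^ (finrank ℝ E * m) * t) := by
  have hc0 : 0 < c := (Real.rpow_pos_of_pos two_pos m).trans_le hc
  have hpow : ENNReal.ofReal |(c ^ finrank ℝ E)⁻¹| ≤ 2 ^ (-(finrank ℝ E * m)) := by
    rw [← ofReal_two_rpow, abs_of_pos (by positivity), Real.rpow_neg two_pos.le, mul_comm,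
      Real.rpow_mul_natCast two_pos.le]
    gcongr
  rw [rearrangement_le_iff]
  calc μ ((c • ·) ⁻¹' {x | rearrangement μ g (2 ^ (finrank ℝ E * m) * t) < g x})
      ≤ 2 ^ (-(finrank ℝ E * m)) * (2 ^ (finrank ℝ E * m) * t) := by
        rw [Measure.addHaar_preimage_smul μ hc0.ne']
        gcongr
        exact measure_rearrangement_lt_le μ g _
    _ = t := by rw [← mul_assoc, mul_comm (2 ^ (-_)), two_rpow_mul_neg, one_mul]

theorem dyadicAverage_comp_smul_le (g : E → ℝ≥0∞) {c m : ℝ} (hc : 2 ^ m ≤ c) (k : ℝ) :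
    dyadicAverage μ (fun x => g (c • x)) k ≤ dyadicAverage μ g (k + finrank ℝ E * m) := by
  rw [dyadicAverage, dyadicAverage]
  gcongr with j
  refine (rearrangement_comp_smul_le μ g hc _).trans_eq ?_
  rw [← two_rpow_add]
  ring_nf

theorem iUnion_Ico_two_pow : ⋃ j : ℕ, Ico ((2 : ℝ) ^ j) (2 ^ (j + 1)) = Ici 1 := by
  ext t
  simp only [mem_iUnion, mem_Ico, mem_Ici]
  exact ⟨fun ⟨j, hj⟩ => (one_le_pow₀ one_le_two).trans hj.1,
    fun ht => exists_nat_pow_near ht one_lt_two⟩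

theorem ofReal_rpow_neg_le_of_mem_Ico (α : ℝ) {j : ℕ} {t : ℝ}
    (ht : t ∈ Ico ((2 : ℝ) ^ j) (2 ^ (j + 1))) :
    ENNReal.ofReal (t ^ (-α)) ≤ 2 ^ |α| * 2 ^ (-(j * α)) := by
  have hj : (0 : ℝ) < 2 ^ j := by positivity
  have ht0 : 0 < t := hj.trans_le ht.1
  have h1 : 1 ≤ t / 2 ^ j := (one_le_div hj).2 ht.1
  have h2 : t / 2 ^ j ≤ 2 := (div_le_iff₀ hj).2 (by linarith [ht.2.le, pow_succ' (2 : ℝ) j])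
  rw [← ofReal_two_rpow, ← ofReal_two_rpow, ← ENNReal.ofReal_mul (by positivity)]
  refine ENNReal.ofReal_le_ofReal ?_
  calc t ^ (-α) = (t / 2 ^ j) ^ (-α) * 2 ^ (-(j * α)) := by
        rw [← mul_neg, Real.rpow_mul two_pos.le, Real.rpow_natCast,
          ← Real.mul_rpow (by positivity) hj.le, div_mul_cancel₀ _ hj.ne']
    _ ≤ 2 ^ |α| * 2 ^ (-(j * α)) := by
        gcongr
        calc (t / 2 ^ j) ^ (-α) ≤ (t / 2 ^ j) ^ |α| :=
              Real.rpow_le_rpow_of_exponent_le h1 (neg_le_abs α)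
          _ ≤ 2 ^ |α| := by gcongr

theorem setLIntegral_Ico_lintegral_comp_smul_le (α : ℝ) {g : E → ℝ≥0∞} (hg : Measurable g)
    {ν : Measure E} (hν : ν ≤ μ) {k : ℝ} (hνk : ν univ ≤ 2 ^ k) (j : ℕ) :
    ∫⁻ t in Ico ((2 : ℝ) ^ j) (2 ^ (j + 1)), ∫⁻ x, ENNReal.ofReal (t ^ (-α)) * g (t • x) ∂ν ≤
      2 ^ k * (2 ^ |α| * (2 ^ (j * (1 - α)) * dyadicAverage μ g (k + finrank ℝ E * j))) := by
  calc _ ≤ ∫⁻ t in Ico ((2 : ℝ) ^ j) (2 ^ (j + 1)), 2 ^ |α| * 2 ^ (-(j * α)) *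
        (2 ^ k * dyadicAverage μ g (k + finrank ℝ E * j)) := by
        refine setLIntegral_mono' measurableSet_Ico fun t ht => ?_
        have htj : 2 ^ (j : ℝ) ≤ t := (Real.rpow_natCast 2 j).trans_le ht.1
        rw [lintegral_const_mul' _ _ ENNReal.ofReal_ne_top]
        gcongr
        · exact ofReal_rpow_neg_le_of_mem_Ico α ht
        · refine (lintegral_le_two_rpow_mul_dyadicAverage
            (hg.comp (measurable_const_smul t)).aemeasurable hν hνk).trans ?_
          gcongr
          exact dyadicAverage_comp_smul_le μ g htj k
    _ = _ := by
        have hvol : volume (Ico ((2 : ℝ) ^ j) (2 ^ (j + 1))) = 2 ^ (j : ℝ) :=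
          mod_cast volume_Ico_two_zpow j
        rw [setLIntegral_const, hvol, mul_sub, mul_one, sub_eq_add_neg (j : ℝ),
          two_rpow_add (j : ℝ)]
        ring

theorem lintegral_weighted_sub_one_le [Nontrivial E] {α : ℝ} {f : E → F} (hf : ContDiff ℝ 1 f)
    (hcs : HasCompactSupport f) {ν : Measure E} (hν : ν ≤ μ) {k : ℝ} (hνk : ν univ ≤ 2 ^ k) :
    ∫⁻ x, weighted (α - 1) f x ∂ν ≤ 2 ^ k * (2 ^ |α| * ∑' j : ℕ, 2 ^ (j * (1 - α)) *
      dyadicAverage μ (weighted α (fderiv ℝ f)) (k + finrank ℝ E * j)) := by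
  set g := weighted α (fderiv ℝ f)
  have hg : Measurable g := measurable_weighted α (hf.continuous_fderiv one_ne_zero)
  have : IsFiniteMeasure ν := ⟨hνk.trans_lt (two_rpow_ne_top k).lt_top⟩
  have hne : ∀ᵐ x ∂ν, x ≠ 0 := (Measure.absolutelyContinuous_of_le hν).ae_le
    (measure_eq_zero_iff_ae_notMem.1 (measure_singleton 0))
  calc ∫⁻ x, weighted (α - 1) f x ∂ν
      ≤ ∫⁻ x, (∫⁻ t in Ici (1 : ℝ), ENNReal.ofReal (t ^ (-α)) * g (t • x)) ∂ν :=
        lintegral_mono_ae (hne.mono fun x hx => weighted_sub_one_le_lintegral_Ici hf hcs hx)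
    _ = ∫⁻ t in ⋃ j : ℕ, Ico ((2 : ℝ) ^ j) (2 ^ (j + 1)),
          ∫⁻ x, ENNReal.ofReal (t ^ (-α)) * g (t • x) ∂ν := by
        rw [iUnion_Ico_two_pow, lintegral_lintegral_swap]
        have hsmul : Measurable fun z : E × ℝ => z.2 • z.1 := by fun_prop
        exact ((measurable_snd.pow_const (-α)).ennreal_ofReal.mul (hg.comp hsmul)).aemeasurable
    _ ≤ ∑' j : ℕ, 2 ^ k * (2 ^ |α| *
          (2 ^ (j * (1 - α)) * dyadicAverage μ g (k + finrank ℝ E * j))) :=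
        (lintegral_iUnion_le _ _).trans
          (ENNReal.tsum_le_tsum (setLIntegral_Ico_lintegral_comp_smul_le μ α hg hν hνk))
    _ = _ := by rw [ENNReal.tsum_mul_left, ENNReal.tsum_mul_left]

theorem rearrangement_weighted_sub_one_le [Nontrivial E] {α : ℝ} {f : E → F}
    (hf : ContDiff ℝ 1 f) (hcs : HasCompactSupport f) (k : ℝ) :
    rearrangement μ (weighted (α - 1) f) (2 ^ k) ≤ 2 ^ |α| * ∑' j : ℕ, 2 ^ (j * (1 - α)) *
      dyadicAverage μ (weighted α (fderiv ℝ f)) (k + finrank ℝ E * j) :=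
  (ENNReal.mul_le_mul_iff_right (two_rpow_ne_zero k) (two_rpow_ne_top k)).1 <|
    mul_rearrangement_le_of_forall_lintegral_le (measurable_weighted (α - 1) hf.continuous)
      fun _ hν hνk => lintegral_weighted_sub_one_le μ hf hcs hν hνk.le

theorem exists_dyadicLorentz_weighted_sub_one_le [Nontrivial E] {s σ α : ℝ} (hs : s < 1)
    (hσ : 0 ≤ σ) (hα : 0 < α - 1 + finrank ℝ E * s) :
    ∃ C : ℝ≥0∞, C ≠ ∞ ∧ ∀ f : E → F, ContDiff ℝ 1 f → HasCompactSupport f →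
      dyadicLorentz μ s σ (weighted (α - 1) f) ≤
        C * dyadicLorentz μ s σ (weighted α (fderiv ℝ f)) := by
  obtain ⟨C₁, hC₁, hgeom⟩ := exists_ellNorm_tsum_geometric_le hσ hα
  obtain ⟨C₂, hC₂, havg⟩ := exists_ellNorm_dyadicAverage_le μ hs hσ
  refine ⟨2 ^ |α| * (C₁ * C₂), by finiteness [two_rpow_ne_top |α|], fun f hf hcs => ?_⟩
  set x : ℤ → ℝ≥0∞ := fun k => 2 ^ (k * s) * dyadicAverage μ (weighted α (fderiv ℝ f)) k with hx
  have hle (k : ℤ) : dyadicSeq μ s (weighted (α - 1) f) k ≤ 2 ^ |α| *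
      ∑' j : ℕ, 2 ^ (-((α - 1 + finrank ℝ E * s) * j)) * x (k + finrank ℝ E * j) := by
    refine (mul_le_mul_right (rearrangement_weighted_sub_one_le μ hf hcs k) _).trans_eq ?_
    rw [mul_left_comm, ← ENNReal.tsum_mul_left]
    refine congrArg _ (tsum_congr fun j => ?_)
    rw [hx, ← mul_assoc, ← mul_assoc, ← two_rpow_add, ← two_rpow_add]
    push_cast
    ring_nf
  calc dyadicLorentz μ s σ (weighted (α - 1) f)
      ≤ 2 ^ |α| * (C₁ * ellNorm σ x) := by
        refine (ellNorm_mono σ hle).trans ?_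
        rw [ellNorm_const_mul hσ]
        gcongr
        exact hgeom x _
    _ ≤ 2 ^ |α| * (C₁ * C₂) * dyadicLorentz μ s σ (weighted α (fderiv ℝ f)) := by
        rw [mul_assoc, mul_assoc C₁]
        gcongr
        exact havg _

theorem dyadicLorentz_inv_norm_ne_top [Nontrivial E] :
    dyadicLorentz μ (finrank ℝ E : ℝ)⁻¹ 0 (fun x => ENNReal.ofReal ‖x‖⁻¹) ≠ ∞ := by
  obtain ⟨m, hm⟩ := ENNReal.exists_nat_gt (measure_ball_lt_top (μ := μ) (x := 0) (r := 1)).ne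
  have hball : μ (Metric.ball 0 1) ≤ 2 ^ (m : ℝ) := hm.le.trans <| by
    rw [ENNReal.rpow_natCast]
    exact_mod_cast m.lt_two_pow_self.le
  have hn : (finrank ℝ E : ℝ) ≠ 0 := mod_cast finrank_pos.ne'
  have hle (k : ℤ) : rearrangement μ (fun x : E => ENNReal.ofReal ‖x‖⁻¹) (2 ^ (k : ℝ)) ≤
      2 ^ (-((k - m) * (finrank ℝ E : ℝ)⁻¹)) := by
    refine rearrangement_le_of_measure_le ?_
    set r : ℝ := 2 ^ ((k - m) * (finrank ℝ E : ℝ)⁻¹) with hr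
    have hr0 : 0 < r := by positivity
    have hsub : {x : E | 2 ^ (-((k - m) * (finrank ℝ E : ℝ)⁻¹)) < ENNReal.ofReal ‖x‖⁻¹} ⊆
        Metric.closedBall 0 r := by
      intro x hx
      rw [mem_ofPred_eq, ← ofReal_two_rpow, Real.rpow_neg two_pos.le,
        ENNReal.ofReal_lt_ofReal_iff_of_nonneg (by positivity)] at hx
      rw [mem_closedBall_zero_iff]
      exact ((inv_lt_inv₀ hr0 (inv_pos.1 ((inv_pos.2 hr0).trans hx))).1 hx).le
    calc _ ≤ μ (Metric.closedBall 0 r) := measure_mono hsub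
      _ = 2 ^ (k - m : ℝ) * μ (Metric.ball 0 1) := by
          rw [Measure.addHaar_closedBall _ _ hr0.le, hr, ← Real.rpow_mul_natCast two_pos.le,
            mul_assoc, inv_mul_cancel₀ hn, mul_one, ofReal_two_rpow]
      _ ≤ 2 ^ (k - m : ℝ) * 2 ^ (m : ℝ) := by gcongr
      _ = 2 ^ (k : ℝ) := by rw [← two_rpow_add, sub_add_cancel]
  refine ne_top_of_le_ne_top (two_rpow_ne_top (m * (finrank ℝ E : ℝ)⁻¹)) ?_
  rw [dyadicLorentz, ellNorm_zero]
  refine iSup_le fun k => (mul_le_mul_right (hle k) _).trans_eq ?_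
  rw [← two_rpow_add]
  ring_nf

end Hardy

theorem le_add_of_forall_nnreal_sub_le {a b c : ℝ≥0∞}
    (h : ∀ lo hi : NNReal, b < lo → lo < hi → hi < a → (hi - lo : ℝ≥0∞) ≤ c) : a ≤ b + c := by
  by_contra! hlt
  obtain ⟨hi, hhi, hhia⟩ := ENNReal.lt_iff_exists_nnreal_btwn.1 hlt
  obtain ⟨lo, hlo, hlohi⟩ := ENNReal.lt_iff_exists_nnreal_btwn.1 (lt_tsub_iff_right.2 hhi)
  have hsum : lo + c < hi := lt_tsub_iff_right.1 hlohi
  have hle := h lo hi hlo (by exact_mod_cast le_self_add.trans_lt hsum) hhia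
  exact hsum.not_ge (tsub_le_iff_left.1 hle)

theorem le_tsum_of_le_add {R a : ℤ → ℝ≥0∞} (hstep : ∀ k, R k ≤ R (k + 1) + a k)
    (hzero : ∀ k, ∃ N : ℕ, R (k + N) = 0) (k : ℤ) : R k ≤ ∑' i : ℕ, a (k + i) := by
  have htel (N : ℕ) : R k ≤ R (k + N) + ∑ i ∈ Finset.range N, a (k + i) := by
    induction N with
    | zero => simp
    | succ N ih =>
      calc R k ≤ R (k + N) + ∑ i ∈ Finset.range N, a (k + i) := ih
        _ ≤ R (k + N + 1) + a (k + N) + ∑ i ∈ Finset.range N, a (k + i) := by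
            gcongr
            exact hstep _
        _ = R (k + (N + 1 : ℕ)) + ∑ i ∈ Finset.range (N + 1), a (k + i) := by
            rw [Finset.sum_range_succ, Nat.cast_succ, ← add_assoc k]
            ring
  obtain ⟨N, hN⟩ := hzero k
  calc R k ≤ ∑ i ∈ Finset.range N, a (k + i) := by simpa [hN] using htel N
    _ ≤ ∑' i : ℕ, a (k + i) := ENNReal.sum_le_tsum _

section Cutoff

open Topology

theorem exists_norm_deriv_smoothTransition_le : ∃ M, ∀ t, ‖deriv Real.smoothTransition t‖ ≤ M := by
  have hcont : Continuous (deriv Real.smoothTransition) :=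
    (Real.smoothTransition.contDiff (n := 1)).continuous_deriv le_rfl
  refine HasCompactSupport.exists_bound_of_continuous
    (HasCompactSupport.intro (isCompact_Icc (a := (0 : ℝ)) (b := 1)) fun t ht => ?_) hcont
  rcases not_and_or.1 ht with h | h
  · refine (EventuallyEq.deriv_eq ?_).trans (deriv_const t (0 : ℝ))
    filter_upwards [Iio_mem_nhds (not_le.1 h)] with y hy
    exact Real.smoothTransition.zero_of_nonpos (le_of_lt hy)
  · refine (EventuallyEq.deriv_eq ?_).trans (deriv_const t (1 : ℝ))
    filter_upwards [Ioi_mem_nhds (not_le.1 h)] with y hy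
    exact Real.smoothTransition.one_of_one_le (le_of_lt hy)

theorem exists_contDiff_step : ∃ M : ℝ, ∀ lo hi : ℝ, lo < hi → ∃ g : ℝ → ℝ, ContDiff ℝ 1 g ∧
    (∀ t, g t ∈ Icc 0 1) ∧ (∀ t ≤ lo, g t = 0) ∧ (∀ t ≥ hi, g t = 1) ∧
    ∀ t, ‖deriv g t‖ ≤ M / (hi - lo) := by
  obtain ⟨M, hM⟩ := exists_norm_deriv_smoothTransition_le
  refine ⟨M, fun lo hi h => ?_⟩
  have hd : 0 < hi - lo := sub_pos.2 h
  refine ⟨fun t => Real.smoothTransition ((t - lo) / (hi - lo)),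
    Real.smoothTransition.contDiff.comp ((contDiff_id.sub contDiff_const).div_const _),
    fun t => ⟨Real.smoothTransition.nonneg _, Real.smoothTransition.le_one _⟩, fun t ht => ?_,
    fun t ht => ?_, fun t => ?_⟩
  · exact Real.smoothTransition.zero_of_nonpos
      (div_nonpos_of_nonpos_of_nonneg (sub_nonpos.2 ht) hd.le)
  · exact Real.smoothTransition.one_of_one_le
      ((one_le_div hd).2 (sub_le_sub_right ht lo))
  · have hinner : HasDerivAt (fun t => (t - lo) / (hi - lo)) (1 / (hi - lo)) t :=
      ((hasDerivAt_id t).sub_const lo).div_const _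
    have hcomp : HasDerivAt (fun t => Real.smoothTransition ((t - lo) / (hi - lo)))
        (deriv Real.smoothTransition ((t - lo) / (hi - lo)) * (1 / (hi - lo))) t :=
      ((Real.smoothTransition.contDiff (n := 1)).differentiable one_ne_zero
        _).hasDerivAt.comp t hinner
    rw [hcomp.deriv, norm_mul, norm_div, norm_one, Real.norm_of_nonneg hd.le,
      ← div_eq_mul_one_div]
    exact div_le_div_of_nonneg_right (hM _) hd.le

variable (E : Type*) [NormedAddCommGroup E] [NormedSpace ℝ E] [FiniteDimensional ℝ E]

theorem exists_contDiff_cutoff_zero : ∃ M : ℝ, ∀ ε > 0, ∃ χ : E → ℝ, ContDiff ℝ 1 χ ∧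
    (∀ x, χ x ∈ Icc 0 1) ∧ χ =ᶠ[𝓝 0] 0 ∧ (∀ x ∉ Metric.closedBall 0 (2 * ε), χ x = 1) ∧
    ∀ x, ‖fderiv ℝ χ x‖ₑ ≤
      (Metric.closedBall 0 (2 * ε)).indicator (fun _ => ENNReal.ofReal (M / ε)) x := by
  let φ : ContDiffBump (0 : E) := ⟨1, 2, one_pos, one_lt_two⟩
  obtain ⟨M, hM⟩ := (φ.hasCompactSupport.fderiv ℝ).exists_bound_of_continuous
    ((φ.contDiff (n := 1)).continuous_fderiv one_ne_zero)
  refine ⟨M, fun ε hε => ⟨fun x => 1 - φ (ε⁻¹ • x),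
    contDiff_const.sub (φ.contDiff.comp (contDiff_const_smul _)),
    fun x => ⟨sub_nonneg.2 φ.le_one, sub_le_self _ φ.nonneg⟩, ?_, fun x hx => ?_, fun x => ?_⟩⟩
  · filter_upwards [Metric.closedBall_mem_nhds 0 hε] with x hx
    have hmem : ε⁻¹ • x ∈ Metric.closedBall (0 : E) 1 := by
      rw [mem_closedBall_zero_iff] at hx ⊢
      rwa [norm_smul, norm_inv, Real.norm_of_nonneg hε.le, inv_mul_le_iff₀ hε, mul_one]
    simp [φ.one_of_mem_closedBall hmem]
  · have hdist : 2 ≤ dist (ε⁻¹ • x) 0 := by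
      rw [mem_closedBall_zero_iff, not_le] at hx
      rw [dist_zero_right, norm_smul, norm_inv, Real.norm_of_nonneg hε.le, le_inv_mul_iff₀ hε]
      linarith
    simp [φ.zero_of_le_dist hdist]
  · have hfderiv : fderiv ℝ (fun x => 1 - φ (ε⁻¹ • x)) x = -(ε⁻¹ • fderiv ℝ φ (ε⁻¹ • x)) := by
      rw [fderiv_const_sub, fderiv_comp_smul]
    rw [hfderiv, enorm_neg]
    by_cases hx : x ∈ Metric.closedBall 0 (2 * ε)
    · rw [indicator_of_mem hx, ← ofReal_norm, norm_smul, norm_inv, Real.norm_of_nonneg hε.le,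
        inv_mul_eq_div]
      gcongr
      exact hM _
    · have hnot : ε⁻¹ • x ∉ tsupport φ := by
        rw [mem_closedBall_zero_iff, not_le] at hx
        rw [φ.tsupport_eq, mem_closedBall_zero_iff, norm_smul, norm_inv,
          Real.norm_of_nonneg hε.le, not_le, lt_inv_mul_iff₀ hε]
        simpa only [mul_comm] using hx
      rw [fderiv_of_notMem_tsupport ℝ hnot, smul_zero, ← ofReal_norm, norm_zero, ofReal_zero]
      exact zero_le

end Cutoff

section Sobolev

open Topology

variable {E : Type*} [NormedAddCommGroup E] [NormedSpace ℝ E]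

/-- Functions whose truncations at positive heights are differentiable away from the origin, to
which the Sobolev inequality extends in dimension at least two, where points have zero capacity. -/
structure IsSobolevAdmissible (Φ : E → ℝ) : Prop where
  continuousOn : ContinuousOn Φ {0}ᶜ
  contDiffAt : ∀ x ≠ 0, 0 < Φ x → ContDiffAt ℝ 1 Φ x
  hasCompactSupport : HasCompactSupport Φ

namespace IsSobolevAdmissible

variable {Φ : E → ℝ}

theorem measurable [MeasurableSpace E] [BorelSpace E] (hΦ : IsSobolevAdmissible Φ) :
    Measurable Φ :=
  measurable_of_continuousOn_compl_singleton 0 hΦ.continuousOn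

theorem contDiffAt_comp_step (hΦ : IsSobolevAdmissible Φ) {lo : ℝ} (hlo : 0 < lo) {g : ℝ → ℝ}
    (hg : ContDiff ℝ 1 g) (hg0 : ∀ t ≤ lo, g t = 0) {D : ℝ} (hD : ∀ t, ‖deriv g t‖ ≤ D) {x : E}
    (hx : x ≠ 0) : ContDiffAt ℝ 1 (g ∘ Φ) x ∧ ‖fderiv ℝ (g ∘ Φ) x‖ₑ ≤
      {x | lo ≤ Φ x}.indicator (fun x => ENNReal.ofReal D * ‖fderiv ℝ Φ x‖ₑ) x := by
  rcases lt_or_ge (Φ x) lo with h | h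
  · have hzero : g ∘ Φ =ᶠ[𝓝 x] fun _ => 0 := by
      filter_upwards [(hΦ.continuousOn.continuousAt
        (isOpen_compl_singleton.mem_nhds hx)).eventually_lt_const h] with y hy
      exact hg0 _ hy.le
    refine ⟨contDiffAt_const.congr_of_eventuallyEq hzero, ?_⟩
    rw [hzero.fderiv_eq, fderiv_const_apply, ← ofReal_norm, norm_zero, ofReal_zero]
    exact zero_le
  · have hdiff := hΦ.contDiffAt x hx (hlo.trans_le h)
    refine ⟨hg.contDiffAt.comp x hdiff, ?_⟩
    have hcomp := ((hg.differentiable one_ne_zero) (Φ x)).hasDerivAt.comp_hasFDerivAt x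
      (hdiff.differentiableAt one_ne_zero).hasFDerivAt
    rw [indicator_of_mem (show x ∈ {x | lo ≤ Φ x} from h), hcomp.fderiv, enorm_smul, ← ofReal_norm]
    gcongr
    exact hD _

theorem exists_truncation (hΦ : IsSobolevAdmissible Φ) {lo : ℝ} (hlo : 0 < lo) {g : ℝ → ℝ}
    (hg : ContDiff ℝ 1 g) (hg01 : ∀ t, g t ∈ Icc 0 1) (hg0 : ∀ t ≤ lo, g t = 0) {D : ℝ}
    (hD : ∀ t, ‖deriv g t‖ ≤ D) {χ : E → ℝ} (hχ : ContDiff ℝ 1 χ) (hχ01 : ∀ x, χ x ∈ Icc 0 1)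
    (hχ0 : χ =ᶠ[𝓝 0] 0) (x : E) : ContDiffAt ℝ 1 (χ * (g ∘ Φ)) x ∧
      ‖fderiv ℝ (χ * (g ∘ Φ)) x‖ₑ ≤
        {x | lo ≤ Φ x}.indicator (fun x => ENNReal.ofReal D * ‖fderiv ℝ Φ x‖ₑ) x +
          ‖fderiv ℝ χ x‖ₑ := by
  have enorm_le_one {t : ℝ} (ht : t ∈ Icc 0 1) : ‖t‖ₑ ≤ 1 := by
    rw [Real.enorm_of_nonneg ht.1]
    exact ENNReal.ofReal_le_one.2 ht.2
  rcases eq_or_ne x 0 with rfl | hx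
  · have hzero : χ * (g ∘ Φ) =ᶠ[𝓝 0] fun _ => 0 := by
      filter_upwards [hχ0] with y hy
      simp [hy]
    refine ⟨contDiffAt_const.congr_of_eventuallyEq hzero, ?_⟩
    rw [hzero.fderiv_eq, fderiv_const_apply, ← ofReal_norm, norm_zero, ofReal_zero]
    exact zero_le
  · obtain ⟨hcomp, hbound⟩ := hΦ.contDiffAt_comp_step hlo hg hg0 hD hx
    refine ⟨hχ.contDiffAt.mul hcomp, ?_⟩
    rw [fderiv_mul (hχ.differentiable one_ne_zero x) (hcomp.differentiableAt one_ne_zero)]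
    calc ‖χ x • fderiv ℝ (g ∘ Φ) x + (g ∘ Φ) x • fderiv ℝ χ x‖ₑ
        ≤ ‖χ x‖ₑ * ‖fderiv ℝ (g ∘ Φ) x‖ₑ + ‖g (Φ x)‖ₑ * ‖fderiv ℝ χ x‖ₑ := by
          refine (enorm_add_le (χ x • fderiv ℝ (g ∘ Φ) x) _).trans_eq ?_
          rw [enorm_smul, enorm_smul, Function.comp_apply]
      _ ≤ _ := add_le_add
          ((mul_le_of_le_one_left' (enorm_le_one (hχ01 x))).trans hbound)
          (mul_le_of_le_one_left' (enorm_le_one (hg01 _)))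

end IsSobolevAdmissible

variable [FiniteDimensional ℝ E] [MeasurableSpace E] [BorelSpace E] (μ : Measure E)
  [μ.IsAddHaarMeasure]

theorem exists_measure_one_le_rpow_le_lintegral_fderiv (hn : 2 ≤ finrank ℝ E) : ∃ K ≠ ∞,
    ∀ u : E → ℝ, ContDiff ℝ 1 u → HasCompactSupport u →
      μ {x | 1 ≤ ‖u x‖ₑ} ^ (1 - (finrank ℝ E : ℝ)⁻¹) ≤ K * ∫⁻ x, ‖fderiv ℝ u x‖ₑ ∂μ := by
  have hp : NNReal.HolderConjugate (finrank ℝ E) (NNReal.conjExponent (finrank ℝ E)) :=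
    NNReal.HolderConjugate.conjExponent (by exact_mod_cast hn)
  set p := NNReal.conjExponent (finrank ℝ E : NNReal)
  have hexp : 1 - (finrank ℝ E : ℝ)⁻¹ = (p : ℝ)⁻¹ := by
    have := hp.coe.inv_add_inv_eq_one
    push_cast at this
    linarith
  refine ⟨eLpNormLESNormFDerivOneConst μ p, coe_ne_top, fun u hu hcs => ?_⟩
  have hp0 : (p : ℝ≥0∞) ≠ 0 := by simpa using hp.symm.ne_zero
  calc μ {x | 1 ≤ ‖u x‖ₑ} ^ (1 - (finrank ℝ E : ℝ)⁻¹) ≤ eLpNorm u p μ := by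
        rw [hexp, ENNReal.rpow_inv_le_iff (by exact_mod_cast hp.symm.pos)]
        simpa using mul_meas_ge_le_pow_eLpNorm' μ hp0 coe_ne_top
          hu.continuous.aestronglyMeasurable 1
    _ ≤ eLpNormLESNormFDerivOneConst μ p * eLpNorm (fderiv ℝ u) 1 μ :=
        eLpNorm_le_eLpNorm_fderiv_one μ hu hcs hp
    _ = eLpNormLESNormFDerivOneConst μ p * ∫⁻ x, ‖fderiv ℝ u x‖ₑ ∂μ := by
        rw [eLpNorm_one_eq_lintegral_enorm]

theorem tendsto_ofReal_inv_pow_mul_measure_closedBall {m : ℕ} (hm : m < finrank ℝ E) :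
    Tendsto (fun ε : ℝ => ENNReal.ofReal (ε ^ m)⁻¹ * μ (Metric.closedBall 0 (2 * ε))) (𝓝[>] 0)
      (𝓝 0) := by
  have hlim : Tendsto (fun ε : ℝ => ENNReal.ofReal (2 ^ finrank ℝ E * ε ^ (finrank ℝ E - m)) *
      μ (Metric.ball 0 1)) (𝓝[>] 0) (𝓝 0) := by
    have hcont : Continuous fun ε : ℝ => ENNReal.ofReal (2 ^ finrank ℝ E * ε ^ (finrank ℝ E - m)) *
        μ (Metric.ball 0 1) :=
      (ENNReal.continuous_mul_const measure_ball_lt_top.ne).comp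
        (ENNReal.continuous_ofReal.comp (by fun_prop))
    have hat := (hcont.tendsto 0).mono_left (nhdsWithin_le_nhds (s := Ioi 0))
    rwa [zero_pow (Nat.sub_pos_of_lt hm).ne', mul_zero, ofReal_zero, zero_mul] at hat
  refine hlim.congr' ?_
  filter_upwards [self_mem_nhdsWithin] with ε (hε : 0 < ε)
  rw [Measure.addHaar_closedBall μ _ (by positivity), ← mul_assoc,
    ← ENNReal.ofReal_mul (by positivity), mul_pow, pow_sub₀ _ hε.ne' hm.le]
  congr 2
  ring

theorem tendsto_ofReal_div_mul_measure_closedBall (hn : 1 < finrank ℝ E) (M : ℝ) :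
    Tendsto (fun ε : ℝ => ENNReal.ofReal (M / ε) * μ (Metric.closedBall 0 (2 * ε))) (𝓝[>] 0)
      (𝓝 0) := by
  have hlim := ENNReal.Tendsto.const_mul (a := ENNReal.ofReal M)
    (tendsto_ofReal_inv_pow_mul_measure_closedBall μ hn) (Or.inr ENNReal.ofReal_ne_top)
  rw [mul_zero] at hlim
  refine hlim.congr' ?_
  filter_upwards [self_mem_nhdsWithin] with ε (hε : 0 < ε)
  rw [← mul_assoc, ← ENNReal.ofReal_mul' (by positivity), pow_one, div_eq_mul_inv]

theorem tendsto_measure_closedBall_rpow (hn : 0 < finrank ℝ E) {θ : ℝ} (hθ : 0 < θ) :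
    Tendsto (fun ε : ℝ => μ (Metric.closedBall 0 (2 * ε)) ^ θ) (𝓝[>] 0) (𝓝 0) := by
  have hlim := tendsto_ofReal_inv_pow_mul_measure_closedBall μ hn
  simp only [pow_zero, inv_one, ofReal_one, one_mul] at hlim
  simpa only [ENNReal.zero_rpow_of_pos hθ] using hlim.ennrpow_const θ

theorem exists_measure_sdiff_closedBall_rpow_le (hn : 2 ≤ finrank ℝ E) : ∃ K ≠ ∞, ∃ M : ℝ,
    ∀ Φ : E → ℝ, IsSobolevAdmissible Φ → ∀ lo hi ε : ℝ, 0 < lo → lo < hi → 0 < ε →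
      μ ({x | hi < Φ x} \ Metric.closedBall 0 (2 * ε)) ^ (1 - (finrank ℝ E : ℝ)⁻¹) ≤
        K * (ENNReal.ofReal (M / (hi - lo)) * (∫⁻ x in {x | lo ≤ Φ x}, ‖fderiv ℝ Φ x‖ₑ ∂μ) +
          ENNReal.ofReal (M / ε) * μ (Metric.closedBall 0 (2 * ε))) := by
  obtain ⟨K, hK, hsob⟩ := exists_measure_one_le_rpow_le_lintegral_fderiv μ hn
  obtain ⟨M₁, hstep⟩ := exists_contDiff_step
  obtain ⟨M₂, hcutoff⟩ := exists_contDiff_cutoff_zero E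
  refine ⟨K, hK, max M₁ M₂, fun Φ hΦ lo hi ε hlo hlohi hε => ?_⟩
  obtain ⟨g, hg, hg01, hg0, hg1, hgD⟩ := hstep lo hi hlohi
  obtain ⟨χ, hχ, hχ01, hχ0, hχ1, hχD⟩ := hcutoff ε hε
  have htrunc := hΦ.exists_truncation hlo hg hg01 hg0 hgD hχ hχ01 hχ0
  have hcs : HasCompactSupport (χ * (g ∘ Φ)) :=
    (hΦ.hasCompactSupport.comp_left (hg0 0 hlo.le)).mul_left
  have hsub : {x | hi < Φ x} \ Metric.closedBall 0 (2 * ε) ⊆ {x | 1 ≤ ‖(χ * (g ∘ Φ)) x‖ₑ} :=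
    fun x ⟨hx, hxball⟩ => by
      simp [hχ1 x hxball, hg1 _ (le_of_lt hx)]
  calc μ ({x | hi < Φ x} \ Metric.closedBall 0 (2 * ε)) ^ (1 - (finrank ℝ E : ℝ)⁻¹)
      ≤ μ {x | 1 ≤ ‖(χ * (g ∘ Φ)) x‖ₑ} ^ (1 - (finrank ℝ E : ℝ)⁻¹) :=
        ENNReal.rpow_le_rpow (measure_mono hsub)
          (sub_nonneg.2 (inv_le_one_of_one_le₀ (by exact_mod_cast one_le_two.trans hn)))
    _ ≤ K * ∫⁻ x, ‖fderiv ℝ (χ * (g ∘ Φ)) x‖ₑ ∂μ :=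
        hsob _ (contDiff_iff_contDiffAt.2 fun x => (htrunc x).1) hcs
    _ ≤ K * ∫⁻ x, ({x | lo ≤ Φ x}.indicator
          (fun x => ENNReal.ofReal (M₁ / (hi - lo)) * ‖fderiv ℝ Φ x‖ₑ) x +
          (Metric.closedBall 0 (2 * ε)).indicator (fun _ => ENNReal.ofReal (M₂ / ε)) x) ∂μ :=
        mul_le_mul_right (lintegral_mono fun x => (htrunc x).2.trans (by gcongr; exact hχD x)) _
    _ = K * (ENNReal.ofReal (M₁ / (hi - lo)) * (∫⁻ x in {x | lo ≤ Φ x}, ‖fderiv ℝ Φ x‖ₑ ∂μ) +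
          ENNReal.ofReal (M₂ / ε) * μ (Metric.closedBall 0 (2 * ε))) := by
        rw [lintegral_add_right _ (measurable_const.indicator measurableSet_closedBall),
          lintegral_indicator (measurableSet_le measurable_const hΦ.measurable),
          lintegral_const_mul' _ _ ENNReal.ofReal_ne_top,
          lintegral_indicator measurableSet_closedBall, setLIntegral_const]
    _ ≤ _ := by
        gcongr
        · exact le_max_left _ _
        · exact le_max_right _ _

theorem exists_sub_mul_measure_rpow_le_setLIntegral (hn : 2 ≤ finrank ℝ E) : ∃ K ≠ ∞,
    ∀ Φ : E → ℝ, IsSobolevAdmissible Φ → ∀ lo hi : NNReal, 0 < lo → lo < hi →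
      (hi - lo : ℝ≥0∞) * μ {x | hi < Φ x} ^ (1 - (finrank ℝ E : ℝ)⁻¹) ≤
        K * ∫⁻ x in {x | lo ≤ Φ x}, ‖fderiv ℝ Φ x‖ₑ ∂μ := by
  obtain ⟨K, hK, M, hball⟩ := exists_measure_sdiff_closedBall_rpow_le μ hn
  refine ⟨K * ENNReal.ofReal M, by finiteness, fun Φ hΦ lo hi hlo hlohi => ?_⟩
  have hd : (0 : ℝ) < hi - lo := sub_pos.2 hlohi
  have hnR : (1 : ℝ) < finrank ℝ E := by exact_mod_cast hn
  have hθ0 : 0 < 1 - (finrank ℝ E : ℝ)⁻¹ := sub_pos.2 (inv_lt_one_of_one_lt₀ hnR)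
  have hθ1 : 1 - (finrank ℝ E : ℝ)⁻¹ ≤ 1 := sub_le_self _ (by positivity)
  set θ := 1 - (finrank ℝ E : ℝ)⁻¹
  set I := ∫⁻ x in {x | (lo : ℝ) ≤ Φ x}, ‖fderiv ℝ Φ x‖ₑ ∂μ
  have hmeas := tendsto_measure_closedBall_rpow (E := E) μ (by omega) hθ0
  have hgrad := tendsto_ofReal_div_mul_measure_closedBall (E := E) μ (by omega) M
  have hlevel : μ {x | (hi : ℝ) < Φ x} ^ θ ≤ K * (ENNReal.ofReal (M / (hi - lo)) * I) := by
    have hlim := (ENNReal.Tendsto.const_mul (a := K) ((tendsto_const_nhds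
      (x := ENNReal.ofReal (M / (hi - lo)) * I)).add hgrad) (Or.inr hK)).add hmeas
    rw [add_zero, add_zero] at hlim
    refine ge_of_tendsto hlim ?_
    filter_upwards [self_mem_nhdsWithin] with ε hε
    calc μ {x | (hi : ℝ) < Φ x} ^ θ
        ≤ (μ ({x | (hi : ℝ) < Φ x} \ Metric.closedBall 0 (2 * ε)) +
            μ (Metric.closedBall 0 (2 * ε))) ^ θ := by
          gcongr
          exact (measure_mono (subset_sdiff_union _ _)).trans (measure_union_le _ _)
      _ ≤ _ := (ENNReal.rpow_add_le_add_rpow _ _ hθ0.le hθ1).trans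
          (add_le_add_left (hball Φ hΦ lo hi ε hlo hlohi hε) _)
  calc (hi - lo : ℝ≥0∞) * μ {x | (hi : ℝ) < Φ x} ^ θ
      ≤ (hi - lo) * (K * (ENNReal.ofReal (M / (hi - lo)) * I)) := by gcongr
    _ = K * ENNReal.ofReal M * I := by
        rw [show ENNReal.ofReal M = (hi - lo : ℝ≥0∞) * ENNReal.ofReal (M / (hi - lo)) by
          rw [← ofReal_coe_nnreal, ← ofReal_coe_nnreal, ← ENNReal.ofReal_sub _ lo.coe_nonneg,
            ← ENNReal.ofReal_mul hd.le, mul_div_cancel₀ _ hd.ne']]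
        ring

theorem exists_rearrangement_two_rpow_le_add (hn : 2 ≤ finrank ℝ E) : ∃ K ≠ ∞,
    ∀ Φ : E → ℝ, IsSobolevAdmissible Φ → ∀ k : ℝ,
      rearrangement μ (fun x => ENNReal.ofReal (Φ x)) (2 ^ k) ≤
        rearrangement μ (fun x => ENNReal.ofReal (Φ x)) (2 ^ (k + 1)) +
          K * (2 ^ (k * (finrank ℝ E : ℝ)⁻¹) *
            dyadicAverage μ (fun x => ‖fderiv ℝ Φ x‖ₑ) (k + 1)) := by
  obtain ⟨K, hK, hlevel⟩ := exists_sub_mul_measure_rpow_le_setLIntegral μ hn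
  refine ⟨2 * K, by finiteness, fun Φ hΦ k => le_add_of_forall_nnreal_sub_le
    fun lo hi hlo hlohi hhi => ?_⟩
  set u : E → ℝ≥0∞ := fun x => ENNReal.ofReal (Φ x)
  set A := dyadicAverage μ (fun x => ‖fderiv ℝ Φ x‖ₑ) (k + 1)
  have hθ : 0 ≤ 1 - (finrank ℝ E : ℝ)⁻¹ :=
    sub_nonneg.2 (inv_le_one_of_one_le₀ (by exact_mod_cast one_le_two.trans hn))
  have hlower : 2 ^ k ≤ μ {x | (hi : ℝ) < Φ x} := by
    have hlt : 2 ^ k < μ {x | (hi : ℝ≥0∞) < u x} :=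
      not_le.1 fun h => hhi.not_ge (rearrangement_le_iff.2 h)
    simpa [u, ENNReal.coe_lt_ofReal] using hlt.le
  have hupper : μ {x | (lo : ℝ) ≤ Φ x} ≤ 2 ^ (k + 1) := by
    refine (measure_mono fun x hx => ?_).trans (measure_rearrangement_lt_le μ u _)
    exact hlo.trans_le (by simpa using ENNReal.ofReal_le_ofReal hx)
  have hgrad : ∫⁻ x in {x | (lo : ℝ) ≤ Φ x}, ‖fderiv ℝ Φ x‖ₑ ∂μ ≤ 2 ^ (k + 1) * A :=
    lintegral_le_two_rpow_mul_dyadicAverage (measurable_fderiv ℝ Φ).enorm.aemeasurable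
      Measure.restrict_le_self (by rwa [Measure.restrict_apply_univ])
  calc (hi - lo : ℝ≥0∞)
      ≤ K * (∫⁻ x in {x | (lo : ℝ) ≤ Φ x}, ‖fderiv ℝ Φ x‖ₑ ∂μ) *
          2 ^ (-(k * (1 - (finrank ℝ E : ℝ)⁻¹))) := by
        refine le_mul_two_rpow_neg (le_trans ?_ (hlevel Φ hΦ lo hi
          (by exact_mod_cast zero_le.trans_lt hlo) hlohi))
        rw [ENNReal.rpow_mul]
        gcongr
    _ ≤ K * (2 ^ (k + 1) * A) * 2 ^ (-(k * (1 - (finrank ℝ E : ℝ)⁻¹))) := by gcongr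
    _ = 2 * K * (2 ^ (k * (finrank ℝ E : ℝ)⁻¹) * A) := by
        rw [show k * (finrank ℝ E : ℝ)⁻¹ = k + -(k * (1 - (finrank ℝ E : ℝ)⁻¹)) by ring,
          two_rpow_add k 1, two_rpow_add k, ENNReal.rpow_one]
        ring

theorem exists_dyadicSeq_sub_inv_le_tsum (hn : 2 ≤ finrank ℝ E) (s : ℝ) : ∃ K ≠ ∞,
    ∀ Φ : E → ℝ, IsSobolevAdmissible Φ → ∀ k : ℤ,
      dyadicSeq μ (s - (finrank ℝ E : ℝ)⁻¹) (fun x => ENNReal.ofReal (Φ x)) k ≤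
        K * ∑' j : ℕ, 2 ^ (-((s - (finrank ℝ E : ℝ)⁻¹) * j)) *
          (2 ^ (((k + (j + 1) : ℤ) : ℝ) * s) *
            dyadicAverage μ (fun x => ‖fderiv ℝ Φ x‖ₑ) ((k + (j + 1) : ℤ) : ℝ)) := by
  obtain ⟨K, hK, hstep⟩ := exists_rearrangement_two_rpow_le_add μ hn
  refine ⟨K * 2 ^ (-s), by finiteness [two_rpow_ne_top (-s)], fun Φ hΦ k => ?_⟩
  set u : E → ℝ≥0∞ := fun x => ENNReal.ofReal (Φ x)
  set A := dyadicAverage μ (fun x => ‖fderiv ℝ Φ x‖ₑ)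
  have hfin : μ {x | 0 < u x} ≠ ∞ := by
    refine ((measure_mono fun x hx => subset_tsupport Φ ?_).trans_lt
      hΦ.hasCompactSupport.isCompact.measure_lt_top).ne
    exact (ENNReal.ofReal_pos.1 hx).ne'
  have htel := le_tsum_of_le_add (R := fun k : ℤ => rearrangement μ u (2 ^ (k : ℝ)))
    (fun k => by simpa using hstep Φ hΦ k) (exists_rearrangement_two_rpow_eq_zero hfin) k
  rw [dyadicSeq, ← ENNReal.tsum_mul_left]
  refine (mul_le_mul_right htel _).trans_eq ?_
  rw [← ENNReal.tsum_mul_left]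
  refine tsum_congr fun j => ?_
  have hpow : (2 : ℝ≥0∞) ^ (k * (s - (finrank ℝ E : ℝ)⁻¹)) *
        2 ^ ((k + j : ℝ) * (finrank ℝ E : ℝ)⁻¹) =
      2 ^ (-s) * 2 ^ (-((s - (finrank ℝ E : ℝ)⁻¹) * j)) * 2 ^ ((k + (j + 1) : ℝ) * s) := by
    rw [← two_rpow_add, ← two_rpow_add, ← two_rpow_add]
    congr 1
    ring
  push_cast
  rw [← add_assoc (k : ℝ)] at hpow ⊢
  calc _ = K * (2 ^ (k * (s - (finrank ℝ E : ℝ)⁻¹)) * 2 ^ ((k + j : ℝ) * (finrank ℝ E : ℝ)⁻¹)) *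
          A (k + j + 1) := by ring
    _ = _ := by
      rw [hpow]
      ring

theorem exists_dyadicLorentz_sub_inv_le_dyadicLorentz_fderiv (hn : 2 ≤ finrank ℝ E) {s σ : ℝ}
    (hs : (finrank ℝ E : ℝ)⁻¹ < s) (hs1 : s < 1) (hσ : 0 ≤ σ) : ∃ C ≠ ∞, ∀ Φ : E → ℝ,
      IsSobolevAdmissible Φ →
        dyadicLorentz μ (s - (finrank ℝ E : ℝ)⁻¹) σ (fun x => ENNReal.ofReal (Φ x)) ≤
          C * dyadicLorentz μ s σ (fun x => ‖fderiv ℝ Φ x‖ₑ) := by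
  obtain ⟨K, hK, hsum⟩ := exists_dyadicSeq_sub_inv_le_tsum μ hn s
  obtain ⟨C₁, hC₁, hgeom⟩ := exists_ellNorm_tsum_geometric_le hσ (sub_pos.2 hs)
  obtain ⟨C₂, hC₂, havg⟩ := exists_ellNorm_dyadicAverage_le μ hs1 hσ
  refine ⟨K * (C₁ * C₂), by finiteness, fun Φ hΦ => ?_⟩
  refine (ellNorm_mono σ (hsum Φ hΦ)).trans ?_
  rw [ellNorm_const_mul hσ, mul_assoc K, mul_assoc C₁]
  gcongr
  exact (hgeom (fun k => 2 ^ ((k : ℝ) * s) *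
    dyadicAverage μ (fun x => ‖fderiv ℝ Φ x‖ₑ) k) (fun j => j + 1)).trans
      (mul_le_mul_right (havg _) _)

end Sobolev

section WeightedPow

variable {E F : Type*} [NormedAddCommGroup E] [NormedAddCommGroup F]

/-- The function `|x|^e |f x|^κ`, to which the Sobolev inequality is applied. -/
noncomputable def weightedPow (e κ : ℝ) (f : E → F) (x : E) : ℝ :=
  ‖x‖ ^ e * ‖f x‖ ^ κ

theorem weightedPow_nonneg (e κ : ℝ) (f : E → F) (x : E) : 0 ≤ weightedPow e κ f x := by
  unfold weightedPow
  positivity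

theorem weighted_rpow_mul_inv_norm_rpow (β c : ℝ) {b : ℝ} (hb : 0 ≤ b) (f : E → F) {x : E}
    (hx : x ≠ 0) : weighted (-β) f x ^ b * ENNReal.ofReal ‖x‖⁻¹ ^ c =
      ENNReal.ofReal (‖x‖ ^ (-(b * β) - c) * ‖f x‖ ^ b) := by
  have hxn : 0 < ‖x‖ := norm_pos_iff.2 hx
  rw [weighted, ENNReal.ofReal_rpow_of_nonneg (by positivity) hb,
    ENNReal.ofReal_rpow_of_pos (by positivity), ← ENNReal.ofReal_mul (by positivity),
    Real.mul_rpow (by positivity) (by positivity), ← Real.rpow_mul hxn.le, Real.inv_rpow hxn.le,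
    ← Real.rpow_neg hxn.le, mul_right_comm, ← Real.rpow_add hxn]
  ring_nf

theorem weighted_le_weightedPow_rpow_mul {α β γ e b A B D : ℝ} (hA : 0 ≤ A) (hB : 0 ≤ B)
    (hD : 0 ≤ D) (hdeg : A * (1 + b) + B + D = 1)
    (hweight : A * e + B * (α - 1) - D * β = -γ) (f : E → F) {x : E} (hx : x ≠ 0) :
    weighted (-γ) f x ≤ ENNReal.ofReal (weightedPow e (1 + b) f x) ^ A *
      (weighted (α - 1) f x ^ B * weighted (-β) f x ^ D) := by
  have hxn : 0 < ‖x‖ := norm_pos_iff.2 hx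
  rcases eq_or_ne (f x) 0 with hfx | hfx
  · simp [weighted, hfx]
  have hfn : 0 < ‖f x‖ := norm_pos_iff.2 hfx
  have hx_pow : ‖x‖ ^ (-γ) = ‖x‖ ^ (e * A) * (‖x‖ ^ ((α - 1) * B) * ‖x‖ ^ (-β * D)) := by
    rw [← Real.rpow_add hxn, ← Real.rpow_add hxn, ← hweight]
    ring_nf
  have hf_pow : ‖f x‖ = ‖f x‖ ^ ((1 + b) * A) * (‖f x‖ ^ B * ‖f x‖ ^ D) := by
    rw [← Real.rpow_add hfn, ← Real.rpow_add hfn, mul_comm (1 + b), ← add_assoc, hdeg,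
      Real.rpow_one]
  rw [weighted, weighted, weighted, weightedPow, ENNReal.ofReal_rpow_of_nonneg (by positivity) hA,
    ENNReal.ofReal_rpow_of_nonneg (by positivity) hB,
    ENNReal.ofReal_rpow_of_nonneg (by positivity) hD, ← ENNReal.ofReal_mul (by positivity),
    ← ENNReal.ofReal_mul (by positivity)]
  refine ENNReal.ofReal_le_ofReal (le_of_eq ?_)
  simp only [Real.mul_rpow, Real.rpow_nonneg, norm_nonneg, ← Real.rpow_mul]
  rw [hx_pow]
  nth_rw 1 [hf_pow]
  ring

end WeightedPow

section WeightedPowCalculus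

variable {E F : Type*} [NormedAddCommGroup E] [InnerProductSpace ℝ E] [NormedAddCommGroup F]
  [InnerProductSpace ℝ F]

theorem norm_fderiv_norm_comp_rpow_le {g : E → F} {x : E}
    (hg : DifferentiableAt ℝ g x) (hgx : g x ≠ 0) (κ : ℝ) :
    ‖fderiv ℝ (fun y => ‖g y‖ ^ κ) x‖ ≤ |κ| * ‖g x‖ ^ (κ - 1) * ‖fderiv ℝ g x‖ := by
  have hnorm : DifferentiableAt ℝ (fun y : F => ‖y‖) (g x) := differentiableAt_id.norm ℝ hgx
  have hnorm_le : ‖fderiv ℝ (fun y : F => ‖y‖) (g x)‖ ≤ 1 := by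
    simpa only [NNReal.coe_one] using
      norm_fderiv_le_of_lipschitz ℝ (x₀ := g x) (lipschitzWith_one_norm (E := F))
  have hcomp : HasFDerivAt (fun y => ‖g y‖ ^ κ) _ x :=
    (hnorm.hasFDerivAt.comp x hg.hasFDerivAt).rpow_const (Or.inl (norm_ne_zero_iff.2 hgx))
  rw [hcomp.fderiv, norm_smul, norm_mul, Real.norm_eq_abs, Function.comp_apply,
    Real.norm_of_nonneg (by positivity)]
  gcongr
  exact (ContinuousLinearMap.opNorm_comp_le _ _).trans
    (mul_le_of_le_one_left (norm_nonneg _) hnorm_le)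

theorem isSobolevAdmissible_weightedPow (e : ℝ) {κ : ℝ} (hκ : 0 < κ) {f : E → F}
    (hf : ContDiff ℝ 1 f) (hcs : HasCompactSupport f) :
    IsSobolevAdmissible (weightedPow e κ f) where
  continuousOn := (continuous_norm.continuousOn.rpow_const fun _ hx =>
    Or.inl (norm_ne_zero_iff.2 hx)).mul (hf.continuous.norm.rpow_const fun _ =>
      Or.inr hκ.le).continuousOn
  contDiffAt x hx hpos := by
    have hfx : f x ≠ 0 := fun h => by simp [weightedPow, h, Real.zero_rpow hκ.ne'] at hpos
    exact ((contDiffAt_norm ℝ hx).rpow_const_of_ne (norm_ne_zero_iff.2 hx)).mul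
      ((hf.contDiffAt.norm ℝ hfx).rpow_const_of_ne (norm_ne_zero_iff.2 hfx))
  hasCompactSupport := hcs.mono fun x hx hfx => hx (by simp [weightedPow, hfx, hκ.ne'])

theorem norm_fderiv_weightedPow_le (e : ℝ) {κ : ℝ} (hκ : 0 < κ) {f : E → F} {x : E}
    (hf : DifferentiableAt ℝ f x) (hx : x ≠ 0) :
    ‖fderiv ℝ (weightedPow e κ f) x‖ ≤ ‖x‖ ^ e * (κ * ‖f x‖ ^ (κ - 1) * ‖fderiv ℝ f x‖) +
      ‖f x‖ ^ κ * (|e| * ‖x‖ ^ (e - 1)) := by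
  by_cases hfx : f x = 0
  · have hmin : IsLocalMin (weightedPow e κ f) x := Eventually.of_forall fun y => by
      simpa [weightedPow, hfx, hκ.ne'] using weightedPow_nonneg e κ f y
    rw [hmin.fderiv_eq_zero, norm_zero]
    positivity
  · have hpow_x : DifferentiableAt ℝ (fun y : E => ‖y‖ ^ e) x :=
      (differentiableAt_id.norm ℝ hx).rpow_const (Or.inl (norm_ne_zero_iff.2 hx))
    have hpow_f : DifferentiableAt ℝ (fun y => ‖f y‖ ^ κ) x :=
      (hf.norm ℝ hfx).rpow_const (Or.inl (norm_ne_zero_iff.2 hfx))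
    have hx_le := norm_fderiv_norm_comp_rpow_le (differentiableAt_id (𝕜 := ℝ)) hx e
    have hf_le := norm_fderiv_norm_comp_rpow_le hf hfx κ
    rw [abs_of_pos hκ] at hf_le
    have hid : ‖fderiv ℝ (id : E → E) x‖ ≤ 1 := by
      rw [fderiv_id]
      exact ContinuousLinearMap.norm_id_le
    have hprod : fderiv ℝ (weightedPow e κ f) x = _ := fderiv_mul hpow_x hpow_f
    rw [hprod]
    refine (norm_add_le _ _).trans ?_
    rw [norm_smul, norm_smul, Real.norm_of_nonneg (by positivity),
      Real.norm_of_nonneg (by positivity)]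
    gcongr
    exact hx_le.trans (mul_le_of_le_one_right (by positivity) hid)

theorem enorm_fderiv_weightedPow_le (α β c : ℝ) {b : ℝ} (hb : 0 ≤ b) {f : E → F} {x : E}
    (hf : DifferentiableAt ℝ f x) (hx : x ≠ 0) :
    ‖fderiv ℝ (weightedPow (α - c - b * β) (1 + b) f) x‖ₑ ≤
      ENNReal.ofReal (|α - c - b * β| + (1 + b)) *
        ((weighted α (fderiv ℝ f) x + weighted (α - 1) f x) *
          (weighted (-β) f x ^ b * ENNReal.ofReal ‖x‖⁻¹ ^ c)) := by
  have hxn : 0 < ‖x‖ := norm_pos_iff.2 hx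
  set e := α - c - b * β with he
  set Q := ‖x‖ ^ (-(b * β) - c) * ‖f x‖ ^ b with hQ
  have hx_pow (η : ℝ) : ‖x‖ ^ (e - η) = ‖x‖ ^ (α - η) * ‖x‖ ^ (-(b * β) - c) := by
    rw [← Real.rpow_add hxn, he]
    ring_nf
  have hf_pow : ‖f x‖ ^ (1 + b) = ‖f x‖ * ‖f x‖ ^ b := by
    rw [Real.rpow_add_of_nonneg (norm_nonneg _) zero_le_one hb, Real.rpow_one]
  rw [weighted_rpow_mul_inv_norm_rpow β c hb f hx, weighted, weighted,
    ← ENNReal.ofReal_add (by positivity) (by positivity), ← ENNReal.ofReal_mul (by positivity),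
    ← ENNReal.ofReal_mul (by positivity), ← ofReal_norm]
  refine ENNReal.ofReal_le_ofReal ?_
  calc ‖fderiv ℝ (weightedPow e (1 + b) f) x‖
      ≤ _ := norm_fderiv_weightedPow_le e (by linarith) hf hx
    _ = (1 + b) * (‖x‖ ^ α * ‖fderiv ℝ f x‖ * Q) + |e| * (‖x‖ ^ (α - 1) * ‖f x‖ * Q) := by
        have hx_pow_zero := hx_pow 0
        rw [sub_zero, sub_zero] at hx_pow_zero
        rw [hx_pow_zero, hx_pow 1, hf_pow, hQ, add_sub_cancel_left]
        ring
    _ ≤ (|e| + (1 + b)) * (‖x‖ ^ α * ‖fderiv ℝ f x‖ * Q) +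
          (|e| + (1 + b)) * (‖x‖ ^ (α - 1) * ‖f x‖ * Q) := by
        refine add_le_add (mul_le_mul_of_nonneg_right ?_ (by positivity))
          (mul_le_mul_of_nonneg_right ?_ (by positivity))
        · exact le_add_of_nonneg_left (abs_nonneg e)
        · exact le_add_of_nonneg_right (by positivity)
    _ = _ := by ring

end WeightedPowCalculus

section CaffarelliKohnNirenberg

theorem exists_mem_Ioo_add_mul {a s w N : ℝ} (ha : 0 < a) (hs : s < 1) (hN : N < 1)
    (hw : a * N < a * s + w) : ∃ τ : ℝ, 0 ≤ τ ∧ a * τ < 1 ∧ s + τ * w ∈ Ioo N 1 := by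
  rcases lt_or_ge N s with hNs | hsN
  · exact ⟨0, le_rfl, by simp, by simpa using ⟨hNs, hs⟩⟩
  have hw0 : 0 < w := by nlinarith
  obtain ⟨S, hNS, hS⟩ : ∃ S, N < S ∧ S < min 1 (s + w / a) := by
    refine exists_between (lt_min hN ?_)
    rw [← sub_lt_iff_lt_add', lt_div_iff₀ ha]
    linarith
  obtain ⟨hS1, hSw⟩ := lt_min_iff.1 hS
  refine ⟨(S - s) / w, div_nonneg (by linarith) hw0.le, ?_, ?_⟩
  · rw [← mul_div_assoc, div_lt_one hw0, mul_comm, ← lt_div_iff₀ ha]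
    linarith
  · rw [div_mul_cancel₀ _ hw0.ne', add_sub_cancel]
    exact ⟨hNS, hS1⟩

theorem exists_interpolation_exponents {a Δ s t N : ℝ} (ha0 : 0 < a) (ha1 : a ≤ 1) (hΔ0 : 0 ≤ Δ)
    (hΔa : Δ ≤ a) (hs : s < 1) (hN : N < 1) (hpos : 0 < a * s + (1 - a) * t - (a - Δ) * N) :
    ∃ b c A B D : ℝ, (0 ≤ b ∧ 0 ≤ c ∧ 0 ≤ A ∧ 0 ≤ B ∧ 0 ≤ D) ∧
      (A + B = a ∧ A * b + D = 1 - a ∧ A * c + B = Δ) ∧ s + (b * t + c * N) ∈ Ioo N 1 := by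
  obtain ⟨τ, hτ0, haτ, hτ⟩ :=
    exists_mem_Ioo_add_mul (w := (1 - a) * t + Δ * N) ha0 hs hN (by linarith)
  have hΔτ : 0 < 1 - Δ * τ := by nlinarith
  have : 0 ≤ 1 - a := sub_nonneg.2 ha1
  set A := (a - Δ) / (1 - Δ * τ) with hA
  have hA0 : 0 ≤ A := div_nonneg (sub_nonneg.2 hΔa) hΔτ.le
  have hA_mul : A * (1 - Δ * τ) = a - Δ := div_mul_cancel₀ _ hΔτ.ne'
  have hAτ : 0 ≤ 1 - A * τ := by
    rw [hA, div_mul_eq_mul_div, sub_nonneg, div_le_one hΔτ]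
    linarith
  refine ⟨τ * (1 - a), τ * Δ, A, Δ * (1 - A * τ), (1 - a) * (1 - A * τ),
    ⟨by positivity, by positivity, hA0, by positivity, by positivity⟩,
    ⟨by linarith, by ring, by ring⟩, ?_⟩
  convert hτ using 1
  ring

variable {E F : Type*} [NormedAddCommGroup E] [InnerProductSpace ℝ E] [FiniteDimensional ℝ E]
  [MeasurableSpace E] [BorelSpace E] [NormedAddCommGroup F] [InnerProductSpace ℝ F]
  (μ : Measure E) [μ.IsAddHaarMeasure]

theorem exists_dyadicLorentz_fderiv_weightedPow_le [Nontrivial E] {s t σ τ α β b c : ℝ}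
    (hs : s < 1) (hα : 0 < α - 1 + finrank ℝ E * s) (hσ : 0 ≤ σ) (hτ : 0 ≤ τ) (hb : 0 ≤ b)
    (hc : 0 ≤ c) : ∃ C ≠ ∞, ∀ f : E → F, ContDiff ℝ 1 f → HasCompactSupport f →
      dyadicLorentz μ (s + (b * t + c * (finrank ℝ E : ℝ)⁻¹)) (σ + b * τ)
          (fun x => ‖fderiv ℝ (weightedPow (α - c - b * β) (1 + b) f) x‖ₑ) ≤
        C * (dyadicLorentz μ s σ (weighted α (fderiv ℝ f)) *
          dyadicLorentz μ t τ (weighted (-β) f) ^ b) := by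
  obtain ⟨C, hC, hardy⟩ := exists_dyadicLorentz_weighted_sub_one_le (F := F) μ hs hσ hα
  set S := b * t + c * (finrank ℝ E : ℝ)⁻¹
  set K := ENNReal.ofReal (|α - c - b * β| + (1 + b))
  set W := dyadicLorentz μ (finrank ℝ E : ℝ)⁻¹ 0 (fun x : E => ENNReal.ofReal ‖x‖⁻¹)
  have hW : W ≠ ∞ := dyadicLorentz_inv_norm_ne_top μ
  set L := LpAddConst (ENNReal.ofReal σ)⁻¹
  have hL : L ≠ ∞ := (LpAddConst_lt_top _).ne
  refine ⟨K * (2 ^ (s + S) * (2 ^ s * L * (1 + C) * (2 ^ S * W ^ c))), ?_, fun f hf hcs => ?_⟩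
  · finiteness [two_rpow_ne_top (s + S), two_rpow_ne_top s, two_rpow_ne_top S]
  set X := dyadicLorentz μ s σ (weighted α (fderiv ℝ f))
  set Y := dyadicLorentz μ t τ (weighted (-β) f)
  set u : E → ℝ≥0∞ := weighted α (fderiv ℝ f) + weighted (α - 1) f
  set v : E → ℝ≥0∞ := fun x => weighted (-β) f x ^ b * ENNReal.ofReal ‖x‖⁻¹ ^ c
  have hu : dyadicLorentz μ s σ u ≤ 2 ^ s * L * (1 + C) * X := by
    rw [mul_assoc _ (1 + C), one_add_mul]
    refine (dyadicLorentz_add_le s hσ _ _).trans ?_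
    gcongr
    exact hardy f hf hcs
  have hv : dyadicLorentz μ S (b * τ) v ≤ 2 ^ S * (Y ^ b * W ^ c) := by
    have h := dyadicLorentz_rpow_mul_rpow_le (μ := μ) t (finrank ℝ E : ℝ)⁻¹ hτ le_rfl hb hc
      (weighted (-β) f) (fun x : E => ENNReal.ofReal ‖x‖⁻¹)
    rwa [mul_zero, add_zero] at h
  have hgrad : (fun x => ‖fderiv ℝ (weightedPow (α - c - b * β) (1 + b) f) x‖ₑ) ≤ᵐ[μ]
      fun x => K * (u * v) x := by
    filter_upwards [μ.ae_ne 0] with x hx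
    exact enorm_fderiv_weightedPow_le α β c hb (hf.differentiable one_ne_zero x) hx
  calc _ ≤ K * dyadicLorentz μ (s + S) (σ + b * τ) (u * v) :=
        (dyadicLorentz_mono_ae _ _ hgrad).trans
          (dyadicLorentz_const_mul_le _ (by positivity) K _)
    _ ≤ K * (2 ^ (s + S) * (2 ^ s * L * (1 + C) * X * (2 ^ S * (Y ^ b * W ^ c)))) := by
        gcongr
        refine (dyadicLorentz_mul_le s S hσ (by positivity) u v).trans ?_
        gcongr
    _ = _ := by ring

theorem exists_dyadicLorentz_weightedPow_le (hn : 2 ≤ finrank ℝ E) {s t σ τ α β b c : ℝ}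
    (hs : s < 1) (hα : 0 < α - 1 + finrank ℝ E * s) (hσ : 0 ≤ σ) (hτ : 0 ≤ τ) (hb : 0 ≤ b)
    (hc : 0 ≤ c)
    (hS : s + (b * t + c * (finrank ℝ E : ℝ)⁻¹) ∈ Ioo (finrank ℝ E : ℝ)⁻¹ 1) :
    ∃ C ≠ ∞, ∀ f : E → F, ContDiff ℝ 1 f → HasCompactSupport f →
      dyadicLorentz μ (s + (b * t + c * (finrank ℝ E : ℝ)⁻¹) - (finrank ℝ E : ℝ)⁻¹) (σ + b * τ)
          (fun x => ENNReal.ofReal (weightedPow (α - c - b * β) (1 + b) f x)) ≤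
        C * (dyadicLorentz μ s σ (weighted α (fderiv ℝ f)) *
          dyadicLorentz μ t τ (weighted (-β) f) ^ b) := by
  have : Nontrivial E := nontrivial_of_finrank_pos (R := ℝ) (by lia)
  obtain ⟨C₁, hC₁, hsobolev⟩ :=
    exists_dyadicLorentz_sub_inv_le_dyadicLorentz_fderiv μ hn hS.1 hS.2 (σ := σ + b * τ)
      (by positivity)
  obtain ⟨C₂, hC₂, hgrad⟩ := exists_dyadicLorentz_fderiv_weightedPow_le (F := F) μ (t := t)
    (β := β) hs hα hσ hτ hb hc
  refine ⟨C₁ * C₂, by finiteness, fun f hf hcs => ?_⟩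
  rw [mul_assoc]
  exact (hsobolev _ (isSobolevAdmissible_weightedPow _ (by positivity) hf hcs)).trans
    (mul_le_mul_right (hgrad f hf hcs) C₁)

theorem exists_dyadicLorentz_weighted_le_of_exponents (hn : 2 ≤ finrank ℝ E)
    {s t σ τ α β γ b c A B D : ℝ} (hs : s < 1) (hα : 0 < α - 1 + finrank ℝ E * s) (hσ : 0 ≤ σ)
    (hτ : 0 ≤ τ) (hb : 0 ≤ b) (hc : 0 ≤ c) (hA : 0 ≤ A) (hB : 0 ≤ B) (hD : 0 ≤ D)
    (hdeg : A * (1 + b) + B + D = 1)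
    (hweight : A * (α - c - b * β) + B * (α - 1) - D * β = -γ)
    (hS : s + (b * t + c * (finrank ℝ E : ℝ)⁻¹) ∈ Ioo (finrank ℝ E : ℝ)⁻¹ 1) :
    ∃ C ≠ ∞, ∀ f : E → F, ContDiff ℝ 1 f → HasCompactSupport f →
      dyadicLorentz μ ((A + B) * s + (A * b + D) * t - A * (1 - c) * (finrank ℝ E : ℝ)⁻¹)
          ((A + B) * σ + (A * b + D) * τ) (weighted (-γ) f) ≤
        C * (dyadicLorentz μ s σ (weighted α (fderiv ℝ f)) ^ (A + B) *
          dyadicLorentz μ t τ (weighted (-β) f) ^ (A * b + D)) := by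
  have : Nontrivial E := nontrivial_of_finrank_pos (R := ℝ) (by lia)
  obtain ⟨K, hK, hpow⟩ := exists_dyadicLorentz_weightedPow_le (F := F) μ (β := β) hn hs hα hσ hτ
    hb hc hS
  obtain ⟨H, hH, hardy⟩ := exists_dyadicLorentz_weighted_sub_one_le (F := F) μ hs hσ hα
  set S := s + (b * t + c * (finrank ℝ E : ℝ)⁻¹) - (finrank ℝ E : ℝ)⁻¹ with hS_def
  have hs_eq : (A + B) * s + (A * b + D) * t - A * (1 - c) * (finrank ℝ E : ℝ)⁻¹ =
      A * S + (B * s + D * t) := by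
    rw [hS_def]
    ring
  have hσ_eq : (A + B) * σ + (A * b + D) * τ = A * (σ + b * τ) + (B * σ + D * τ) := by ring
  rw [hs_eq, hσ_eq]
  set P : ℝ≥0∞ := 2 ^ (A * S + (B * s + D * t)) * 2 ^ (B * s + D * t)
  have hP : P ≠ ∞ := ENNReal.mul_ne_top (two_rpow_ne_top _) (two_rpow_ne_top _)
  refine ⟨P * (K ^ A * H ^ B), by finiteness, fun f hf hcs => ?_⟩
  set X := dyadicLorentz μ s σ (weighted α (fderiv ℝ f))
  set Y := dyadicLorentz μ t τ (weighted (-β) f)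
  have hle : weighted (-γ) f ≤ᵐ[μ] fun x =>
      ENNReal.ofReal (weightedPow (α - c - b * β) (1 + b) f x) ^ A *
        (weighted (α - 1) f x ^ B * weighted (-β) f x ^ D) := by
    filter_upwards [μ.ae_ne 0] with x hx
    exact weighted_le_weightedPow_rpow_mul hA hB hD hdeg hweight f hx
  calc dyadicLorentz μ (A * S + (B * s + D * t)) (A * (σ + b * τ) + (B * σ + D * τ))
        (weighted (-γ) f)
      ≤ P * ((K * (X * Y ^ b)) ^ A * ((H * X) ^ B * Y ^ D)) := by
        refine (dyadicLorentz_mono_ae _ _ hle).trans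
          ((dyadicLorentz_rpow_mul_rpow_mul_rpow_le S s t (by positivity) hσ hτ hA hB hD
            _ _ _).trans ?_)
        gcongr
        · exact hpow f hf hcs
        · exact hardy f hf hcs
    _ = _ := by
        rw [ENNReal.rpow_add_of_nonneg A B hA hB,
          ENNReal.rpow_add_of_nonneg (A * b) D (by positivity) hD, mul_comm A b, ENNReal.rpow_mul,
          ENNReal.mul_rpow_of_nonneg _ _ hA, ENNReal.mul_rpow_of_nonneg _ _ hA,
          ENNReal.mul_rpow_of_nonneg _ _ hB]
        ring

theorem exists_dyadicLorentz_weighted_le (hn : 2 ≤ finrank ℝ E) {s t σ τ α β γ a : ℝ}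
    (hs : s < 1) (hα : 0 < α - 1 + finrank ℝ E * s) (hσ : 0 ≤ σ) (hτ : 0 ≤ τ) (ha0 : 0 < a)
    (ha1 : a ≤ 1) (hΔ0 : 0 ≤ γ + a * α - (1 - a) * β) (hΔa : γ + a * α - (1 - a) * β ≤ a)
    (hpos : 0 < a * s + (1 - a) * t - (a - (γ + a * α - (1 - a) * β)) * (finrank ℝ E : ℝ)⁻¹) :
    ∃ C ≠ ∞, ∀ f : E → F, ContDiff ℝ 1 f → HasCompactSupport f →
      dyadicLorentz μ
          (a * s + (1 - a) * t - (a - (γ + a * α - (1 - a) * β)) * (finrank ℝ E : ℝ)⁻¹)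
          (a * σ + (1 - a) * τ) (weighted (-γ) f) ≤
        C * (dyadicLorentz μ s σ (weighted α (fderiv ℝ f)) ^ a *
          dyadicLorentz μ t τ (weighted (-β) f) ^ (1 - a)) := by
  have hN : (finrank ℝ E : ℝ)⁻¹ < 1 := inv_lt_one_of_one_lt₀ (by exact_mod_cast hn)
  obtain ⟨b, c, A, B, D, ⟨hb, hc, hA, hB, hD⟩, ⟨hAB, hAD, hAc⟩, hS⟩ :=
    exists_interpolation_exponents ha0 ha1 hΔ0 hΔa hs hN hpos
  have hgap : A * (1 - c) = a - (γ + a * α - (1 - a) * β) := by linarith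
  have hweight : A * (α - c - b * β) + B * (α - 1) - D * β = -γ := by
    linear_combination α * hAB - β * hAD - hAc
  have hmain := exists_dyadicLorentz_weighted_le_of_exponents (F := F) μ hn hs hα hσ hτ hb hc hA hB
    hD (by linarith) hweight hS
  rwa [hgap, hAB, hAD] at hmain

end CaffarelliKohnNirenberg

theorem lorentz_mul_norm {X : Type*} [MeasurableSpace X] (μ : Measure X) (p q : ℝ≥0∞)
    (w f : X → ℝ) : lorentz μ p q (fun x => w x * ‖f x‖) = lorentz μ p q (fun x => w x * f x) := by
  simp only [lorentz, rearr, distribFn, abs_mul, Real.norm_eq_abs, abs_abs]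

theorem ofReal_abs_eq_weighted {E F : Type*} [NormedAddCommGroup E] [NormedAddCommGroup F] (α : ℝ)
    (g : E → F) : (fun x => ENNReal.ofReal |‖x‖ ^ α * ‖g x‖|) = weighted α g := by
  funext x
  rw [weighted, abs_of_nonneg (by positivity)]

theorem inv_toReal_eq_of_one_div_eq {a : ℝ} (ha0 : 0 ≤ a) (ha1 : a ≤ 1) {q₁ q₂ q₃ : ℝ≥0∞}
    (hq₂ : q₂ ≠ 0) (hq₃ : q₃ ≠ 0)
    (hqrel : 1 / q₁ = ENNReal.ofReal a / q₂ + ENNReal.ofReal (1 - a) / q₃) :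
    q₁ ≠ 0 ∧ q₁.toReal⁻¹ = a * q₂.toReal⁻¹ + (1 - a) * q₃.toReal⁻¹ := by
  have htop₂ : ENNReal.ofReal a / q₂ ≠ ∞ := ENNReal.div_ne_top ENNReal.ofReal_ne_top hq₂
  have htop₃ : ENNReal.ofReal (1 - a) / q₃ ≠ ∞ := ENNReal.div_ne_top ENNReal.ofReal_ne_top hq₃
  constructor
  · rintro rfl
    simp [htop₂, htop₃, eq_comm (a := ∞)] at hqrel
  · have h := congrArg ENNReal.toReal hqrel
    rwa [ENNReal.toReal_add htop₂ htop₃, ENNReal.toReal_div, ENNReal.toReal_div,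
      ENNReal.toReal_div, ENNReal.toReal_ofReal ha0, ENNReal.toReal_ofReal (sub_nonneg.2 ha1),
      ENNReal.toReal_one, one_div, div_eq_mul_inv, div_eq_mul_inv] at h

theorem exists_pos_le_ofReal {C : ℝ≥0∞} (hC : C ≠ ∞) : ∃ K : ℝ, 0 < K ∧ C ≤ ENNReal.ofReal K :=
  ⟨C.toReal + 1, by positivity, (ENNReal.ofReal_toReal hC).symm.trans_le
    (ENNReal.ofReal_le_ofReal (by linarith))⟩

theorem lorentz_le_of_dyadicLorentz_le {X : Type*} [MeasurableSpace X] (μ : Measure X)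
    {p q r a b : ℝ} (hp : 0 ≤ p) (hq : 0 ≤ q) (hr : 0 ≤ r) (ha : 0 ≤ a) (hb : 0 ≤ b)
    {q₁ q₂ q₃ : ℝ≥0∞} (hq₁ : q₁ ≠ 0) (hq₂ : q₂ ≠ 0) (hq₃ : q₃ ≠ 0) {C : ℝ≥0∞} {u v w : X → ℝ}
    (huvw : dyadicLorentz μ r⁻¹ q₁.toReal⁻¹ (fun x => ENNReal.ofReal |u x|) ≤
      C * (dyadicLorentz μ p⁻¹ q₂.toReal⁻¹ (fun x => ENNReal.ofReal |v x|) ^ a *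
        dyadicLorentz μ q⁻¹ q₃.toReal⁻¹ (fun x => ENNReal.ofReal |w x|) ^ b)) :
    lorentz μ (ENNReal.ofReal r) q₁ u ≤
      2 ^ r⁻¹ * C * ((2 ^ q₂.toReal⁻¹ * 2 ^ p⁻¹) ^ a * (2 ^ q₃.toReal⁻¹ * 2 ^ q⁻¹) ^ b) *
        lorentz μ (ENNReal.ofReal p) q₂ v ^ a * lorentz μ (ENNReal.ofReal q) q₃ w ^ b := by
  calc _ ≤ 2 ^ r⁻¹ * (C * ((2 ^ q₂.toReal⁻¹ * 2 ^ p⁻¹ * lorentz μ (ENNReal.ofReal p) q₂ v) ^ a *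
          (2 ^ q₃.toReal⁻¹ * 2 ^ q⁻¹ * lorentz μ (ENNReal.ofReal q) q₃ w) ^ b)) := by
        refine (lorentz_le_dyadicLorentz μ hr hq₁ u).trans ?_
        gcongr
        refine huvw.trans ?_
        gcongr
        · exact dyadicLorentz_le_lorentz μ hp hq₂ v
        · exact dyadicLorentz_le_lorentz μ hq hq₃ w
    _ = _ := by
        rw [ENNReal.mul_rpow_of_nonneg _ _ ha, ENNReal.mul_rpow_of_nonneg _ _ hb]
        ring

theorem stmt_14_general {E F : Type*} [NormedAddCommGroup E] [InnerProductSpace ℝ E]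
    [FiniteDimensional ℝ E] [MeasurableSpace E] [BorelSpace E] [NormedAddCommGroup F]
    [InnerProductSpace ℝ F] (μ : Measure E) [μ.IsAddHaarMeasure] (hn : 2 ≤ finrank ℝ E)
    {p q r α β γ a : ℝ} (hp : 1 < p) (hq : 0 < q) (hr : 0 < r) (ha0 : 0 < a) (ha1 : a ≤ 1)
    (hα : 1 - finrank ℝ E / p < α)
    (hbal : γ - finrank ℝ E / r = a * (1 - α - finrank ℝ E / p) + (1 - a) * (β - finrank ℝ E / q))
    {q₁ q₂ q₃ : ℝ≥0∞} (hq₂ : q₂ ≠ 0) (hq₃ : q₃ ≠ 0)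
    (hqrel : 1 / q₁ = ENNReal.ofReal a / q₂ + ENNReal.ofReal (1 - a) / q₃)
    (hΔ0 : 0 ≤ γ + a * α - (1 - a) * β) (hΔa : γ + a * α - (1 - a) * β ≤ a) :
    ∃ C : ℝ, 0 < C ∧ ∀ f : E → F, ContDiff ℝ 1 f → HasCompactSupport f →
      lorentz μ (ENNReal.ofReal r) q₁ (fun x => ‖x‖ ^ (-γ) * ‖f x‖) ≤
        ENNReal.ofReal C *
          lorentz μ (ENNReal.ofReal p) q₂ (fun x => ‖x‖ ^ α * ‖fderiv ℝ f x‖) ^ a *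
          lorentz μ (ENNReal.ofReal q) q₃ (fun x => ‖x‖ ^ (-β) * ‖f x‖) ^ (1 - a) := by
  have hn0 : (finrank ℝ E : ℝ) ≠ 0 := by
    norm_cast
    lia
  have hp0 : 0 < p := one_pos.trans hp
  have ha' : 0 ≤ 1 - a := sub_nonneg.2 ha1
  have hr_inv : r⁻¹ = a * p⁻¹ + (1 - a) * q⁻¹ -
      (a - (γ + a * α - (1 - a) * β)) * (finrank ℝ E : ℝ)⁻¹ := by
    field_simp at hbal ⊢
    linear_combination -hbal
  obtain ⟨hq₁, hq₁_inv⟩ := inv_toReal_eq_of_one_div_eq ha0.le ha1 hq₂ hq₃ hqrel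
  obtain ⟨C, hC, hdyadic⟩ := exists_dyadicLorentz_weighted_le (F := F) μ hn
    (inv_lt_one_of_one_lt₀ hp) (by rw [← div_eq_mul_inv]; linarith)
    (inv_nonneg.2 (toReal_nonneg (a := q₂))) (inv_nonneg.2 (toReal_nonneg (a := q₃))) ha0 ha1 hΔ0
    hΔa (hr_inv ▸ inv_pos.2 hr)
  rw [← hr_inv, ← hq₁_inv] at hdyadic
  have hC' : 2 ^ r⁻¹ * C * ((2 ^ q₂.toReal⁻¹ * 2 ^ p⁻¹) ^ a *
      (2 ^ q₃.toReal⁻¹ * 2 ^ q⁻¹) ^ (1 - a)) ≠ ∞ := by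
    finiteness [two_rpow_ne_top r⁻¹, two_rpow_ne_top p⁻¹, two_rpow_ne_top q⁻¹,
      two_rpow_ne_top q₂.toReal⁻¹, two_rpow_ne_top q₃.toReal⁻¹]
  obtain ⟨K, hK, hCK⟩ := exists_pos_le_ofReal hC'
  refine ⟨K, hK, fun f hf hcs => ?_⟩
  have hlorentz := lorentz_le_of_dyadicLorentz_le μ hp0.le hq.le hr.le ha0.le ha' hq₁ hq₂ hq₃
    (u := fun x => ‖x‖ ^ (-γ) * ‖f x‖) (v := fun x => ‖x‖ ^ α * ‖fderiv ℝ f x‖)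
    (w := fun x => ‖x‖ ^ (-β) * ‖f x‖)
    (by simpa only [ofReal_abs_eq_weighted] using hdyadic f hf hcs)
  exact hlorentz.trans (by gcongr)

/-- Theorem 2.2 of the paper in the Euclidean case: fully weighted
Caffarelli–Kohn–Nirenberg inequalities in Lorentz norms. -/
theorem stmt_14 (n : ℕ) (hn : 2 ≤ n) (p q r α β γ a : ℝ)
    (hp : 1 < p) (hq : 1 < q) (hr : 1 < r) (hα : 0 < α)
    (ha0 : 0 < a) (ha1 : a ≤ 1)
    (hγ : γ < (n : ℝ) / r) (hβ : β < (n : ℝ) / q)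
    (hα1 : 1 - (n : ℝ) / p < α) (hα2 : α < (n : ℝ) / (p / (p - 1)))
    (hbal : γ - (n : ℝ) / r =
      a * (1 - α - (n : ℝ) / p) + (1 - a) * (β - (n : ℝ) / q))
    (q₁ q₂ q₃ : ℝ≥0∞) (hq₁ : 1 ≤ q₁) (hq₂ : 1 ≤ q₂) (hq₂₃ : q₂ ≤ q₃)
    (hqrel : 1 / q₁ = ENNReal.ofReal a / q₂ + ENNReal.ofReal (1 - a) / q₃)
    (hΔ0 : 0 ≤ γ + a * α - (1 - a) * β) (hΔa : γ + a * α - (1 - a) * β ≤ a) :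
    ∃ C : ℝ, 0 < C ∧ ∀ f : EuclideanSpace ℝ (Fin n) → ℝ,
      ContDiff ℝ (⊤ : ℕ∞) f → HasCompactSupport f →
      lorentz volume (ENNReal.ofReal r) q₁ (fun x => ‖x‖ ^ (-γ) * f x) ≤
        ENNReal.ofReal C *
          lorentz volume (ENNReal.ofReal p) q₂
            (fun x => ‖x‖ ^ α * ‖gradient f x‖) ^ a *
          lorentz volume (ENNReal.ofReal q) q₃ (fun x => ‖x‖ ^ (-β) * f x) ^ (1 - a) := by
  obtain ⟨C, hC, hle⟩ := stmt_14_general (E := EuclideanSpace ℝ (Fin n)) (F := ℝ) volume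
    (by rwa [finrank_euclideanSpace_fin]) hp (one_pos.trans hq) (one_pos.trans hr) ha0 ha1
    (by rwa [finrank_euclideanSpace_fin]) (by rwa [finrank_euclideanSpace_fin])
    (one_pos.trans_le hq₂).ne' (one_pos.trans_le (hq₂.trans hq₂₃)).ne' hqrel hΔ0 hΔa
  refine ⟨C, hC, fun f hf hcs => ?_⟩
  simpa only [lorentz_mul_norm, gradient, LinearIsometryEquiv.norm_map] using
    hle f (hf.of_le (mod_cast le_top)) hcs
end

section
/- Let n ≥ 2, let p, s ≥ 1 and 1 < q₂ ≤ q₃ < ∞ with q₂' = q₂/(q₂-1), let φ(t) = t^{1/n - 1}, and let u, v : ℝⁿ → [0,∞) be locally integrable. Define T f(x) = ∫_{ℝⁿ} |y|^{1-n} f(x - y) dy (convolution with the kernel N(x) = |x|^{1-n}). Assume sup_{t>0} (∫_t^∞ τ^{q₃/s - 1} φ(τ)^{q₃} v*(τ)^{q₃} dτ)^{1/q₃} · (∫₀^t τ^{q₂' - q₂'/p - 1} u*(τ)^{q₂'} dτ)^{1/q₂'} < ∞ and sup_{t>0} (∫₀^t τ^{q₃/s - 1} v*(τ)^{q₃} dτ)^{1/q₃}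 · (∫_t^∞ τ^{q₂' - q₂'/p - 1} u*(τ)^{q₂'} φ(τ)^{q₂'} dτ)^{1/q₂'} < ∞. Then there exists C > 0 such that ‖ v · T(u f) ‖_{s,q₃} ≤ C ‖f‖_{p,q₂} for all measurable f : ℝⁿ → ℝ. -/
open MeasureTheory Set ENNReal

/-- The potential operator `T`: convolution with the kernel `N(x) = |x|^{1-n}`. -/
noncomputable def potl (n : ℕ) (f : EuclideanSpace ℝ (Fin n) → ℝ)
    (x : EuclideanSpace ℝ (Fin n)) : ℝ :=
  ∫ y, ‖y‖ ^ ((1 : ℝ) - (n : ℝ)) * f (x - y)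

/-!
Write `φ(t) = t^(a-1)` and let `k` satisfy `∫_E |k| ≤ c |E|^a`; the kernel `|y|^(1-n)` does with
`a = 1/n`. Cutting `g` at the height `g*(t)` and estimating `k ⋆ (g - g*(t))₊` through its integral
over sets and `k ⋆ min(g, g*(t))` pointwise gives O'Neil's inequality
`(k ⋆ g)*(t) ≲ φ(t) ∫₀ᵗ g* + ∫ₜ^∞ g* φ`. Together with `(FG)*(s + t) ≤ F*(s) G*(t)` this turns the
claim into a two-weight inequality on the half line for a Hardy operator and its dual, and the two
suprema are exactly the Muckenhoupt-Bradley conditions for these two operators.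

Hardy's inequality needs only a linear order. On a level set `{2m < G ≤ 4m}` of the
increasing function `G(s) = ∫_{x ≤ s} UF`, the part of the integral lying in `{G > m}` is already at
least `m`, so that Hölder's inequality bounds the level set by the mass of `F^p` on `{m < G ≤ 4m}`;
these sets overlap at most twice as `m` runs through the powers of two. The dual inequality is the
same statement for the reversed order.
-/

section Rearrangement

variable {α : Type*} [MeasurableSpace α] {μ : Measure α} {F G : α → ℝ≥0∞}

/-- The decreasing rearrangement of an `ℝ≥0∞`-valued function. The restriction `0 < l` changes
nothing; it makes `rearr μ f` definitionally the rearrangement of `ENNReal.ofReal |f ·|`. -/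
noncomputable def decRearr (μ : Measure α) (F : α → ℝ≥0∞) (t : ℝ) : ℝ≥0∞ :=
  sInf {l : ℝ≥0∞ | 0 < l ∧ μ {x | l < F x} ≤ ENNReal.ofReal t}

theorem decRearr_le_iff {t : ℝ} {l : ℝ≥0∞} :
    decRearr μ F t ≤ l ↔ μ {x | l < F x} ≤ ENNReal.ofReal t := by
  refine ⟨fun h => ?_, fun h => le_of_forall_gt_imp_ge_of_dense fun l' hl' =>
    sInf_le ⟨pos_of_gt hl', (measure_mono fun x hx => hl'.trans hx).trans h⟩⟩
  by_cases hl : l = ∞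
  · simp [hl]
  obtain ⟨w, w_anti, l_lt_w, w_tendsto⟩ := exists_seq_strictAnti_tendsto' (lt_top_iff_ne_top.2 hl)
  have superlevel_eq : {x | l < F x} = ⋃ n, {x | w n < F x} := by
    ext x
    simp only [mem_ofPred_eq, mem_iUnion]
    exact ⟨fun hx => (w_tendsto.eventually (gt_mem_nhds hx)).exists,
      fun ⟨n, hn⟩ => (l_lt_w n).1.trans hn⟩
  have superlevel_mono : Monotone fun n => {x | w n < F x} := fun a b hab x hx =>
    (w_anti.antitone hab).trans_lt hx
  rw [superlevel_eq, superlevel_mono.measure_iUnion]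
  refine iSup_le fun n => ?_
  obtain ⟨l', ⟨-, measure_le⟩, l'_lt⟩ := sInf_lt_iff.1 (h.trans_lt (l_lt_w n).1)
  exact (measure_mono fun x hx => l'_lt.trans hx).trans measure_le

theorem lt_decRearr_iff {t : ℝ} {l : ℝ≥0∞} :
    l < decRearr μ F t ↔ ENNReal.ofReal t < μ {x | l < F x} := by
  simpa only [not_le] using decRearr_le_iff.not

theorem measure_decRearr_lt_le (μ : Measure α) (F : α → ℝ≥0∞) (t : ℝ) :
    μ {x | decRearr μ F t < F x} ≤ ENNReal.ofReal t :=
  decRearr_le_iff.1 le_rfl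

theorem decRearr_antitone (μ : Measure α) (F : α → ℝ≥0∞) : Antitone (decRearr μ F) :=
  fun _ _ hst => decRearr_le_iff.2
    ((measure_decRearr_lt_le μ F _).trans (ENNReal.ofReal_le_ofReal hst))

theorem measurable_decRearr (μ : Measure α) (F : α → ℝ≥0∞) : Measurable (decRearr μ F) :=
  (decRearr_antitone μ F).measurable

theorem decRearr_mono_ae (h : ∀ᵐ x ∂μ, F x ≤ G x) (t : ℝ) :
    decRearr μ F t ≤ decRearr μ G t := by
  refine decRearr_le_iff.2 ((measure_mono_ae ?_).trans (measure_decRearr_lt_le μ G t))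
  filter_upwards [h] with x hFG hlt using hlt.trans_le hFG

theorem decRearr_mul_le (μ : Measure α) (F G : α → ℝ≥0∞) {a b : ℝ} (ha : 0 ≤ a) (hb : 0 ≤ b) :
    decRearr μ (fun x => F x * G x) (a + b) ≤ decRearr μ F a * decRearr μ G b := by
  rw [decRearr_le_iff, ENNReal.ofReal_add ha hb]
  refine (measure_mono fun x hx => ?_).trans ((measure_union_le _ _).trans
    (add_le_add (measure_decRearr_lt_le μ F a) (measure_decRearr_lt_le μ G b)))
  by_contra hc
  simp only [mem_union, mem_ofPred_eq, not_or, not_lt] at hc hx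
  exact hx.not_ge (mul_le_mul' hc.1 hc.2)

theorem decRearr_add_le_of_forall_le {B : ℝ≥0∞} (hG : ∀ x, G x ≤ B) (t : ℝ) :
    decRearr μ (fun x => F x + G x) t ≤ decRearr μ F t + B := by
  refine decRearr_le_iff.2 ((measure_mono fun x hx => ?_).trans (measure_decRearr_lt_le μ F t))
  exact lt_of_add_lt_add_right (hx.trans_le (add_le_add_right (hG x) (F x)))

end Rearrangement

section LayerCake

variable {α : Type*} [MeasurableSpace α] {μ ν : Measure α} {g : α → ℝ≥0∞} {a : ℝ}

theorem setLIntegral_Ioc_rpow_sub_one (ha : 0 < a) {M : ℝ} (hM : 0 ≤ M) :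
    ∫⁻ τ in Ioc 0 M, ENNReal.ofReal (a * τ ^ (a - 1)) = ENNReal.ofReal M ^ a := by
  have hint : IntervalIntegrable (fun τ : ℝ => a * τ ^ (a - 1)) volume 0 M :=
    (intervalIntegral.intervalIntegrable_rpow' (by linarith)).const_mul a
  rw [← ofReal_integral_eq_lintegral_ofReal hint.1, ← intervalIntegral.integral_of_le hM,
    intervalIntegral.integral_const_mul, integral_rpow (Or.inl (by linarith)), sub_add_cancel,
    Real.zero_rpow ha.ne', sub_zero, mul_div_cancel₀ _ ha.ne',
    ENNReal.ofReal_rpow_of_nonneg hM ha.le]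
  filter_upwards [ae_restrict_mem measurableSet_Ioc] with τ hτ
  exact mul_nonneg ha.le (Real.rpow_nonneg hτ.1.le _)

theorem setLIntegral_ofReal_lt_rpow_sub_one (ha : 0 < a) (m : ℝ≥0∞) :
    ∫⁻ τ in Ioi 0 ∩ {τ | ENNReal.ofReal τ < m}, ENNReal.ofReal (a * τ ^ (a - 1)) = m ^ a := by
  obtain rfl | hm := eq_or_ne m ∞
  · rw [ENNReal.top_rpow_of_pos ha]
    refine ENNReal.eq_top_of_forall_nnreal_le fun r => ?_
    have root_rpow : ENNReal.ofReal ((r : ℝ) ^ a⁻¹) ^ a = r := by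
      rw [← ENNReal.ofReal_rpow_of_nonneg r.coe_nonneg (inv_nonneg.2 ha.le),
        ENNReal.rpow_inv_rpow ha.ne', ENNReal.ofReal_coe_nnreal]
    rw [← root_rpow, ← setLIntegral_Ioc_rpow_sub_one ha (Real.rpow_nonneg r.coe_nonneg _)]
    exact lintegral_mono_set fun τ hτ => ⟨hτ.1, ENNReal.ofReal_lt_top⟩
  · have interval_eq : Ioi 0 ∩ {τ | ENNReal.ofReal τ < m} = Ioo 0 m.toReal := by
      ext τ
      exact and_congr_right fun hτ => ENNReal.ofReal_lt_iff_lt_toReal (mem_Ioi.1 hτ).le hm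
    rw [interval_eq, setLIntegral_congr Ioo_ae_eq_Ioc,
      setLIntegral_Ioc_rpow_sub_one ha ENNReal.toReal_nonneg, ENNReal.ofReal_toReal hm]

theorem lintegral_rpow_eq_lintegral_measure_ofReal_lt [SFinite ν] (hg : Measurable g)
    (ha : 0 < a) :
    ∫⁻ x, g x ^ a ∂ν =
      ∫⁻ τ in Ioi (0 : ℝ), ENNReal.ofReal (a * τ ^ (a - 1)) * ν {x | ENNReal.ofReal τ < g x} := by
  have measurable_slice (x : α) : MeasurableSet {τ : ℝ | ENNReal.ofReal τ < g x} :=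
    measurableSet_lt ENNReal.measurable_ofReal measurable_const
  let S : Set (α × ℝ) := {z | ENNReal.ofReal z.2 < g z.1}
  have hS : MeasurableSet S := measurableSet_lt (by fun_prop) (by fun_prop)
  calc ∫⁻ x, g x ^ a ∂ν
      = ∫⁻ x, (∫⁻ τ in Ioi (0 : ℝ),
          S.indicator (fun z => ENNReal.ofReal (a * z.2 ^ (a - 1))) (x, τ)) ∂ν := by
        refine lintegral_congr fun x => ?_
        rw [← setLIntegral_ofReal_lt_rpow_sub_one ha, inter_comm,
          ← setLIntegral_indicator (measurable_slice x)]
        rfl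
    _ = ∫⁻ τ in Ioi (0 : ℝ), ∫⁻ x,
          S.indicator (fun z => ENNReal.ofReal (a * z.2 ^ (a - 1))) (x, τ) ∂ν :=
        lintegral_lintegral_swap (Measurable.indicator (by fun_prop) hS).aemeasurable
    _ = _ := by
        refine lintegral_congr fun τ => ?_
        have measurable_section : MeasurableSet {x | ENNReal.ofReal τ < g x} :=
          measurableSet_lt measurable_const hg
        exact lintegral_indicator_const measurable_section (ENNReal.ofReal (a * τ ^ (a - 1)))

theorem lintegral_measure_ofReal_lt_rpow_eq (μ : Measure α) (g : α → ℝ≥0∞) (ha : 0 < a) :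
    ∫⁻ l in Ioi (0 : ℝ), μ {x | ENNReal.ofReal l < g x} ^ a =
      ∫⁻ τ in Ioi (0 : ℝ), ENNReal.ofReal (a * τ ^ (a - 1)) * decRearr μ g τ := by
  have distrib_antitone : Antitone fun l : ℝ => μ {x | ENNReal.ofReal l < g x} :=
    fun _ _ h => measure_mono fun _ hx => (ENNReal.ofReal_le_ofReal h).trans_lt hx
  rw [lintegral_rpow_eq_lintegral_measure_ofReal_lt distrib_antitone.measurable ha]
  refine lintegral_congr fun τ => congrArg _ ?_
  simp only [← lt_decRearr_iff]
  rw [Measure.restrict_apply (measurableSet_lt ENNReal.measurable_ofReal measurable_const),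
    inter_comm, ← setLIntegral_one]
  simpa using setLIntegral_ofReal_lt_rpow_sub_one one_pos (decRearr μ g τ)

theorem lintegral_le_of_measure_le_rpow [SFinite ν] (hg : Measurable g) {c : ℝ≥0∞} (ha : 0 < a)
    (h : ∀ E, MeasurableSet E → ν E ≤ c * μ E ^ a) :
    ∫⁻ x, g x ∂ν ≤
      c * ∫⁻ τ in Ioi (0 : ℝ), ENNReal.ofReal (a * τ ^ (a - 1)) * decRearr μ g τ := by
  have distrib_antitone : Antitone fun l : ℝ => μ {x | ENNReal.ofReal l < g x} :=
    fun _ _ h => measure_mono fun _ hx => (ENNReal.ofReal_le_ofReal h).trans_lt hx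
  calc ∫⁻ x, g x ∂ν = ∫⁻ l in Ioi (0 : ℝ), ν {x | ENNReal.ofReal l < g x} := by
        simpa using lintegral_rpow_eq_lintegral_measure_ofReal_lt (ν := ν) hg one_pos
    _ ≤ ∫⁻ l in Ioi (0 : ℝ), c * μ {x | ENNReal.ofReal l < g x} ^ a :=
        lintegral_mono fun l => h _ (measurableSet_lt measurable_const hg)
    _ = _ := by
        rw [lintegral_const_mul _ (distrib_antitone.measurable.pow_const a),
          lintegral_measure_ofReal_lt_rpow_eq μ g ha]

theorem lintegral_le_lintegral_decRearr [SFinite μ] (hg : Measurable g) :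
    ∫⁻ x, g x ∂μ ≤ ∫⁻ τ in Ioi (0 : ℝ), decRearr μ g τ := by
  simpa using lintegral_le_of_measure_le_rpow (μ := μ) hg one_pos
    (fun E _ => (by simp : μ E ≤ 1 * μ E ^ (1 : ℝ)))

end LayerCake

section Kernel

variable {α : Type*} [MeasurableSpace α] {μ : Measure α} {k : α → ℝ≥0∞} {a : ℝ} {c : ℝ≥0∞}

/-- The estimate `∫_E k ≤ c |E|^a` for all measurable `E`. For `a = 1 - 1/r` it is the form in
which membership of `k` in weak `L^r` is used; the Riesz kernel `|y|^(α-d)` on `ℝ^d` satisfies it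
with `a = α/d`. -/
def SetIntegralBound (μ : Measure α) (k : α → ℝ≥0∞) (a : ℝ) (c : ℝ≥0∞) : Prop :=
  ∀ E, MeasurableSet E → ∫⁻ y in E, k y ∂μ ≤ c * μ E ^ a

namespace SetIntegralBound

theorem comp_measurePreserving (h : SetIntegralBound μ k a c) (e : α ≃ᵐ α)
    (he : MeasurePreserving e μ μ) : SetIntegralBound μ (k ∘ e) a c := by
  intro E hE
  calc ∫⁻ y in E, (k ∘ e) y ∂μ = ∫⁻ y in e '' E, k y ∂μ :=
        he.setLIntegral_comp_emb e.measurableEmbedding k E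
    _ ≤ c * μ (e '' E) ^ a := h _ (e.measurableSet_image.2 hE)
    _ = c * μ E ^ a := by rw [e.image_eq_preimage_symm, he.symm.measure_preimage_equiv]

theorem decRearr_le [SigmaFinite μ] (h : SetIntegralBound μ k a c) (hk : Measurable k)
    (ha : a ≤ 1) {t : ℝ} (ht : 0 < t) : decRearr μ k t ≤ c * ENNReal.ofReal (t ^ (a - 1)) := by
  refine le_of_forall_lt_imp_le_of_dense fun l hl => ?_
  obtain ⟨E, hE, E_subset, lt_measure, measure_lt_top⟩ :=
    Measure.exists_subset_measure_lt_top (measurableSet_lt measurable_const hk)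
      (lt_decRearr_iff.1 hl)
  have measure_ne_zero : μ E ≠ 0 := (pos_of_gt lt_measure).ne'
  have chebyshev : l * μ E ≤ c * μ E ^ a := by
    rw [← setLIntegral_const]
    exact (setLIntegral_mono' hE fun y hy => (E_subset hy).le).trans (h E hE)
  calc l ≤ c * μ E ^ a / μ E :=
        (ENNReal.le_div_iff_mul_le (.inl measure_ne_zero) (.inl measure_lt_top.ne)).2 chebyshev
    _ = c * μ E ^ (a - 1) := by
        rw [ENNReal.rpow_sub _ _ measure_ne_zero measure_lt_top.ne, ENNReal.rpow_one, mul_div_assoc]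
    _ ≤ c * ENNReal.ofReal (t ^ (a - 1)) := by
        rw [← ENNReal.ofReal_rpow_of_pos ht, ← neg_sub 1 a, ENNReal.rpow_neg, ENNReal.rpow_neg]
        gcongr

end SetIntegralBound

end Kernel

section Calderon

/-- The Calderón operator with profile `φ`, which dominates the rearrangement of a convolution
operator whose kernel has rearrangement of size `φ`. -/
noncomputable def calderon (φ h : ℝ → ℝ≥0∞) (t : ℝ) : ℝ≥0∞ :=
  φ t * (∫⁻ τ in Ioc 0 t, h τ) + ∫⁻ τ in Ioi t, h τ * φ τ

variable {α : Type*} [MeasurableSpace α] {μ : Measure α} {g : α → ℝ≥0∞} {t : ℝ}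

theorem calderon_congr {φ h h' : ℝ → ℝ≥0∞} (ht : 0 < t)
    (hh : ∀ τ, 0 < τ → h τ = h' τ) : calderon φ h t = calderon φ h' t := by
  rw [calderon, calderon, setLIntegral_congr_fun measurableSet_Ioc fun τ hτ => hh τ hτ.1,
    setLIntegral_congr_fun measurableSet_Ioi fun τ hτ =>
      congrArg (· * φ τ) (hh τ (ht.trans hτ))]

theorem ofReal_mul_decRearr_le_setLIntegral (μ : Measure α) (g : α → ℝ≥0∞) (t : ℝ) :
    ENNReal.ofReal t * decRearr μ g t ≤ ∫⁻ τ in Ioc 0 t, decRearr μ g τ := by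
  calc ENNReal.ofReal t * decRearr μ g t = ∫⁻ _ in Ioc 0 t, decRearr μ g t := by
        rw [setLIntegral_const, Real.volume_Ioc, sub_zero, mul_comm]
    _ ≤ _ := setLIntegral_mono' measurableSet_Ioc fun τ hτ => decRearr_antitone _ _ hτ.2

theorem lintegral_sub_decRearr_le [SFinite μ] (hg : Measurable g) (ht : 0 ≤ t) :
    ∫⁻ x, g x - decRearr μ g t ∂μ ≤ ∫⁻ τ in Ioc 0 t, decRearr μ g τ := by
  have tail_eq_zero (τ : ℝ) (hτ : t ≤ τ) : decRearr μ (fun x => g x - decRearr μ g t) τ = 0 := by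
    refine nonpos_iff_eq_zero.1 (decRearr_le_iff.2 ?_)
    simp only [tsub_pos_iff_lt]
    exact (measure_decRearr_lt_le μ g t).trans (ENNReal.ofReal_le_ofReal hτ)
  calc ∫⁻ x, g x - decRearr μ g t ∂μ
      ≤ ∫⁻ τ in Ioi (0 : ℝ), decRearr μ (fun x => g x - decRearr μ g t) τ :=
        lintegral_le_lintegral_decRearr (hg.sub_const _)
    _ = ∫⁻ τ in Ioc 0 t, decRearr μ (fun x => g x - decRearr μ g t) τ := by
        rw [← Ioc_union_Ioi_eq_Ioi ht,
          lintegral_union measurableSet_Ioi (Ioc_disjoint_Ioi le_rfl),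
          setLIntegral_eq_zero measurableSet_Ioi fun τ hτ => tail_eq_zero τ (mem_Ioi.1 hτ).le,
          add_zero]
    _ ≤ _ := lintegral_mono fun τ => decRearr_mono_ae (.of_forall fun x => tsub_le_self) τ

theorem setLIntegral_rpow_mul_decRearr_min_le (μ : Measure α) (g : α → ℝ≥0∞)
    {a : ℝ} (ha : 0 < a) (ha1 : a ≤ 1) (ht : 0 < t) :
    ∫⁻ τ in Ioi (0 : ℝ), ENNReal.ofReal (a * τ ^ (a - 1)) *
        decRearr μ (fun x => min (g x) (decRearr μ g t)) τ ≤
      calderon (fun τ => ENNReal.ofReal (τ ^ (a - 1))) (decRearr μ g) t := by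
  rw [← Ioc_union_Ioi_eq_Ioi ht.le, lintegral_union measurableSet_Ioi (Ioc_disjoint_Ioi le_rfl)]
  refine add_le_add ?_ (setLIntegral_mono' measurableSet_Ioi fun τ hτ => ?_)
  · have truncation_le (τ : ℝ) :
        decRearr μ (fun x => min (g x) (decRearr μ g t)) τ ≤ decRearr μ g t := by
      refine decRearr_le_iff.2 ?_
      simp [not_lt.2 (min_le_right _ _)]
    calc ∫⁻ τ in Ioc 0 t, ENNReal.ofReal (a * τ ^ (a - 1)) *
          decRearr μ (fun x => min (g x) (decRearr μ g t)) τ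
        ≤ ∫⁻ τ in Ioc 0 t, ENNReal.ofReal (a * τ ^ (a - 1)) * decRearr μ g t := by
          gcongr with τ
          exact truncation_le τ
      _ = ENNReal.ofReal (t ^ (a - 1)) * (ENNReal.ofReal t * decRearr μ g t) := by
          rw [lintegral_mul_const _ (by fun_prop), setLIntegral_Ioc_rpow_sub_one ha ht.le,
            ← mul_assoc, ← ENNReal.ofReal_mul (by positivity), ← Real.rpow_add_one ht.ne',
            sub_add_cancel, ENNReal.ofReal_rpow_of_pos ht]
      _ ≤ _ := by gcongr; exact ofReal_mul_decRearr_le_setLIntegral μ g t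
  · rw [mul_comm]
    gcongr
    · exact decRearr_mono_ae (.of_forall fun x => min_le_left _ _) τ
    · exact ENNReal.ofReal_le_ofReal
        (mul_le_of_le_one_left (Real.rpow_nonneg (ht.trans hτ).le _) ha1)

end Calderon

section Convolution

variable {G : Type*} [AddCommGroup G] [MeasurableSpace G] [MeasurableAdd₂ G] [MeasurableNeg G]
  {μ : Measure G} [SigmaFinite μ] [μ.IsAddLeftInvariant]
  {k g : G → ℝ≥0∞} {a : ℝ} {c : ℝ≥0∞}

namespace SetIntegralBound

theorem lconvolution (h : SetIntegralBound μ k a c) [μ.IsNegInvariant] (hk : Measurable k)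
    (hg : Measurable g) : SetIntegralBound μ (k ⋆ₗ[μ] g) a (c * ∫⁻ y, g y ∂μ) := by
  intro E hE
  have kernel_translate (y : G) : ∫⁻ x in E, k (-y + x) ∂μ ≤ c * μ E ^ a :=
    h.comp_measurePreserving (.addLeft (-y)) (measurePreserving_add_left μ (-y)) E hE
  calc ∫⁻ x in E, (k ⋆ₗ[μ] g) x ∂μ
      = ∫⁻ x in E, (∫⁻ y, g y * k (-y + x) ∂μ) ∂μ := by rw [lconvolution_comm]; rfl
    _ = ∫⁻ y, (∫⁻ x in E, g y * k (-y + x) ∂μ) ∂μ :=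
        lintegral_lintegral_swap (by fun_prop)
    _ ≤ ∫⁻ y, g y * (c * μ E ^ a) ∂μ := by
        refine lintegral_mono fun y => ?_
        rw [lintegral_const_mul _ (by fun_prop)]
        gcongr
        exact kernel_translate y
    _ = c * (∫⁻ y, g y ∂μ) * μ E ^ a := by rw [lintegral_mul_const _ hg]; ring

theorem lconvolution_le (h : SetIntegralBound μ k a c) [μ.IsNegInvariant] (hk : Measurable k)
    (hg : Measurable g) (ha : 0 < a) (x : G) :
    (k ⋆ₗ[μ] g) x ≤
      c * ∫⁻ τ in Ioi (0 : ℝ), ENNReal.ofReal (a * τ ^ (a - 1)) * decRearr μ g τ := by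
  have measurable_kernel : Measurable fun y => k (x - y) := by fun_prop
  have kernel_reflect : SetIntegralBound μ (fun y => k (x - y)) a c :=
    h.comp_measurePreserving (.subLeft x) (Measure.measurePreserving_sub_left μ x)
  calc (k ⋆ₗ[μ] g) x = ∫⁻ y, g y ∂μ.withDensity fun y => k (x - y) := by
        rw [lconvolution_comm, lconvolution_def,
          lintegral_withDensity_eq_lintegral_mul _ measurable_kernel hg]
        simp only [neg_add_eq_sub, Pi.mul_apply, mul_comm]
    _ ≤ _ := lintegral_le_of_measure_le_rpow hg ha fun E hE => by
        rw [withDensity_apply _ hE]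
        exact kernel_reflect E hE

end SetIntegralBound

theorem decRearr_lconvolution_le [μ.IsNegInvariant] (h : SetIntegralBound μ k a c)
    (hk : Measurable k) (hg : Measurable g) (ha : 0 < a) (ha1 : a ≤ 1) {t : ℝ} (ht : 0 < t) :
    decRearr μ (k ⋆ₗ[μ] g) t ≤
      2 * c * calderon (fun τ => ENNReal.ofReal (τ ^ (a - 1))) (decRearr μ g) t := by
  set φ : ℝ → ℝ≥0∞ := fun τ => ENNReal.ofReal (τ ^ (a - 1))
  set top : G → ℝ≥0∞ := fun x => g x - decRearr μ g t
  set bottom : G → ℝ≥0∞ := fun x => min (g x) (decRearr μ g t)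
  have measurable_top : Measurable top := by fun_prop
  have conv_split : k ⋆ₗ[μ] g = fun x => (k ⋆ₗ[μ] top) x + (k ⋆ₗ[μ] bottom) x := by
    ext x
    simp only [lconvolution_def]
    rw [← lintegral_add_left (by fun_prop)]
    simp only [top, bottom, ← mul_add, tsub_add_min]
  have top_le : decRearr μ (k ⋆ₗ[μ] top) t ≤ c * calderon φ (decRearr μ g) t :=
    calc decRearr μ (k ⋆ₗ[μ] top) t ≤ c * (∫⁻ x, top x ∂μ) * φ t :=
          (h.lconvolution hk measurable_top).decRearr_le
            (measurable_lconvolution μ hk measurable_top) ha1 ht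
      _ = c * (φ t * ∫⁻ x, top x ∂μ) := by ring
      _ ≤ c * calderon φ (decRearr μ g) t := by
          gcongr
          exact le_add_right (mul_le_mul_right (lintegral_sub_decRearr_le hg ht.le) _)
  have bottom_le (x : G) : (k ⋆ₗ[μ] bottom) x ≤ c * calderon φ (decRearr μ g) t :=
    (h.lconvolution_le hk (by fun_prop) ha x).trans
      (mul_le_mul_right (setLIntegral_rpow_mul_decRearr_min_le μ g ha ha1 ht) c)
  calc decRearr μ (k ⋆ₗ[μ] g) t ≤ decRearr μ (k ⋆ₗ[μ] top) t + c * calderon φ (decRearr μ g) t := by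
        rw [conv_split]
        exact decRearr_add_le_of_forall_le bottom_le t
    _ ≤ c * calderon φ (decRearr μ g) t + c * calderon φ (decRearr μ g) t := by gcongr
    _ = _ := by ring

end Convolution

section Dilation

theorem setLIntegral_eq_ofReal_pow_mul_setLIntegral_smul {E : Type*} [NormedAddCommGroup E]
    [NormedSpace ℝ E] [MeasurableSpace E] [BorelSpace E] [FiniteDimensional ℝ E] (μ : Measure E)
    [μ.IsAddHaarMeasure] (h : E → ℝ≥0∞) (S : Set E) {b : ℝ} (hb : 0 < b) :
    ∫⁻ x in S, h x ∂μ =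
      ENNReal.ofReal (b ^ Module.finrank ℝ E) * ∫⁻ x in (b • ·) ⁻¹' S, h (b • x) ∂μ := by
  have embedding : MeasurableEmbedding (b • · : E → E) :=
    (Homeomorph.smulOfNeZero b hb.ne').measurableEmbedding
  rw [← embedding.lintegral_map, ← embedding.restrict_map, Measure.map_addHaar_smul μ hb.ne',
    Measure.restrict_smul, lintegral_smul_measure, smul_eq_mul, ← mul_assoc,
    ← ENNReal.ofReal_mul (by positivity), abs_of_pos (by positivity),
    mul_inv_cancel₀ (by positivity), ENNReal.ofReal_one, one_mul]

theorem setLIntegral_eq_ofReal_mul_setLIntegral_mul_left (h : ℝ → ℝ≥0∞) (S : Set ℝ) {b : ℝ}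
    (hb : 0 < b) :
    ∫⁻ τ in S, h τ = ENNReal.ofReal b * ∫⁻ τ in (b * ·) ⁻¹' S, h (b * τ) := by
  simpa using setLIntegral_eq_ofReal_pow_mul_setLIntegral_smul volume h S hb

theorem calderon_mul_left_le {φ φ' h h' : ℝ → ℝ≥0∞} {b t : ℝ} (hb : 0 < b) (ht : 0 < t)
    (hφ : ∀ τ, 0 < τ → φ (b * τ) ≤ φ' τ) (hh : ∀ τ, 0 < τ → h (b * τ) ≤ h' τ) :
    calderon φ h (b * t) ≤ ENNReal.ofReal b * calderon φ' h' t := by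
  have near : ∫⁻ τ in Ioc 0 (b * t), h τ ≤ ENNReal.ofReal b * ∫⁻ τ in Ioc 0 t, h' τ := by
    rw [setLIntegral_eq_ofReal_mul_setLIntegral_mul_left h _ hb, preimage_const_mul_Ioc₀ _ _ hb,
      zero_div, mul_div_cancel_left₀ _ hb.ne']
    gcongr ENNReal.ofReal b * ?_
    exact setLIntegral_mono' measurableSet_Ioc fun τ hτ => hh τ hτ.1
  have far : ∫⁻ τ in Ioi (b * t), h τ * φ τ ≤
      ENNReal.ofReal b * ∫⁻ τ in Ioi t, h' τ * φ' τ := by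
    rw [setLIntegral_eq_ofReal_mul_setLIntegral_mul_left _ _ hb, preimage_const_mul_Ioi₀ _ hb,
      mul_div_cancel_left₀ _ hb.ne']
    gcongr ENNReal.ofReal b * ?_
    exact setLIntegral_mono' measurableSet_Ioi fun τ hτ =>
      mul_le_mul' (hh τ (ht.trans hτ)) (hφ τ (ht.trans hτ))
  calc calderon φ h (b * t)
      ≤ φ' t * (ENNReal.ofReal b * ∫⁻ τ in Ioc 0 t, h' τ) +
          ENNReal.ofReal b * ∫⁻ τ in Ioi t, h' τ * φ' τ :=
        add_le_add (mul_le_mul' (hφ t ht) near) far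
    _ = ENNReal.ofReal b * calderon φ' h' t := by rw [calderon]; ring

end Dilation

section RieszKernel

open Metric Module

variable {E : Type*} [NormedAddCommGroup E] [NormedSpace ℝ E] [MeasurableSpace E] [BorelSpace E]
  [FiniteDimensional ℝ E] (μ : Measure E) [μ.IsAddHaarMeasure] {α : ℝ}

theorem setLIntegral_ball_enorm_rpow (α : ℝ) {R : ℝ} (hR : 0 < R) :
    ∫⁻ y in ball 0 R, ‖‖y‖ ^ (α - finrank ℝ E)‖ₑ ∂μ =
      ENNReal.ofReal (R ^ α) * ∫⁻ y in ball 0 1, ‖‖y‖ ^ (α - finrank ℝ E)‖ₑ ∂μ := by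
  have preimage_ball : (R • · : E → E) ⁻¹' ball 0 R = ball 0 1 := by
    ext y
    simp [norm_smul, abs_of_pos hR, hR]
  have homogeneous (y : E) : ‖‖R • y‖ ^ (α - finrank ℝ E)‖ₑ =
      ENNReal.ofReal (R ^ (α - finrank ℝ E)) * ‖‖y‖ ^ (α - finrank ℝ E)‖ₑ := by
    rw [norm_smul, Real.norm_of_nonneg hR.le, Real.mul_rpow hR.le (norm_nonneg y), enorm_mul,
      Real.enorm_of_nonneg (by positivity)]
  rw [setLIntegral_eq_ofReal_pow_mul_setLIntegral_smul μ _ _ hR, preimage_ball]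
  simp only [homogeneous]
  rw [lintegral_const_mul' _ _ ENNReal.ofReal_ne_top, ← mul_assoc,
    ← ENNReal.ofReal_mul (by positivity), ← Real.rpow_natCast, ← Real.rpow_add hR,
    add_sub_cancel]

theorem setLIntegral_unitBall_enorm_rpow_ne_top (hd : 1 ≤ finrank ℝ E) (hα : 0 < α) :
    ∫⁻ y in ball 0 1, ‖‖y‖ ^ (α - finrank ℝ E)‖ₑ ∂μ ≠ ∞ := by
  refine (integrableOn_ball_of_norm_le_rpow (C := 1) (α := finrank ℝ E - α) hd (by linarith)
    (.of_forall fun y => ?_) (Measurable.aestronglyMeasurable (by fun_prop))).2.ne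
  rw [one_mul, neg_sub, Real.norm_of_nonneg (Real.rpow_nonneg (norm_nonneg y) _)]

theorem setLIntegral_enorm_rpow_le (hαd : α ≤ finrank ℝ E) {S : Set E}
    (hS : MeasurableSet S) {R : ℝ} (hR : 0 < R) :
    ∫⁻ y in S, ‖‖y‖ ^ (α - finrank ℝ E)‖ₑ ∂μ ≤
      ENNReal.ofReal (R ^ α) * (∫⁻ y in ball 0 1, ‖‖y‖ ^ (α - finrank ℝ E)‖ₑ ∂μ) +
        ENNReal.ofReal (R ^ (α - finrank ℝ E)) * μ S := by
  rw [← setLIntegral_ball_enorm_rpow μ α hR, ← setLIntegral_const]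
  refine (lintegral_inter_add_sdiff _ S measurableSet_ball).symm.le.trans
    (add_le_add (lintegral_mono_set inter_subset_right)
      ((setLIntegral_mono' (hS.diff measurableSet_ball) fun y hy => ?_).trans
        (lintegral_mono_set sdiff_subset)))
  have R_le_norm : R ≤ ‖y‖ := by simpa using hy.2
  rw [Real.enorm_of_nonneg (Real.rpow_nonneg (norm_nonneg y) _)]
  exact ENNReal.ofReal_le_ofReal
    (Real.rpow_le_rpow_of_nonpos hR R_le_norm (sub_nonpos.2 hαd))

theorem exists_setIntegralBound_enorm_rpow (hα : 0 < α) (hαd : α ≤ finrank ℝ E) :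
    ∃ c ≠ ∞, SetIntegralBound μ (fun y => ‖‖y‖ ^ (α - finrank ℝ E)‖ₑ) (α / finrank ℝ E) c := by
  have hd : 0 < (finrank ℝ E : ℝ) := hα.trans_le hαd
  set I := ∫⁻ y in ball 0 1, ‖‖y‖ ^ (α - finrank ℝ E)‖ₑ ∂μ
  have hI : I ≠ ∞ := setLIntegral_unitBall_enorm_rpow_ne_top μ (by exact_mod_cast hd) hα
  refine ⟨I + 1, by finiteness, fun S hS => ?_⟩
  obtain hS0 | hS0 := eq_or_ne (μ S) 0
  · simp [setLIntegral_measure_zero S _ hS0]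
  obtain hStop | hStop := eq_or_ne (μ S) ∞
  · simp [hStop, ENNReal.top_rpow_of_pos (div_pos hα hd)]
  have m_pos : 0 < (μ S).toReal := ENNReal.toReal_pos hS0 hStop
  -- The radius of the ball with measure comparable to that of `S` balances the two terms.
  have R_rpow (b : ℝ) : ENNReal.ofReal (((μ S).toReal ^ (finrank ℝ E : ℝ)⁻¹) ^ b) =
      μ S ^ (b / finrank ℝ E) := by
    rw [← Real.rpow_mul m_pos.le, ← ENNReal.ofReal_rpow_of_pos m_pos, ENNReal.ofReal_toReal hStop,
      inv_mul_eq_div]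
  refine (setLIntegral_enorm_rpow_le μ hαd hS
    (Real.rpow_pos_of_pos m_pos (finrank ℝ E : ℝ)⁻¹)).trans_eq ?_
  rw [R_rpow, R_rpow, sub_div, div_self hd.ne', ENNReal.rpow_sub _ _ hS0 hStop, ENNReal.rpow_one,
    ENNReal.div_mul_cancel hS0 hStop]
  ring

end RieszKernel

section DyadicLevels

theorem tsum_rpow_le_rpow_tsum {ι : Type*} (a : ι → ℝ≥0∞) {r : ℝ} (hr : 1 ≤ r) :
    ∑' i, a i ^ r ≤ (∑' i, a i) ^ r := by
  have rpow_eq_mul (x : ℝ≥0∞) : x ^ r = x * x ^ (r - 1) := by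
    rw [← add_sub_cancel 1 r, ENNReal.rpow_add_of_nonneg _ _ zero_le_one (by linarith),
      ENNReal.rpow_one, add_sub_cancel]
  calc ∑' i, a i ^ r ≤ ∑' i, a i * (∑' i, a i) ^ (r - 1) := by
        refine ENNReal.tsum_le_tsum fun i => ?_
        rw [rpow_eq_mul]
        gcongr
        exact ENNReal.le_tsum i
    _ = (∑' i, a i) ^ r := by rw [ENNReal.tsum_mul_right, ← rpow_eq_mul]

theorem mul_rpow_one_div_rpow (x y : ℝ≥0∞) {p q : ℝ} (hq : 0 ≤ q) :
    (x * y ^ (1 / p)) ^ q = x ^ q * y ^ (q / p) := by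
  rw [ENNReal.mul_rpow_of_nonneg _ _ hq, ← ENNReal.rpow_mul, one_div_mul_eq_div]

variable {α : Type*} [MeasurableSpace α] {μ : Measure α} {G : α → ℝ≥0∞}

theorem tsum_setLIntegral_preimage_Ioc_two_zpow_le (hG : Measurable G)
    (f : α → ℝ≥0∞) :
    ∑' j : ℤ, ∫⁻ x in G ⁻¹' Ioc (2 ^ j) (2 ^ (j + 1)), f x ∂μ ≤ ∫⁻ x, f x ∂μ := by
  have disjoint_levels : Pairwise (Function.onFun Disjoint
      fun j : ℤ => G ⁻¹' Ioc (2 ^ j) (2 ^ (j + 1))) :=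
    fun i j hij => ((ENNReal.monotone_zpow one_le_two).pairwise_disjoint_on_Ioc_succ hij).preimage G
  rw [← lintegral_iUnion (fun j => hG measurableSet_Ioc) disjoint_levels]
  exact setLIntegral_le_lintegral _ _

theorem lintegral_rpow_le_tsum_setLIntegral_preimage_Ioc_two_zpow {q : ℝ} (hq : 0 < q)
    (hG : Measurable G) (htop : μ {x | G x = ∞} = 0) :
    ∫⁻ x, G x ^ q ∂μ ≤ ∑' j : ℤ, ∫⁻ x in G ⁻¹' Ioc (2 ^ j) (2 ^ (j + 1)), G x ^ q ∂μ := by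
  set levels : Set α := ⋃ j : ℤ, G ⁻¹' Ioc (2 ^ j) (2 ^ (j + 1))
  have measurable_levels : MeasurableSet levels := .iUnion fun j => hG measurableSet_Ioc
  have off_levels : ∫⁻ x in levelsᶜ, G x ^ q ∂μ = 0 := by
    refine (lintegral_congr_ae ?_).trans lintegral_zero
    filter_upwards [ae_restrict_mem measurable_levels.compl,
      ae_restrict_of_ae (measure_eq_zero_iff_ae_notMem.1 htop)] with x hx G_ne_top
    by_cases G_zero : G x = 0
    · rw [G_zero, ENNReal.zero_rpow_of_pos hq]
    · obtain ⟨j, hj⟩ := ENNReal.exists_mem_Ioc_zpow G_zero G_ne_top one_lt_two ENNReal.ofNat_ne_top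
      exact absurd (mem_iUnion.2 ⟨j, hj⟩) hx
  rw [← lintegral_add_compl _ measurable_levels, off_levels, add_zero]
  exact lintegral_iUnion_le _ _

theorem lintegral_rpow_le_of_setLIntegral_level_le {ν : Measure α} {f : α → ℝ≥0∞} {q r : ℝ}
    {K : ℝ≥0∞} (hq : 0 < q) (hr : 1 ≤ r) (hG : Measurable G) (htop : ν {x | G x = ∞} = 0)
    (level_le : ∀ m, ∫⁻ x in G ⁻¹' Ioc (2 * m) (4 * m), G x ^ q ∂ν ≤
      K * (∫⁻ x in G ⁻¹' Ioc m (4 * m), f x ∂μ) ^ r) :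
    ∫⁻ x, G x ^ q ∂ν ≤ K * (2 * ∫⁻ x, f x ∂μ) ^ r := by
  set L : ℤ → ℝ≥0∞ := fun j => ∫⁻ x in G ⁻¹' Ioc (2 ^ j) (2 ^ (j + 1)), f x ∂μ
  have shift (a : ℤ → ℝ≥0∞) : ∑' j, a (j + 1) = ∑' j, a j := (Equiv.addRight 1).tsum_eq a
  have dyadic_level_le (j : ℤ) :
      ∫⁻ x in G ⁻¹' Ioc (2 ^ (j + 1)) (2 ^ (j + 1 + 1)), G x ^ q ∂ν ≤
        K * (L j + L (j + 1)) ^ r := by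
    have two_zpow_succ (i : ℤ) : (2 : ℝ≥0∞) ^ (i + 1) = 2 * 2 ^ i := by
      rw [ENNReal.zpow_add two_ne_zero ENNReal.ofNat_ne_top, zpow_one, mul_comm]
    have four_mul_two_zpow : (4 : ℝ≥0∞) * 2 ^ j = 2 ^ (j + 1 + 1) := by
      rw [two_zpow_succ, two_zpow_succ, ← mul_assoc]
      norm_num
    have level := level_le (2 ^ j)
    have two_zpow_le (i : ℤ) : (2 : ℝ≥0∞) ^ i ≤ 2 ^ (i + 1) :=
      ENNReal.zpow_le_of_le one_le_two (Int.le_add_one le_rfl)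
    rw [← two_zpow_succ, four_mul_two_zpow,
      ← Ioc_union_Ioc_eq_Ioc (two_zpow_le _) (two_zpow_le _)] at level
    refine level.trans ?_
    gcongr
    exact lintegral_union_le _ _ _
  calc ∫⁻ x, G x ^ q ∂ν
      ≤ ∑' j : ℤ, ∫⁻ x in G ⁻¹' Ioc (2 ^ (j + 1)) (2 ^ (j + 1 + 1)), G x ^ q ∂ν := by
        rw [shift fun j => ∫⁻ x in G ⁻¹' Ioc (2 ^ j) (2 ^ (j + 1)), G x ^ q ∂ν]
        exact lintegral_rpow_le_tsum_setLIntegral_preimage_Ioc_two_zpow hq hG htop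
    _ ≤ ∑' j, K * (L j + L (j + 1)) ^ r := ENNReal.tsum_le_tsum dyadic_level_le
    _ ≤ K * (∑' j, (L j + L (j + 1))) ^ r := by
        rw [ENNReal.tsum_mul_left]
        gcongr
        exact tsum_rpow_le_rpow_tsum _ hr
    _ ≤ K * (2 * ∫⁻ x, f x ∂μ) ^ r := by
        rw [ENNReal.tsum_add, shift L, ← two_mul]
        gcongr
        exact tsum_setLIntegral_preimage_Ioc_two_zpow_le hG f

end DyadicLevels

section Hardy

variable {α : Type*} [LinearOrder α] [MeasurableSpace α] {μ ν : Measure α} {U F : α → ℝ≥0∞}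
  {p p' q : ℝ} {A : ℝ≥0∞}

theorem monotone_setLIntegral_Iic (μ : Measure α) (H : α → ℝ≥0∞) :
    Monotone fun s => ∫⁻ x in Iic s, H x ∂μ :=
  fun _ _ hst => lintegral_mono_set (Iic_subset_Iic.2 hst)

theorem setLIntegral_inter_Iic_mul_rpow_measure_Ici_le (hpp' : p.HolderConjugate p')
    (hU : AEMeasurable U μ) (hF : AEMeasurable F μ) {t : α}
    (h : ν (Ici t) ^ (1 / q) * (∫⁻ x in Iic t, U x ^ p' ∂μ) ^ (1 / p') ≤ A) (D : Set α) :
    (∫⁻ x in D ∩ Iic t, U x * F x ∂μ) * ν (Ici t) ^ (1 / q) ≤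
      A * (∫⁻ x in D, F x ^ p ∂μ) ^ (1 / p) := by
  have p_pos := hpp'.pos
  have p'_pos := hpp'.symm.pos
  calc (∫⁻ x in D ∩ Iic t, U x * F x ∂μ) * ν (Ici t) ^ (1 / q)
      ≤ ((∫⁻ x in D ∩ Iic t, U x ^ p' ∂μ) ^ (1 / p') *
          (∫⁻ x in D ∩ Iic t, F x ^ p ∂μ) ^ (1 / p)) * ν (Ici t) ^ (1 / q) := by
        gcongr
        exact ENNReal.lintegral_mul_le_Lp_mul_Lq _ hpp'.symm hU.restrict hF.restrict
    _ ≤ ((∫⁻ x in Iic t, U x ^ p' ∂μ) ^ (1 / p') *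
          (∫⁻ x in D, F x ^ p ∂μ) ^ (1 / p)) * ν (Ici t) ^ (1 / q) := by
        gcongr
        exacts [inter_subset_right, inter_subset_left]
    _ = ν (Ici t) ^ (1 / q) * (∫⁻ x in Iic t, U x ^ p' ∂μ) ^ (1 / p') *
          (∫⁻ x in D, F x ^ p ∂μ) ^ (1 / p) := by ring
    _ ≤ _ := by gcongr

variable [TopologicalSpace α] [OrderTopology α] [SecondCountableTopology α]

theorem measure_le_of_forall_measure_Iic_le {E : Set α} {c : ℝ≥0∞}
    (h : ∀ s ∈ E, μ (Iic s) ≤ c) : μ E ≤ c := by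
  by_cases hmax : ∃ s ∈ E, E ⊆ Iic s
  · obtain ⟨s, hs, E_subset⟩ := hmax
    exact (measure_mono E_subset).trans (h s hs)
  · push Not at hmax
    obtain ⟨T, T_subset, T_countable, iUnion_T⟩ :=
      TopologicalSpace.isOpen_biUnion_countable E Iio fun _ _ => isOpen_Iio
    have cover : E ⊆ ⋃ s ∈ T, Iio s := fun x hx => by
      obtain ⟨y, hy, hxy⟩ := not_subset.1 (hmax x hx)
      rw [iUnion_T]
      exact mem_biUnion hy (not_le.1 hxy)
    have directed : DirectedOn (Function.onFun (· ⊆ ·) Iio) T := fun x hx y hy => by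
      obtain hxy | hyx := le_total x y
      exacts [⟨y, hy, Iio_subset_Iio hxy, subset_rfl⟩, ⟨x, hx, subset_rfl, Iio_subset_Iio hyx⟩]
    calc μ E ≤ μ (⋃ s ∈ T, Iio s) := measure_mono cover
      _ = ⨆ s ∈ T, μ (Iio s) := measure_biUnion_eq_iSup T_countable directed
      _ ≤ c := iSup₂_le fun s hs => (measure_mono Iio_subset_Iic_self).trans (h s (T_subset hs))

theorem measure_le_of_forall_measure_Ici_le {E : Set α} {c : ℝ≥0∞}
    (h : ∀ s ∈ E, μ (Ici s) ≤ c) : μ E ≤ c :=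
  measure_le_of_forall_measure_Iic_le (α := αᵒᵈ) h

theorem measure_setLIntegral_Iic_eq_top_eq_zero (hpp' : p.HolderConjugate p') (hq : 0 < q)
    (hU : AEMeasurable U μ) (hF : AEMeasurable F μ)
    (h : ∀ t, ν (Ici t) ^ (1 / q) * (∫⁻ x in Iic t, U x ^ p' ∂μ) ^ (1 / p') ≤ A)
    (hfin : A * (∫⁻ x, F x ^ p ∂μ) ^ (1 / p) ≠ ∞) :
    ν {s | ∫⁻ x in Iic s, U x * F x ∂μ = ∞} = 0 := by
  refine nonpos_iff_eq_zero.1 (measure_le_of_forall_measure_Ici_le fun s hs => ?_)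
  by_contra! tail_pos
  refine hfin (top_unique ?_)
  have hölder := setLIntegral_inter_Iic_mul_rpow_measure_Ici_le hpp' hU hF (h s) univ
  rwa [univ_inter, (hs : _ = ∞), Measure.restrict_univ,
    ENNReal.top_mul (ENNReal.rpow_pos_of_nonneg tail_pos (by positivity)).ne'] at hölder

variable [BorelSpace α]

theorem le_setLIntegral_superlevel_inter_Iic {H : α → ℝ≥0∞} {m : ℝ≥0∞} {s : α}
    (hs : 2 * m < ∫⁻ x in Iic s, H x ∂μ) :
    m ≤ ∫⁻ x in {x | m < ∫⁻ y in Iic x, H y ∂μ} ∩ Iic s, H x ∂μ := by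
  set S : Set α := {x | m < ∫⁻ y in Iic x, H y ∂μ}
  have hS : MeasurableSet S :=
    measurableSet_lt measurable_const (monotone_setLIntegral_Iic μ H).measurable
  have sublevel_le : ∫⁻ x in Iic s \ S, H x ∂μ ≤ m := by
    rw [← withDensity_apply _ (measurableSet_Iic.diff hS)]
    refine measure_le_of_forall_measure_Iic_le fun x hx => ?_
    rw [withDensity_apply _ measurableSet_Iic]
    exact not_lt.1 hx.2
  by_contra! hlt
  refine hs.not_ge ?_
  calc ∫⁻ x in Iic s, H x ∂μ = ∫⁻ x in Iic s ∩ S, H x ∂μ + ∫⁻ x in Iic s \ S, H x ∂μ :=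
        (lintegral_inter_add_sdiff H _ hS).symm
    _ ≤ m + m := by
        rw [inter_comm]
        exact add_le_add hlt.le sublevel_le
    _ = 2 * m := (two_mul m).symm

theorem setLIntegral_level_rpow_setLIntegral_Iic_le (hpp' : p.HolderConjugate p') (hq : 0 < q)
    (hU : AEMeasurable U μ) (hF : AEMeasurable F μ)
    (h : ∀ t, ν (Ici t) ^ (1 / q) * (∫⁻ x in Iic t, U x ^ p' ∂μ) ^ (1 / p') ≤ A) (m : ℝ≥0∞) :
    ∫⁻ s in (fun s => ∫⁻ x in Iic s, U x * F x ∂μ) ⁻¹' Ioc (2 * m) (4 * m),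
        (∫⁻ x in Iic s, U x * F x ∂μ) ^ q ∂ν ≤
      (4 * (A * (∫⁻ x in (fun s => ∫⁻ x in Iic s, U x * F x ∂μ) ⁻¹' Ioc m (4 * m),
        F x ^ p ∂μ) ^ (1 / p))) ^ q := by
  set G : α → ℝ≥0∞ := fun s => ∫⁻ x in Iic s, U x * F x ∂μ
  have G_mono : Monotone G := monotone_setLIntegral_Iic μ _
  set B : ℝ≥0∞ := A * (∫⁻ x in G ⁻¹' Ioc m (4 * m), F x ^ p ∂μ) ^ (1 / p)
  have mul_tail_le (s : α) (hs : s ∈ G ⁻¹' Ioc (2 * m) (4 * m)) : m ^ q * ν (Ici s) ≤ B ^ q := by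
    have superlevel_subset : {x | m < G x} ∩ Iic s ⊆ G ⁻¹' Ioc m (4 * m) ∩ Iic s :=
      fun x hx => ⟨⟨hx.1, (G_mono hx.2).trans hs.2⟩, hx.2⟩
    rw [← ENNReal.rpow_inv_rpow hq.ne' (ν (Ici s)), ← ENNReal.mul_rpow_of_nonneg _ _ hq.le,
      ← one_div]
    refine ENNReal.rpow_le_rpow ?_ hq.le
    calc m * ν (Ici s) ^ (1 / q)
        ≤ (∫⁻ x in G ⁻¹' Ioc m (4 * m) ∩ Iic s, U x * F x ∂μ) * ν (Ici s) ^ (1 / q) := by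
          gcongr
          exact (le_setLIntegral_superlevel_inter_Iic hs.1).trans
            (lintegral_mono_set superlevel_subset)
      _ ≤ B := setLIntegral_inter_Iic_mul_rpow_measure_Ici_le hpp' hU hF (h s) _
  -- Scaling `ν` avoids a division by `m ^ q`, which may be `0` or `∞`.
  have mul_measure_le : m ^ q * ν (G ⁻¹' Ioc (2 * m) (4 * m)) ≤ B ^ q :=
    measure_le_of_forall_measure_Ici_le (μ := m ^ q • ν) mul_tail_le
  calc ∫⁻ s in G ⁻¹' Ioc (2 * m) (4 * m), G s ^ q ∂ν
      ≤ ∫⁻ _ in G ⁻¹' Ioc (2 * m) (4 * m), (4 * m) ^ q ∂ν :=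
        setLIntegral_mono' (G_mono.measurable measurableSet_Ioc) fun s hs =>
          ENNReal.rpow_le_rpow hs.2 hq.le
    _ = 4 ^ q * (m ^ q * ν (G ⁻¹' Ioc (2 * m) (4 * m))) := by
        rw [setLIntegral_const, ENNReal.mul_rpow_of_nonneg _ _ hq.le, mul_assoc]
    _ ≤ 4 ^ q * B ^ q := by gcongr
    _ = (4 * B) ^ q := (ENNReal.mul_rpow_of_nonneg _ _ hq.le).symm

theorem lintegral_setLIntegral_Iic_rpow_le (hpp' : p.HolderConjugate p') (hpq : p ≤ q)
    (hU : AEMeasurable U μ) (hF : AEMeasurable F μ)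
    (h : ∀ t, ν (Ici t) ^ (1 / q) * (∫⁻ x in Iic t, U x ^ p' ∂μ) ^ (1 / p') ≤ A) :
    ∫⁻ s, (∫⁻ x in Iic s, U x * F x ∂μ) ^ q ∂ν ≤
      (8 * A * (∫⁻ x, F x ^ p ∂μ) ^ (1 / p)) ^ q := by
  have p_pos := hpp'.pos
  have hq : 0 < q := p_pos.trans_le hpq
  by_cases hfin : A * (∫⁻ x, F x ^ p ∂μ) ^ (1 / p) = ∞
  · rw [mul_assoc, hfin, ENNReal.mul_top (by norm_num), ENNReal.top_rpow_of_pos hq]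
    exact le_top
  calc ∫⁻ s, (∫⁻ x in Iic s, U x * F x ∂μ) ^ q ∂ν
      ≤ (4 * A) ^ q * (2 * ∫⁻ x, F x ^ p ∂μ) ^ (q / p) := by
        refine lintegral_rpow_le_of_setLIntegral_level_le hq ((one_le_div p_pos).2 hpq)
          (monotone_setLIntegral_Iic μ _).measurable
          (measure_setLIntegral_Iic_eq_top_eq_zero hpp' hq hU hF h hfin) fun m => ?_
        rw [← mul_rpow_one_div_rpow _ _ hq.le, mul_assoc]
        exact setLIntegral_level_rpow_setLIntegral_Iic_le hpp' hq hU hF h m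
    _ ≤ (8 * A * (∫⁻ x, F x ^ p ∂μ) ^ (1 / p)) ^ q := by
        rw [mul_rpow_one_div_rpow _ _ hq.le, ENNReal.mul_rpow_of_nonneg 2 _ (by positivity),
          ← mul_assoc]
        gcongr
        calc (4 * A) ^ q * 2 ^ (q / p) ≤ (4 * A) ^ q * 2 ^ q := by
              gcongr
              exacts [one_le_two, div_le_self hq.le hpp'.lt.le]
          _ = (8 * A) ^ q := by
              rw [← ENNReal.mul_rpow_of_nonneg _ _ hq.le]
              ring_nf

theorem lintegral_setLIntegral_Ici_rpow_le (hpp' : p.HolderConjugate p') (hpq : p ≤ q)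
    (hU : AEMeasurable U μ) (hF : AEMeasurable F μ)
    (h : ∀ t, ν (Iic t) ^ (1 / q) * (∫⁻ x in Ici t, U x ^ p' ∂μ) ^ (1 / p') ≤ A) :
    ∫⁻ s, (∫⁻ x in Ici s, U x * F x ∂μ) ^ q ∂ν ≤
      (8 * A * (∫⁻ x, F x ^ p ∂μ) ^ (1 / p)) ^ q :=
  lintegral_setLIntegral_Iic_rpow_le (α := αᵒᵈ) hpp' hpq hU hF h

end Hardy

section HalfLine

variable {w φ U F : ℝ → ℝ≥0∞} {p p' q : ℝ} {A : ℝ≥0∞}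

theorem measurable_setLIntegral_Ioc (h : ℝ → ℝ≥0∞) : Measurable fun t => ∫⁻ τ in Ioc 0 t, h τ :=
  Monotone.measurable fun _ _ hst => lintegral_mono_set (Ioc_subset_Ioc_right hst)

theorem restrict_Ioi_restrict_Iic (t : ℝ) :
    (volume.restrict (Ioi (0 : ℝ))).restrict (Iic t) = volume.restrict (Ioc 0 t) := by
  rw [Measure.restrict_restrict measurableSet_Iic, Iic_inter_Ioi]

theorem restrict_Ioi_restrict_Ici {t : ℝ} (ht : 0 < t) :
    (volume.restrict (Ioi (0 : ℝ))).restrict (Ici t) = volume.restrict (Ioi t) := by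
  rw [Measure.restrict_restrict measurableSet_Ici, inter_eq_left.2 (Ici_subset_Ioi.2 ht),
    Measure.restrict_congr_set Ioi_ae_eq_Ici]

theorem setLIntegral_Ioi_mul_setLIntegral_Ioc_rpow_le (hpp' : p.HolderConjugate p') (hpq : p ≤ q)
    (hw : Measurable w) (hU : Measurable U) (hF : Measurable F)
    (h : ∀ t, 0 < t →
      (∫⁻ τ in Ioi t, w τ) ^ (1 / q) * (∫⁻ τ in Ioc 0 t, U τ ^ p') ^ (1 / p') ≤ A) :
    ∫⁻ t in Ioi (0 : ℝ), w t * (∫⁻ τ in Ioc 0 t, U τ * F τ) ^ q ≤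
      (8 * A * (∫⁻ τ in Ioi (0 : ℝ), F τ ^ p) ^ (1 / p)) ^ q := by
  set ν : Measure ℝ := (volume.restrict (Ioi 0)).withDensity w
  have condition (t : ℝ) : ν (Ici t) ^ (1 / q) *
      (∫⁻ τ in Iic t, U τ ^ p' ∂volume.restrict (Ioi 0)) ^ (1 / p') ≤ A := by
    rw [restrict_Ioi_restrict_Iic, withDensity_apply _ measurableSet_Ici]
    obtain ht | ht := le_or_gt t 0
    · simp [Ioc_eq_empty ht.not_gt, hpp'.symm.pos]
    · rw [restrict_Ioi_restrict_Ici ht]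
      exact h t ht
  calc ∫⁻ t in Ioi (0 : ℝ), w t * (∫⁻ τ in Ioc 0 t, U τ * F τ) ^ q
      = ∫⁻ t, (∫⁻ τ in Iic t, U τ * F τ ∂volume.restrict (Ioi 0)) ^ q ∂ν := by
        simp only [restrict_Ioi_restrict_Iic]
        exact (lintegral_withDensity_eq_lintegral_mul _ hw
          ((measurable_setLIntegral_Ioc _).pow_const q)).symm
    _ ≤ _ := lintegral_setLIntegral_Iic_rpow_le hpp' hpq hU.aemeasurable hF.aemeasurable condition

theorem setLIntegral_Ioi_mul_setLIntegral_Ioi_rpow_le (hpp' : p.HolderConjugate p') (hpq : p ≤ q)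
    (hw : Measurable w) (hU : Measurable U) (hF : Measurable F)
    (h : ∀ t, 0 < t →
      (∫⁻ τ in Ioc 0 t, w τ) ^ (1 / q) * (∫⁻ τ in Ioi t, U τ ^ p') ^ (1 / p') ≤ A) :
    ∫⁻ t in Ioi (0 : ℝ), w t * (∫⁻ τ in Ioi t, U τ * F τ) ^ q ≤
      (8 * A * (∫⁻ τ in Ioi (0 : ℝ), F τ ^ p) ^ (1 / p)) ^ q := by
  set ν : Measure ℝ := (volume.restrict (Ioi 0)).withDensity w
  have condition (t : ℝ) : ν (Iic t) ^ (1 / q) *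
      (∫⁻ τ in Ici t, U τ ^ p' ∂volume.restrict (Ioi 0)) ^ (1 / p') ≤ A := by
    rw [withDensity_apply _ measurableSet_Iic, restrict_Ioi_restrict_Iic]
    obtain ht | ht := le_or_gt t 0
    · simp [Ioc_eq_empty ht.not_gt, hpp'.pos.trans_le hpq]
    · rw [restrict_Ioi_restrict_Ici ht]
      exact h t ht
  calc ∫⁻ t in Ioi (0 : ℝ), w t * (∫⁻ τ in Ioi t, U τ * F τ) ^ q
      = ∫⁻ t in Ioi 0, w t * (∫⁻ τ in Ici t, U τ * F τ ∂volume.restrict (Ioi 0)) ^ q :=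
        setLIntegral_congr_fun measurableSet_Ioi fun t ht => by
          simp only [restrict_Ioi_restrict_Ici ht]
    _ = ∫⁻ t, (∫⁻ τ in Ici t, U τ * F τ ∂volume.restrict (Ioi 0)) ^ q ∂ν := by
        have tail_antitone : Antitone fun t =>
            ∫⁻ τ in Ici t, U τ * F τ ∂volume.restrict (Ioi 0) :=
          fun _ _ hst => lintegral_mono_set (Ici_subset_Ici.2 hst)
        exact (lintegral_withDensity_eq_lintegral_mul _ hw
          (tail_antitone.measurable.pow_const q)).symm
    _ ≤ _ := lintegral_setLIntegral_Ici_rpow_le hpp' hpq hU.aemeasurable hF.aemeasurable condition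

theorem lintegral_mul_add_rpow_le {α : Type*} [MeasurableSpace α] {μ : Measure α}
    {w f g : α → ℝ≥0∞} {B : ℝ≥0∞} (hq : 1 ≤ q) (hw : Measurable w) (hf : Measurable f)
    (hfB : ∫⁻ x, w x * f x ^ q ∂μ ≤ B ^ q) (hgB : ∫⁻ x, w x * g x ^ q ∂μ ≤ B ^ q) :
    ∫⁻ x, w x * (f x + g x) ^ q ∂μ ≤ (2 * B) ^ q := by
  have two_rpow : (2 : ℝ≥0∞) ^ (q - 1) * 2 = 2 ^ q := by
    rw [ENNReal.rpow_sub _ _ two_ne_zero ENNReal.ofNat_ne_top, ENNReal.rpow_one,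
      ENNReal.div_mul_cancel two_ne_zero ENNReal.ofNat_ne_top]
  calc ∫⁻ x, w x * (f x + g x) ^ q ∂μ
      ≤ ∫⁻ x, 2 ^ (q - 1) * (w x * f x ^ q + w x * g x ^ q) ∂μ := by
        refine lintegral_mono fun x => ?_
        rw [← mul_add, mul_left_comm]
        gcongr
        exact ENNReal.rpow_add_le_mul_rpow_add_rpow _ _ hq
    _ = 2 ^ (q - 1) * ((∫⁻ x, w x * f x ^ q ∂μ) + ∫⁻ x, w x * g x ^ q ∂μ) := by
        rw [lintegral_const_mul' _ _ (by finiteness), lintegral_add_left (by fun_prop)]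
    _ ≤ 2 ^ (q - 1) * (B ^ q + B ^ q) := by gcongr
    _ = (2 * B) ^ q := by
        rw [ENNReal.mul_rpow_of_nonneg _ _ (zero_le_one.trans hq), ← two_mul, ← mul_assoc, two_rpow]

theorem setLIntegral_mul_calderon_rpow_le (hpp' : p.HolderConjugate p') (hpq : p ≤ q)
    (hw : Measurable w) (hφ : Measurable φ) (hU : Measurable U) (hF : Measurable F)
    (near : ∀ t, 0 < t →
      (∫⁻ τ in Ioi t, w τ * φ τ ^ q) ^ (1 / q) * (∫⁻ τ in Ioc 0 t, U τ ^ p') ^ (1 / p') ≤ A)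
    (far : ∀ t, 0 < t →
      (∫⁻ τ in Ioc 0 t, w τ) ^ (1 / q) * (∫⁻ τ in Ioi t, (U τ * φ τ) ^ p') ^ (1 / p') ≤ A) :
    ∫⁻ t in Ioi (0 : ℝ), w t * calderon φ (fun τ => U τ * F τ) t ^ q ≤
      (16 * A * (∫⁻ τ in Ioi (0 : ℝ), F τ ^ p) ^ (1 / p)) ^ q := by
  have hq : 1 ≤ q := hpp'.lt.le.trans hpq
  have hwφ : Measurable fun t => w t * φ t ^ q := by fun_prop
  have near_le : ∫⁻ t in Ioi (0 : ℝ), w t * (φ t * ∫⁻ τ in Ioc 0 t, U τ * F τ) ^ q ≤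
      (8 * A * (∫⁻ τ in Ioi (0 : ℝ), F τ ^ p) ^ (1 / p)) ^ q := by
    simp only [ENNReal.mul_rpow_of_nonneg _ _ (zero_le_one.trans hq), ← mul_assoc]
    simpa only [ENNReal.mul_rpow_of_nonneg _ _ (zero_le_one.trans hq), ← mul_assoc] using
      setLIntegral_Ioi_mul_setLIntegral_Ioc_rpow_le hpp' hpq hwφ hU hF near
  have far_le : ∫⁻ t in Ioi (0 : ℝ), w t * (∫⁻ τ in Ioi t, U τ * F τ * φ τ) ^ q ≤
      (8 * A * (∫⁻ τ in Ioi (0 : ℝ), F τ ^ p) ^ (1 / p)) ^ q := by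
    simpa only [Pi.mul_apply, mul_right_comm (U _)] using
      setLIntegral_Ioi_mul_setLIntegral_Ioi_rpow_le hpp' hpq hw (hU.mul hφ) hF far
  calc ∫⁻ t in Ioi (0 : ℝ), w t * calderon φ (fun τ => U τ * F τ) t ^ q
      ≤ (2 * (8 * A * (∫⁻ τ in Ioi (0 : ℝ), F τ ^ p) ^ (1 / p))) ^ q :=
        lintegral_mul_add_rpow_le hq hw (hφ.mul (measurable_setLIntegral_Ioc _)) near_le far_le
    _ = _ := by
        simp only [← mul_assoc]
        norm_num

end HalfLine

section Lorentz

variable {α : Type*} [MeasurableSpace α] {μ : Measure α} {f : α → ℝ} {q s : ℝ}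

theorem lorentz_ofReal_eq (hs : 0 < s) (hq : 0 < q) :
    lorentz μ (ENNReal.ofReal s) (ENNReal.ofReal q) f =
      (∫⁻ t in Ioi (0 : ℝ), ENNReal.ofReal t ^ (q / s - 1) * rearr μ f t ^ q) ^ (1 / q) := by
  rw [lorentz, if_neg ENNReal.ofReal_ne_top, ENNReal.toReal_ofReal hs.le,
    ENNReal.toReal_ofReal hq.le, one_div]
  congr 1
  refine setLIntegral_congr_fun measurableSet_Ioi fun t ht => ?_
  have ofReal_ne_zero : ENNReal.ofReal t ≠ 0 := (ENNReal.ofReal_pos.2 ht).ne'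
  simp only [ENNReal.mul_rpow_of_nonneg _ _ hq.le, ← ENNReal.rpow_mul, inv_mul_eq_div,
    ENNReal.rpow_sub _ _ ofReal_ne_zero ENNReal.ofReal_ne_top, ENNReal.rpow_one]
  rw [ENNReal.mul_div_right_comm]

theorem lorentz_le_of_rearr_mul_left_le {H : ℝ → ℝ≥0∞} {b : ℝ} (hs : 0 < s) (hq : 0 < q)
    (hb : 0 < b) (h : ∀ t, 0 < t → rearr μ f (b * t) ≤ H t) :
    lorentz μ (ENNReal.ofReal s) (ENNReal.ofReal q) f ≤ ENNReal.ofReal b ^ (1 / s) *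
      (∫⁻ t in Ioi (0 : ℝ), ENNReal.ofReal t ^ (q / s - 1) * H t ^ q) ^ (1 / q) := by
  have ofReal_ne_zero : ENNReal.ofReal b ≠ 0 := (ENNReal.ofReal_pos.2 hb).ne'
  have dilated_le : ∫⁻ t in Ioi (0 : ℝ), ENNReal.ofReal t ^ (q / s - 1) * rearr μ f t ^ q ≤
      ENNReal.ofReal b ^ (q / s) *
        ∫⁻ t in Ioi (0 : ℝ), ENNReal.ofReal t ^ (q / s - 1) * H t ^ q := by
    rw [setLIntegral_eq_ofReal_mul_setLIntegral_mul_left _ _ hb, preimage_const_mul_Ioi₀ _ hb,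
      zero_div]
    calc ENNReal.ofReal b * ∫⁻ t in Ioi (0 : ℝ),
          ENNReal.ofReal (b * t) ^ (q / s - 1) * rearr μ f (b * t) ^ q
        ≤ ENNReal.ofReal b * ∫⁻ t in Ioi (0 : ℝ),
          ENNReal.ofReal b ^ (q / s - 1) * (ENNReal.ofReal t ^ (q / s - 1) * H t ^ q) := by
          gcongr ENNReal.ofReal b * ?_
          refine setLIntegral_mono' measurableSet_Ioi fun t ht => ?_
          rw [ENNReal.ofReal_mul hb.le,
            ENNReal.mul_rpow_of_ne_top ENNReal.ofReal_ne_top ENNReal.ofReal_ne_top, mul_assoc]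
          gcongr
          exact h t ht
      _ = _ := by
          rw [lintegral_const_mul' _ _ (by finiteness), ← mul_assoc,
            ENNReal.rpow_sub _ _ ofReal_ne_zero ENNReal.ofReal_ne_top, ENNReal.rpow_one,
            ENNReal.mul_div_cancel ofReal_ne_zero ENNReal.ofReal_ne_top]
  rw [lorentz_ofReal_eq hs hq]
  refine (ENNReal.rpow_le_rpow dilated_le (by positivity)).trans_eq ?_
  rw [ENNReal.mul_rpow_of_nonneg _ _ (by positivity), ← ENNReal.rpow_mul]
  congr 2
  field_simp

end Lorentz

section WeightedHardy

variable {p q q' r s : ℝ} {A : ℝ≥0∞} {u v f φ : ℝ → ℝ≥0∞}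

theorem setLIntegral_rpow_mul_calderon_mul_rpow_le (hqq' : q.HolderConjugate q') (hqr : q ≤ r)
    (hu : Measurable u) (hv : Measurable v) (hf : Measurable f) (hφ : Measurable φ)
    (near : ∀ t, 0 < t →
      (∫⁻ τ in Ioi t, ENNReal.ofReal τ ^ (r / s - 1) * φ τ ^ r * v τ ^ r) ^ (1 / r) *
        (∫⁻ τ in Ioc 0 t, ENNReal.ofReal τ ^ (q' - q' / p - 1) * u τ ^ q') ^ (1 / q') ≤ A)
    (far : ∀ t, 0 < t →
      (∫⁻ τ in Ioc 0 t, ENNReal.ofReal τ ^ (r / s - 1) * v τ ^ r) ^ (1 / r) *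
        (∫⁻ τ in Ioi t, ENNReal.ofReal τ ^ (q' - q' / p - 1) * u τ ^ q' * φ τ ^ q') ^
          (1 / q') ≤ A) :
    ∫⁻ t in Ioi (0 : ℝ), ENNReal.ofReal t ^ (r / s - 1) *
        (v t * calderon φ (fun τ => u τ * f τ) t) ^ r ≤
      (16 * A * (∫⁻ τ in Ioi (0 : ℝ), ENNReal.ofReal τ ^ (q / p - 1) * f τ ^ q) ^ (1 / q)) ^ r := by
  have hq : 0 < q := hqq'.pos
  have hq' : 0 < q' := hqq'.symm.pos
  set U : ℝ → ℝ≥0∞ := fun τ => ENNReal.ofReal τ ^ (1 / q - 1 / p) * u τ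
  set F : ℝ → ℝ≥0∞ := fun τ => ENNReal.ofReal τ ^ (1 / p - 1 / q) * f τ
  have exponent_eq : (1 / q - 1 / p) * q' = q' - q' / p - 1 := by
    rw [sub_right_comm, ← hqq'.symm.div_conj_eq_sub_one]
    ring
  have U_rpow (τ : ℝ) : U τ ^ q' = ENNReal.ofReal τ ^ (q' - q' / p - 1) * u τ ^ q' := by
    rw [ENNReal.mul_rpow_of_nonneg _ _ hq'.le, ← ENNReal.rpow_mul, exponent_eq]
  have F_rpow (τ : ℝ) : F τ ^ q = ENNReal.ofReal τ ^ (q / p - 1) * f τ ^ q := by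
    rw [ENNReal.mul_rpow_of_nonneg _ _ hq.le, ← ENNReal.rpow_mul]
    congr 2
    field_simp
  have U_mul_F (τ : ℝ) (hτ : 0 < τ) : u τ * f τ = U τ * F τ := by
    simp only [U, F]
    rw [mul_mul_mul_comm, ← ENNReal.rpow_add _ _ (ENNReal.ofReal_pos.2 hτ).ne'
      ENNReal.ofReal_ne_top, sub_add_sub_cancel, sub_self, ENNReal.rpow_zero, one_mul]
  calc ∫⁻ t in Ioi (0 : ℝ), ENNReal.ofReal t ^ (r / s - 1) *
        (v t * calderon φ (fun τ => u τ * f τ) t) ^ r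
      = ∫⁻ t in Ioi (0 : ℝ), ENNReal.ofReal t ^ (r / s - 1) * v t ^ r *
          calderon φ (fun τ => U τ * F τ) t ^ r :=
        setLIntegral_congr_fun measurableSet_Ioi fun t ht => by
          simp only [calderon_congr ht U_mul_F, mul_assoc,
            ENNReal.mul_rpow_of_nonneg _ _ (hq.le.trans hqr)]
    _ ≤ (16 * A * (∫⁻ τ in Ioi (0 : ℝ), F τ ^ q) ^ (1 / q)) ^ r :=
        setLIntegral_mul_calderon_rpow_le hqq' hqr (by fun_prop) hφ (by fun_prop) (by fun_prop)
          (fun t ht => by simpa only [U_rpow, mul_right_comm _ (v _ ^ r)] using near t ht)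
          (fun t ht => by
            simpa only [ENNReal.mul_rpow_of_nonneg _ _ hq'.le, U_rpow] using far t ht)
    _ = _ := by simp only [F_rpow]

end WeightedHardy

section WeightedConvolution

variable {G : Type*} [AddCommGroup G] [MeasurableSpace G] [MeasurableAdd₂ G] [MeasurableNeg G]
  {μ : Measure G} [μ.IsAddLeftInvariant] [μ.IsNegInvariant]
  {k u f : G → ℝ} {a : ℝ} {c : ℝ≥0∞}

theorem enorm_integral_mul_sub_le_lconvolution {g : G → ℝ} {g' : G → ℝ≥0∞}
    (hg : ∀ᵐ x ∂μ, ‖g x‖ₑ = g' x) (x : G) :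
    ‖∫ y, k y * g (x - y) ∂μ‖ₑ ≤ ((‖k ·‖ₑ) ⋆ₗ[μ] g') x := by
  refine (enorm_integral_le_lintegral_enorm _).trans (lintegral_mono_ae ?_)
  filter_upwards [(Measure.measurePreserving_sub_left μ x).quasiMeasurePreserving.ae hg] with y hy
  rw [enorm_mul, hy, neg_add_eq_sub]

variable [SigmaFinite μ] {v : G → ℝ} {p q q' r s : ℝ} {A : ℝ≥0∞}

theorem decRearr_enorm_integral_mul_sub_le (h : SetIntegralBound μ (‖k ·‖ₑ) a c)
    (hk : Measurable k) (ha : 0 < a) (ha1 : a ≤ 1) (hu : AEMeasurable u μ)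
    (hf : AEMeasurable f μ) {t : ℝ} (ht : 0 < t) :
    decRearr μ (fun x => ‖∫ y, k y * (u (x - y) * f (x - y)) ∂μ‖ₑ) (2 * t) ≤
      4 * c * calderon (fun τ => ENNReal.ofReal (τ ^ (a - 1)))
        (fun τ => rearr μ u τ * rearr μ f τ) t := by
  set φ : ℝ → ℝ≥0∞ := fun τ => ENNReal.ofReal (τ ^ (a - 1))
  have huf : AEMeasurable (fun x => ‖u x * f x‖ₑ) μ := by fun_prop
  have rearr_le (τ : ℝ) (hτ : 0 < τ) :
      decRearr μ (huf.mk _) (2 * τ) ≤ rearr μ u τ * rearr μ f τ := by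
    rw [two_mul]
    refine (decRearr_mono_ae ?_ _).trans (decRearr_mul_le μ _ _ hτ.le hτ.le)
    filter_upwards [huf.ae_eq_mk] with x hx
    rw [← hx, enorm_mul, Real.enorm_eq_ofReal_abs, Real.enorm_eq_ofReal_abs]
  have φ_le (τ : ℝ) (hτ : 0 < τ) : φ (2 * τ) ≤ φ τ :=
    ENNReal.ofReal_le_ofReal
      (Real.rpow_le_rpow_of_nonpos hτ (by linarith) (sub_nonpos.2 ha1))
  calc decRearr μ (fun x => ‖∫ y, k y * (u (x - y) * f (x - y)) ∂μ‖ₑ) (2 * t)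
      ≤ decRearr μ ((‖k ·‖ₑ) ⋆ₗ[μ] huf.mk _) (2 * t) :=
        decRearr_mono_ae (.of_forall
          (enorm_integral_mul_sub_le_lconvolution (g := fun y => u y * f y) huf.ae_eq_mk)) _
    _ ≤ 2 * c * calderon φ (decRearr μ (huf.mk _)) (2 * t) :=
        decRearr_lconvolution_le h hk.enorm huf.measurable_mk ha ha1 (by positivity)
    _ ≤ 2 * c * (ENNReal.ofReal 2 * calderon φ (fun τ => rearr μ u τ * rearr μ f τ) t) := by
        gcongr
        exact calderon_mul_left_le two_pos ht φ_le rearr_le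
    _ = _ := by
        rw [ENNReal.ofReal_ofNat]
        ring

theorem rearr_mul_integral_mul_sub_le (v : G → ℝ) (h : SetIntegralBound μ (‖k ·‖ₑ) a c)
    (hk : Measurable k) (ha : 0 < a) (ha1 : a ≤ 1) (hu : AEMeasurable u μ)
    (hf : AEMeasurable f μ) {t : ℝ} (ht : 0 < t) :
    rearr μ (fun x => v x * ∫ y, k y * (u (x - y) * f (x - y)) ∂μ) (3 * t) ≤
      4 * c * (rearr μ v t * calderon (fun τ => ENNReal.ofReal (τ ^ (a - 1)))
        (fun τ => rearr μ u τ * rearr μ f τ) t) := by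
  calc rearr μ (fun x => v x * ∫ y, k y * (u (x - y) * f (x - y)) ∂μ) (3 * t)
      = decRearr μ (fun x => ENNReal.ofReal |v x| *
          ‖∫ y, k y * (u (x - y) * f (x - y)) ∂μ‖ₑ) (t + 2 * t) := by
        simp only [Real.enorm_eq_ofReal_abs, ← ENNReal.ofReal_mul (abs_nonneg _), ← abs_mul]
        ring_nf
        rfl
    _ ≤ rearr μ v t *
          decRearr μ (fun x => ‖∫ y, k y * (u (x - y) * f (x - y)) ∂μ‖ₑ) (2 * t) :=
        decRearr_mul_le μ _ _ ht.le (by positivity)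
    _ ≤ _ := by
        rw [mul_left_comm]
        gcongr
        exact decRearr_enorm_integral_mul_sub_le h hk ha ha1 hu hf ht

theorem lorentz_mul_integral_mul_sub_le (h : SetIntegralBound μ (‖k ·‖ₑ) a c) (hc : c ≠ ∞)
    (hk : Measurable k) (ha : 0 < a) (ha1 : a ≤ 1) (hp : 0 < p) (hs : 0 < s)
    (hqq' : q.HolderConjugate q') (hqr : q ≤ r) (hu : AEMeasurable u μ) (hf : AEMeasurable f μ)
    (near : ∀ t, 0 < t →
      (∫⁻ τ in Ioi t, ENNReal.ofReal τ ^ (r / s - 1) * ENNReal.ofReal (τ ^ (a - 1)) ^ r *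
        rearr μ v τ ^ r) ^ (1 / r) *
        (∫⁻ τ in Ioc 0 t, ENNReal.ofReal τ ^ (q' - q' / p - 1) * rearr μ u τ ^ q') ^
          (1 / q') ≤ A)
    (far : ∀ t, 0 < t →
      (∫⁻ τ in Ioc 0 t, ENNReal.ofReal τ ^ (r / s - 1) * rearr μ v τ ^ r) ^ (1 / r) *
        (∫⁻ τ in Ioi t, ENNReal.ofReal τ ^ (q' - q' / p - 1) * rearr μ u τ ^ q' *
          ENNReal.ofReal (τ ^ (a - 1)) ^ q') ^ (1 / q') ≤ A) :
    lorentz μ (ENNReal.ofReal s) (ENNReal.ofReal r)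
        (fun x => v x * ∫ y, k y * (u (x - y) * f (x - y)) ∂μ) ≤
      64 * 3 ^ (1 / s) * c * A * lorentz μ (ENNReal.ofReal p) (ENNReal.ofReal q) f := by
  set φ : ℝ → ℝ≥0∞ := fun τ => ENNReal.ofReal (τ ^ (a - 1))
  have hr : 0 < r := hqq'.pos.trans_le hqr
  have measurable_rearr (g : G → ℝ) : Measurable (rearr μ g) := measurable_decRearr μ _
  set J := ∫⁻ t in Ioi (0 : ℝ), ENNReal.ofReal t ^ (r / s - 1) *
    (rearr μ v t * calderon φ (fun τ => rearr μ u τ * rearr μ f τ) t) ^ r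
  have hardy : J ≤ (16 * A * lorentz μ (ENNReal.ofReal p) (ENNReal.ofReal q) f) ^ r := by
    rw [lorentz_ofReal_eq hp hqq'.pos]
    exact setLIntegral_rpow_mul_calderon_mul_rpow_le hqq' hqr (measurable_rearr u)
      (measurable_rearr v) (measurable_rearr f) (by fun_prop) near far
  calc _ ≤ ENNReal.ofReal 3 ^ (1 / s) * (∫⁻ t in Ioi (0 : ℝ), ENNReal.ofReal t ^ (r / s - 1) *
          (4 * c * (rearr μ v t * calderon φ (fun τ => rearr μ u τ * rearr μ f τ) t)) ^ r) ^
            (1 / r) :=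
        lorentz_le_of_rearr_mul_left_le hs hr three_pos fun t ht =>
          rearr_mul_integral_mul_sub_le v h hk ha ha1 hu hf ht
    _ = 3 ^ (1 / s) * (4 * c * J ^ (1 / r)) := by
        simp only [ENNReal.mul_rpow_of_nonneg (4 * c) _ hr.le, mul_left_comm _ ((4 * c) ^ r)]
        rw [lintegral_const_mul' _ _ (by finiteness),
          ENNReal.mul_rpow_of_nonneg _ _ (by positivity), one_div r,
          ENNReal.rpow_rpow_inv hr.ne', ENNReal.ofReal_ofNat]
    _ ≤ 3 ^ (1 / s) * (4 * c * (16 * A * lorentz μ (ENNReal.ofReal p) (ENNReal.ofReal q) f)) := by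
        gcongr
        rw [one_div, ENNReal.rpow_inv_le_iff hr]
        exact hardy
    _ = _ := by ring

end WeightedConvolution

theorem stmt_15_general {G : Type*} [AddCommGroup G] [MeasurableSpace G] [MeasurableAdd₂ G]
    [MeasurableNeg G] {μ : Measure G} [SigmaFinite μ] [μ.IsAddLeftInvariant] [μ.IsNegInvariant]
    {k : G → ℝ} {a : ℝ} {c : ℝ≥0∞} (h : SetIntegralBound μ (‖k ·‖ₑ) a c) (hc : c ≠ ∞)
    (hk : Measurable k) (ha : 0 < a) (ha1 : a ≤ 1) {p s q q' r : ℝ} (hp : 0 < p) (hs : 0 < s)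
    (hqq' : q.HolderConjugate q') (hqr : q ≤ r) {u v : G → ℝ} (hu : AEMeasurable u μ)
    (near : (⨆ t ∈ Ioi (0 : ℝ),
      (∫⁻ τ in Ioi t, ENNReal.ofReal τ ^ (r / s - 1) * ENNReal.ofReal (τ ^ (a - 1)) ^ r *
        rearr μ v τ ^ r) ^ (1 / r) *
        (∫⁻ τ in Ioc 0 t, ENNReal.ofReal τ ^ (q' - q' / p - 1) * rearr μ u τ ^ q') ^
          (1 / q')) < ∞)
    (far : (⨆ t ∈ Ioi (0 : ℝ),
      (∫⁻ τ in Ioc 0 t, ENNReal.ofReal τ ^ (r / s - 1) * rearr μ v τ ^ r) ^ (1 / r) *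
        (∫⁻ τ in Ioi t, ENNReal.ofReal τ ^ (q' - q' / p - 1) * rearr μ u τ ^ q' *
          ENNReal.ofReal (τ ^ (a - 1)) ^ q') ^ (1 / q')) < ∞) :
    ∃ C : ℝ, 0 < C ∧ ∀ f : G → ℝ, AEMeasurable f μ →
      lorentz μ (ENNReal.ofReal s) (ENNReal.ofReal r)
          (fun x => v x * ∫ y, k y * (u (x - y) * f (x - y)) ∂μ) ≤
        ENNReal.ofReal C * lorentz μ (ENNReal.ofReal p) (ENNReal.ofReal q) f := by
  obtain ⟨A, hA, near_lt, far_lt⟩ : ∃ A < ∞, _ < A ∧ _ < A :=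
    let ⟨A, hA, hA_top⟩ := exists_between (max_lt near far)
    ⟨A, hA_top, (le_max_left _ _).trans_lt hA, (le_max_right _ _).trans_lt hA⟩
  have K_ne_top : 64 * 3 ^ (1 / s) * c * A ≠ ∞ := by finiteness
  refine ⟨(64 * 3 ^ (1 / s) * c * A).toReal + 1, by positivity, fun f hf => ?_⟩
  refine (lorentz_mul_integral_mul_sub_le h hc hk ha ha1 hp hs hqq' hqr hu hf
    (fun t ht => (le_iSup₂ t ht).trans near_lt.le)
    (fun t ht => (le_iSup₂ t ht).trans far_lt.le)).trans (mul_le_mul_left ?_ _)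
  rw [ENNReal.ofReal_add ENNReal.toReal_nonneg zero_le_one, ENNReal.ofReal_toReal K_ne_top]
  exact le_self_add

/-- Proposition 5.1 of the paper in the Euclidean case: sufficient conditions on the
weights `u, v` for the weighted Lorentz boundedness `‖v T(u f)‖_{s,q₃} ≲ ‖f‖_{p,q₂}`,
where `φ(t) = t^{1/n - 1}`. -/
theorem stmt_15 (n : ℕ) (hn : 2 ≤ n) (p s q₂ q₃ : ℝ)
    (hp : 1 ≤ p) (hs : 1 ≤ s) (hq₂ : 1 < q₂) (hq₂₃ : q₂ ≤ q₃)
    (u v : EuclideanSpace ℝ (Fin n) → ℝ)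
    (hu0 : ∀ x, 0 ≤ u x) (hv0 : ∀ x, 0 ≤ v x)
    (hu : LocallyIntegrable u volume) (hv : LocallyIntegrable v volume)
    (hcond1 : (⨆ t ∈ Ioi (0 : ℝ),
      (∫⁻ τ in Ioi t, ENNReal.ofReal τ ^ (q₃ / s - 1) *
          ENNReal.ofReal (τ ^ ((1 : ℝ) / n - 1)) ^ q₃ * rearr volume v τ ^ q₃) ^ (1 / q₃) *
        (∫⁻ τ in Ioc (0 : ℝ) t, ENNReal.ofReal τ ^
            (q₂ / (q₂ - 1) - (q₂ / (q₂ - 1)) / p - 1) *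
          rearr volume u τ ^ (q₂ / (q₂ - 1))) ^ ((q₂ - 1) / q₂)) < ∞)
    (hcond2 : (⨆ t ∈ Ioi (0 : ℝ),
      (∫⁻ τ in Ioc (0 : ℝ) t, ENNReal.ofReal τ ^ (q₃ / s - 1) *
          rearr volume v τ ^ q₃) ^ (1 / q₃) *
        (∫⁻ τ in Ioi t, ENNReal.ofReal τ ^
            (q₂ / (q₂ - 1) - (q₂ / (q₂ - 1)) / p - 1) *
          rearr volume u τ ^ (q₂ / (q₂ - 1)) *
          ENNReal.ofReal (τ ^ ((1 : ℝ) / n - 1)) ^ (q₂ / (q₂ - 1))) ^ ((q₂ - 1) / q₂)) < ∞) :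
    ∃ C : ℝ, 0 < C ∧ ∀ f : EuclideanSpace ℝ (Fin n) → ℝ, Measurable f →
      lorentz volume (ENNReal.ofReal s) (ENNReal.ofReal q₃)
          (fun x => v x * potl n (fun y => u y * f y) x) ≤
        ENNReal.ofReal C * lorentz volume (ENNReal.ofReal p) (ENNReal.ofReal q₂) f := by
  have hd : (n : ℝ) = Module.finrank ℝ (EuclideanSpace ℝ (Fin n)) := by simp
  have one_le_n : (1 : ℝ) ≤ n := by exact_mod_cast one_le_two.trans hn
  have hqq' := Real.HolderConjugate.conjExponent hq₂
  obtain ⟨c, hc, kernel_bound⟩ :=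
    exists_setIntegralBound_enorm_rpow (E := EuclideanSpace ℝ (Fin n)) volume one_pos
      (hd ▸ one_le_n)
  rw [← hd] at kernel_bound
  rw [← one_div_div q₂ (q₂ - 1)] at hcond1 hcond2
  obtain ⟨C, hC, bound⟩ := stmt_15_general kernel_bound hc (by fun_prop) (by positivity)
    ((div_le_one (by positivity)).2 one_le_n) (by positivity) (by positivity) hqq' hq₂₃
    hu.aestronglyMeasurable.aemeasurable hcond1 hcond2
  exact ⟨C, hC, fun f hf => bound f hf.aemeasurable⟩
end
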